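/- Assume the cocycle f is convolution invertible. (a) If A is separable over k (A is projective as an A⊗A^{op}-module), then H_n(E,M) ≅ H_n(H, M/[A,M]) for all n ≥ 0, where M/[A,M] is the left H-module with action h·m̄ = class of (1#h^{(2)}) m (1#h^{(1)})^{-1}. (b) If H is flat as a k-module and A is quasi-free in the sense that H_n(A,N) = 0 for every n ≥ 2 and every A-bimodule N, then there is a long exact sequence ⋯ → H_{n+1}(H,H_0(A,M)) → H_{n−1}(H,H_1(A,M)) → H_n(E,M) → H_n(H,H_0(A,M)) → H_{n−2}(H,H_1(A,M)) → H_{n−1}(E,M) → ⋯, where H_r(A,M) carries the left H-module structure of Proposition 3.1.2. -/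

import Mathlib

open TensorProduct

noncomputable section

namespace HopfCrossed

variable (k : Type) [CommRing k]

def TpowCat (V : ModuleCat k) : ℕ → ModuleCat k
  | 0 => ModuleCat.of k k
  | n + 1 => ModuleCat.of k (V ⊗[k] (TpowCat V n))

abbrev Tpow (V : Type) [AddCommGroup V] [Module k V] (n : ℕ) : Type :=
  TpowCat k (ModuleCat.of k V) n

def tp {V : Type} [AddCommGroup V] [Module k V] : ∀ {n : ℕ}, (Fin n → V) → Tpow k V n
  | 0, _ => (1 : k)
  | _ + 1, v => (v 0) ⊗ₜ[k] (tp fun i => v i.succ)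

section Coalg
variable {H : Type} [AddCommGroup H] [Module k H]

def itComul [Coalgebra k H] : ∀ n : ℕ, H →ₗ[k] Tpow k H (n + 1)
  | 0 => (TensorProduct.rid k H).symm.toLinearMap
  | n + 1 =>
      (TensorProduct.map LinearMap.id (itComul n)) ∘ₗ (Coalgebra.comul (R := k))

def SRep [Coalgebra k H] (n : ℕ) (h : H) (N : ℕ) (u : Fin N → Fin (n + 1) → H) : Prop :=
  itComul k n h = ∑ i, tp k (u i)

def iterAct {A : Type} [AddCommGroup A] [Module k A]
    (act : H →ₗ[k] A →ₗ[k] A) : ∀ {s : ℕ}, (Fin s → H) → A → A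
  | 0, _, a => a
  | _ + 1, h, a => act (h 0) (iterAct act (fun i => h i.succ) a)

end Coalg

/-- A weak action of a Hopf algebra `H` on a `k`-algebra `A` (Blattner–Cohen–Montgomery,
Doi–Takeuchi), written `act h a = a^h`. -/
structure WeakAction (k A H : Type) [CommRing k] [Ring A] [Algebra k A] [Ring H] [HopfAlgebra k H] : Type where
  act : H →ₗ[k] A →ₗ[k] A
  act_mul : ∀ (h : H) (a b : A) (N : ℕ) (u : Fin N → Fin 2 → H), SRep k 1 h N u →
    act h (a * b) = ∑ i, act (u i 0) a * act (u i 1) b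
  act_one : ∀ h : H, act h 1 = Coalgebra.counit (R := k) h • (1 : A)
  one_act : ∀ a : A, act 1 a = a

variable {A H : Type} [Ring A] [Algebra k A] [Ring H] [HopfAlgebra k H]
variable {k}

/-- Normality of the cocycle `f`. -/
def IsNormal (f : H →ₗ[k] H →ₗ[k] A) : Prop :=
  ∀ h : H, f h 1 = Coalgebra.counit (R := k) h • (1 : A) ∧
    f 1 h = Coalgebra.counit (R := k) h • (1 : A)

/-- The cocycle condition
`f(l⁽¹⁾,m⁽¹⁾)^{h⁽¹⁾} f(h⁽²⁾, l⁽²⁾m⁽²⁾) = f(h⁽¹⁾,l⁽¹⁾) f(h⁽²⁾l⁽²⁾, m)`. -/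
def IsCocycle (W : WeakAction k A H) (f : H →ₗ[k] H →ₗ[k] A) : Prop :=
  ∀ (h l m : H) (N₁ N₂ N₃ : ℕ) (u : Fin N₁ → Fin 2 → H) (v : Fin N₂ → Fin 2 → H)
    (w : Fin N₃ → Fin 2 → H),
    SRep k 1 h N₁ u → SRep k 1 l N₂ v → SRep k 1 m N₃ w →
    (∑ i, ∑ j, ∑ p, W.act (u i 0) (f (v j 0) (w p 0)) * f (u i 1) (v j 1 * w p 1)) =
      ∑ i, ∑ j, f (u i 0) (v j 0) * f (u i 1 * v j 1) m

/-- The twisted module condition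
`(a^{l⁽¹⁾})^{h⁽¹⁾} f(h⁽²⁾,l⁽²⁾) = f(h⁽¹⁾,l⁽¹⁾) a^{h⁽²⁾l⁽²⁾}`. -/
def IsTwistedModule (W : WeakAction k A H) (f : H →ₗ[k] H →ₗ[k] A) : Prop :=
  ∀ (h l : H) (a : A) (N₁ N₂ : ℕ) (u : Fin N₁ → Fin 2 → H) (v : Fin N₂ → Fin 2 → H),
    SRep k 1 h N₁ u → SRep k 1 l N₂ v →
    (∑ i, ∑ j, W.act (u i 0) (W.act (v j 0) a) * f (u i 1) (v j 1)) =
      ∑ i, ∑ j, f (u i 0) (v j 0) * W.act (u i 1 * v j 1) a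

variable (k A H) in
/-- A crossed product `E = A #_f H` of `A` by `H`:  a ring `E` identified with `A ⊗ H`
as a `k`-module, whose multiplication is given by the crossed product formula
`(a # h)(b # l) = a b^{h⁽¹⁾} f(h⁽²⁾,l⁽¹⁾) # h⁽³⁾ l⁽²⁾`. -/
structure CrossedProduct (E : Type) [Ring E] [Algebra k E] extends WeakAction k A H where
  f : H →ₗ[k] H →ₗ[k] A
  ι : (A ⊗[k] H) ≃ₗ[k] E
  ι_one : ι (1 ⊗ₜ[k] 1) = 1
  ι_mul : ∀ (a b : A) (h l : H) (N M : ℕ) (u : Fin N → Fin 3 → H) (v : Fin M → Fin 2 → H),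
    SRep k 2 h N u → SRep k 1 l M v →
    ι (a ⊗ₜ[k] h) * ι (b ⊗ₜ[k] l) =
      ∑ i, ∑ j, ι ((a * act (u i 0) b * f (u i 1) (v j 0)) ⊗ₜ[k] (u i 2 * v j 1))
  f_normal : IsNormal f
  f_cocycle : IsCocycle toWeakAction f
  f_twisted : IsTwistedModule toWeakAction f

namespace CrossedProduct

variable {E : Type} [Ring E] [Algebra k E] (S : CrossedProduct k A H E)

/-- The canonical map `A → E`, `a ↦ a # 1`. -/
def aE : A →ₗ[k] E := S.ι.toLinearMap ∘ₗ (TensorProduct.mk k A H).flip 1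

/-- The canonical map `H → E`, `h ↦ 1 # h`. -/
def hE : H →ₗ[k] E := S.ι.toLinearMap ∘ₗ (TensorProduct.mk k A H) 1

end CrossedProduct


section Hochschild

variable (k) in
/-- For a `k`-algebra `B`, the submodule `k·1 ⊆ B`. -/
abbrev unitSub (B : Type) [Ring B] [Algebra k B] : Submodule k B :=
  LinearMap.range (Algebra.linearMap k B)

variable (k) in
/-- `B̄ = B/k`. -/
abbrev Qbar (B : Type) [Ring B] [Algebra k B] : Type := B ⧸ unitSub k B

variable (k) in
/-- The canonical projection `B → B̄`. -/
abbrev qbar (B : Type) [Ring B] [Algebra k B] : B →ₗ[k] Qbar k B :=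
  (unitSub k B).mkQ

/-- A `B`-bimodule structure (with commuting `k`-linear left and right actions)
on a `k`-module `M`. -/
structure Bimod (k B M : Type) [CommRing k] [Ring B] [Algebra k B]
    [AddCommGroup M] [Module k M] : Type where
  l : B →ₗ[k] M →ₗ[k] M
  r : B →ₗ[k] M →ₗ[k] M
  l_one : l 1 = LinearMap.id
  r_one : r 1 = LinearMap.id
  l_mul : ∀ x y : B, l (x * y) = l x ∘ₗ l y
  r_mul : ∀ x y : B, r (x * y) = r y ∘ₗ r x
  lr_comm : ∀ x y : B, l x ∘ₗ r y = r y ∘ₗ l x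

/-- Replace the `r`-tuple `a` by the `(r-1)`-tuple obtained by multiplying the
`i`-th and `(i+1)`-st entries. -/
def mulAt {A : Type} [Mul A] {r : ℕ} (a : Fin (r + 1) → A) (i : Fin r) (j : Fin r) : A :=
  if (j : ℕ) < (i : ℕ) then a j.castSucc
  else if (j : ℕ) = (i : ℕ) then a j.castSucc * a j.succ else a j.succ

variable (k) in
/-- The degree-`n` part `M ⊗ B̄^{⊗n}` of the normalized Hochschild chain complex. -/
abbrev HCh (B M : Type) [Ring B] [Algebra k B] [AddCommGroup M] [Module k M]
    (n : ℕ) : Type :=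
  M ⊗[k] Tpow k (Qbar k B) n

variable (k) in
/-- `IsHochschildD l r bd` says that `bd` is the differential of the normalized
Hochschild chain complex of `B` with coefficients in the bimodule `M` (with left
action `l` and right action `r`):
`b(m ⊗ x₁ ⊗ ⋯ ⊗ xₙ) = m x₁ ⊗ x₂ ⊗ ⋯ + ∑ (-1)^i m ⊗ ⋯ ⊗ xᵢxᵢ₊₁ ⊗ ⋯ + (-1)^n xₙ m ⊗ x₁ ⊗ ⋯ ⊗ xₙ₋₁`. -/
def IsHochschildD {B M : Type} [Ring B] [Algebra k B] [AddCommGroup M] [Module k M]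
    (l r : B →ₗ[k] M →ₗ[k] M)
    (bd : ∀ n : ℕ, HCh k B M (n + 1) →ₗ[k] HCh k B M n) : Prop :=
  ∀ (n : ℕ) (m : M) (x : Fin (n + 1) → B),
    bd n (m ⊗ₜ[k] tp k (fun i => qbar k B (x i))) =
      r (x 0) m ⊗ₜ[k] tp k (fun i : Fin n => qbar k B (x i.succ))
      + (∑ i : Fin n, ((-1 : ℤ) ^ ((i : ℕ) + 1)) •
          (m ⊗ₜ[k] tp k (fun j => qbar k B (mulAt x i j))))
      + ((-1 : ℤ) ^ (n + 1)) •
          (l (x (Fin.last n)) m ⊗ₜ[k] tp k (fun i : Fin n => qbar k B (x i.castSucc)))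

variable (k) in
/-- The homology of a (not necessarily everywhere-defined) chain complex
`⋯ → C (n+1) → C n → ⋯ → C 0`; in degree `n+1` it is `ker (d n) / im (d (n+1))`, and in
degree `0` it is `C 0 / im (d 0)`. -/
def Hml {C : ℕ → Type} [∀ n, AddCommGroup (C n)] [∀ n, Module k (C n)]
    (d : ∀ n : ℕ, C (n + 1) →ₗ[k] C n) : ℕ → Type
  | 0 => C 0 ⧸ LinearMap.range (d 0)
  | n + 1 => LinearMap.ker (d n) ⧸
      (LinearMap.range (d (n + 1))).comap (LinearMap.ker (d n)).subtype

instance {C : ℕ → Type} [∀ n, AddCommGroup (C n)] [∀ n, Module k (C n)]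
    (d : ∀ n : ℕ, C (n + 1) →ₗ[k] C n) : ∀ n, AddCommGroup (Hml k d n)
  | 0 => inferInstanceAs (AddCommGroup (C 0 ⧸ LinearMap.range (d 0)))
  | n + 1 => inferInstanceAs (AddCommGroup (LinearMap.ker (d n) ⧸
      (LinearMap.range (d (n + 1))).comap (LinearMap.ker (d n)).subtype))

instance {C : ℕ → Type} [∀ n, AddCommGroup (C n)] [∀ n, Module k (C n)]
    (d : ∀ n : ℕ, C (n + 1) →ₗ[k] C n) : ∀ n, Module k (Hml k d n)
  | 0 => inferInstanceAs (Module k (C 0 ⧸ LinearMap.range (d 0)))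
  | n + 1 => inferInstanceAs (Module k (LinearMap.ker (d n) ⧸
      (LinearMap.range (d (n + 1))).comap (LinearMap.ker (d n)).subtype))

end Hochschild

section Conv

variable {A H : Type} [Ring A] [Algebra k A] [Ring H] [HopfAlgebra k H]

/-- `IsConvInverse f g` : `g` is the convolution inverse of `f` in the convolution
algebra `Hom_k(H ⊗ H, A)`, i.e. `f * g = g * f = ε ⊗ ε · 1_A`. -/
def IsConvInverse (f g : H →ₗ[k] H →ₗ[k] A) : Prop :=
  ∀ (h l : H) (N M' : ℕ) (u : Fin N → Fin 2 → H) (v : Fin M' → Fin 2 → H),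
    SRep k 1 h N u → SRep k 1 l M' v →
    (∑ i, ∑ j, f (u i 0) (v j 0) * g (u i 1) (v j 1)) =
        (Coalgebra.counit (R := k) h * Coalgebra.counit (R := k) l) • (1 : A) ∧
    (∑ i, ∑ j, g (u i 0) (v j 0) * f (u i 1) (v j 1)) =
        (Coalgebra.counit (R := k) h * Coalgebra.counit (R := k) l) • (1 : A)

variable {E : Type} [Ring E] [Algebra k E]

/-- The elementary term `f⁻¹(S(y), z) # S(x)` appearing in the formula for the
convolution inverse `(1 # h)⁻¹ = f⁻¹(S(h⁽²⁾), h⁽³⁾) # S(h⁽¹⁾)`. -/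
def ginv (S : CrossedProduct k A H E) (finv : H →ₗ[k] H →ₗ[k] A) (x y z : H) : E :=
  S.ι ((finv (HopfAlgebra.antipode (R := k) y) z) ⊗ₜ[k] HopfAlgebra.antipode (R := k) x)

end Conv

section Bar

variable {H : Type} [Ring H] [HopfAlgebra k H]

variable (k) in
/-- The degree-`s` part `H̄^{⊗s} ⊗ N` of the normalized bar complex computing
`H_*(H, N) = Tor_*^H(k, N)`, i.e. `(H̄^* ⊗ H, d_*) ⊗_H N`. -/
abbrev BarCh (N : Type) [AddCommGroup N] [Module k N] (s : ℕ) : Type :=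
  Tpow k (Qbar k H) s ⊗[k] N

variable (k) in
/-- `IsBarD act d` : `d` is the differential of the normalized bar complex computing the
homology `H_*(H, N)` of `H` with coefficients in the left `H`-module `N` (action `act`). -/
def IsBarD {N : Type} [AddCommGroup N] [Module k N] (act : H →ₗ[k] N →ₗ[k] N)
    (d : ∀ s : ℕ, BarCh k (H := H) N (s + 1) →ₗ[k] BarCh k (H := H) N s) : Prop :=
  ∀ (s : ℕ) (h : Fin (s + 1) → H) (n : N),
    d s (tp k (fun i => qbar k H (h i)) ⊗ₜ[k] n) =
      Coalgebra.counit (R := k) (h 0) •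
          (tp k (fun i : Fin s => qbar k H (h i.succ)) ⊗ₜ[k] n)
      + (∑ i : Fin s, ((-1 : ℤ) ^ ((i : ℕ) + 1)) •
          (tp k (fun j => qbar k H (mulAt h i j)) ⊗ₜ[k] n))
      + ((-1 : ℤ) ^ (s + 1)) •
          (tp k (fun i : Fin s => qbar k H (h i.castSucc)) ⊗ₜ[k] act (h (Fin.last s)) n)

end Bar

section Sep

variable {A : Type} [Ring A] [Algebra k A]

variable (k A) in
/-- `A` is a separable `k`-algebra: the multiplication map `A ⊗ A → A` admits an
`A`-bimodule splitting (equivalently, `A` is projective as an `A ⊗ Aᵒᵖ`-module). -/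
def IsSeparableAlg : Prop :=
  ∃ s : A →ₗ[k] A ⊗[k] A,
    (LinearMap.mul' k A) ∘ₗ s = LinearMap.id ∧
    ∀ (a b x : A), s (a * x * b) =
      TensorProduct.map (LinearMap.mulLeft k a) (LinearMap.mulRight k b) (s x)

end Sep


section Statement11

variable {k A H E M : Type} [CommRing k] [Ring A] [Algebra k A] [Ring H] [HopfAlgebra k H]
  [Ring E] [Algebra k E] [AddCommGroup M] [Module k M]

/-- The commutator submodule `[A, M] ⊆ M` (for the `A`-bimodule structure on the
`E`-bimodule `M` obtained via `a ↦ a # 1`). -/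
def commSub (S : CrossedProduct k A H E) (Bi : Bimod k E M) : Submodule k M :=
  Submodule.span k {z : M | ∃ (a : A) (m : M), z = Bi.l (S.aE a) m - Bi.r (S.aE a) m}

/-- `IsTheta S Bi finv θ` : `θ^h_r(m ⊗ 𝐚) = (1 # h⁽³⁾) m (1 # h⁽¹⁾)⁻¹ ⊗ 𝐚^{h⁽²⁾}`. -/
def IsTheta (S : CrossedProduct k A H E) (Bi : Bimod k E M)
    (finv : H →ₗ[k] H →ₗ[k] A)
    (θ : H → ∀ r : ℕ, HCh k A M r →ₗ[k] HCh k A M r) : Prop :=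
  ∀ (h : H) (r : ℕ) (m : M) (a : Fin r → A) (N : ℕ) (u : Fin N → Fin (r + 4) → H),
    SRep k (r + 3) h N u →
    θ h r (m ⊗ₜ[k] tp k (fun j => qbar k A (a j))) =
      ∑ i, (Bi.l (S.hE (u i (Fin.last (r + 3))))
          (Bi.r (ginv S finv (u i 0) (u i 1) (u i 2)) m)) ⊗ₜ[k]
        tp k (fun j : Fin r => qbar k A (S.act (u i ⟨(j : ℕ) + 3, by omega⟩) (a j)))

end Statement11
end HopfCrossed

/-!
Coinvariants `N ↦ N_A = N / [A, N]` turn `0 → ΩM → E ⊗ M → M → 0`, where `ΩM = Ē ⊗ M`, into a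
sequence `(ΩM)_A → (E ⊗ M)_A → M_A → 0` of left `H`-modules. Here `(E ⊗ M)_A ≅ H ⊗ M` is acyclic,
`H_0(E, M) = H_0(H, M_A)`, and the kernel of the first map is `H_1(A, M)`.

If the first map is injective, and stays so after tensoring with the powers of `H̄`, then dimension
shifting gives `H_n(E, M) ≅ H_n(H, M_A)`. For separable `A` the separability idempotent provides a
retraction of that map. If `H` is flat and `A` is quasi-free, the first map is injective for `ΩM` in
place of `M`, because `H_1(A, ΩM) = H_2(A, M) = 0`, and the exact sequence
`0 → H_1(A, M) → (ΩM)_A → (E ⊗ M)_A → M_A → 0` is spliced into the long exact sequence.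
-/

namespace HopfCrossed

section Descend

variable {R X Y Z : Type*} [CommRing R] [AddCommGroup X] [Module R X] [AddCommGroup Y]
  [Module R Y] [AddCommGroup Z] [Module R Z]

/-- The linear map induced on the target of a surjection `q` by a map `g` that kills `ker q`. -/
def descend (q : X →ₗ[R] Y) (hq : Function.Surjective q) (g : X →ₗ[R] Z)
    (h : LinearMap.ker q ≤ LinearMap.ker g) : Y →ₗ[R] Z :=
  (LinearMap.ker q).liftQ g h ∘ₗ (q.quotKerEquivOfSurjective hq).symm.toLinearMap

@[simp]
lemma descend_apply (q : X →ₗ[R] Y) (hq : Function.Surjective q) (g : X →ₗ[R] Z)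
    (h : LinearMap.ker q ≤ LinearMap.ker g) (x : X) : descend q hq g h (q x) = g x := by
  have hx : (q.quotKerEquivOfSurjective hq).symm (q x) = Submodule.Quotient.mk x := by
    rw [LinearEquiv.symm_apply_eq]
    rfl
  rw [descend, LinearMap.comp_apply, LinearEquiv.coe_coe, hx]
  rfl

end Descend

/-! ### Homology of complexes -/

section Complexes

variable {k : Type} [CommRing k] {C C' C'' : ℕ → Type} [∀ n, AddCommGroup (C n)]
  [∀ n, Module k (C n)] [∀ n, AddCommGroup (C' n)] [∀ n, Module k (C' n)]
  [∀ n, AddCommGroup (C'' n)] [∀ n, Module k (C'' n)]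

namespace Hml

section Basic

variable (d : ∀ n, C (n + 1) →ₗ[k] C n)

/-- The cycles of a complex; every element of degree `0` is one. -/
def cycles : ∀ n, Submodule k (C n)
  | 0 => ⊤
  | n + 1 => LinearMap.ker (d n)

/-- The homology class of a cycle. -/
def ofCycle : ∀ n, cycles d n →ₗ[k] Hml k d n
  | 0 => (LinearMap.range (d 0)).mkQ ∘ₗ (cycles d 0).subtype
  | n + 1 => ((LinearMap.range (d (n + 1))).comap (LinearMap.ker (d n)).subtype).mkQ

lemma ofCycle_surjective : ∀ n, Function.Surjective (ofCycle d n)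
  | 0 => (Submodule.mkQ_surjective _).comp fun x ↦ ⟨⟨x, Submodule.mem_top⟩, rfl⟩
  | _ + 1 => Submodule.mkQ_surjective _

variable {d}

lemma ofCycle_eq_zero_iff : ∀ {n : ℕ} {x : cycles d n}, ofCycle d n x = 0 ↔ ∃ y, d n y = x
  | 0, _ => Submodule.Quotient.mk_eq_zero _
  | _ + 1, _ => Submodule.Quotient.mk_eq_zero _

lemma subsingleton_of_ker_le_range {n : ℕ}
    (h : LinearMap.ker (d n) ≤ LinearMap.range (d (n + 1))) : Subsingleton (Hml k d (n + 1)) :=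
  subsingleton_of_forall_eq 0 <| (ofCycle_surjective d (n + 1)).forall.mpr fun x ↦
    ofCycle_eq_zero_iff.mpr (h x.2)

lemma ofCycle_eq_iff {n : ℕ} {x y : cycles d n} :
    ofCycle d n x = ofCycle d n y ↔ ∃ z, d n z = x - y := by
  rw [← sub_eq_zero, ← map_sub, ofCycle_eq_zero_iff, Submodule.coe_sub]

end Basic

/-- A family of linear maps commuting with the differentials. -/
def IsChainMap (d : ∀ n, C (n + 1) →ₗ[k] C n) (d' : ∀ n, C' (n + 1) →ₗ[k] C' n)
    (φ : ∀ n, C n →ₗ[k] C' n) : Prop :=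
  ∀ n x, φ n (d n x) = d' n (φ (n + 1) x)

section Map

variable {d : ∀ n, C (n + 1) →ₗ[k] C n} {d' : ∀ n, C' (n + 1) →ₗ[k] C' n}
  {φ : ∀ n, C n →ₗ[k] C' n}

lemma IsChainMap.mem_cycles (hφ : IsChainMap d d' φ) :
    ∀ {n : ℕ} {x : C n}, x ∈ cycles d n → φ n x ∈ cycles d' n
  | 0, _, _ => Submodule.mem_top
  | n + 1, x, hx => by
    rw [cycles, LinearMap.mem_ker] at hx ⊢
    rw [← hφ, hx, map_zero]

/-- The map induced on homology by a chain map. -/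
def map (hφ : IsChainMap d d' φ) (n : ℕ) : Hml k d n →ₗ[k] Hml k d' n :=
  descend (ofCycle d n) (ofCycle_surjective d n)
    (ofCycle d' n ∘ₗ (φ n).restrict fun _ ↦ hφ.mem_cycles) <| by
    intro x hx
    obtain ⟨y, hy⟩ := ofCycle_eq_zero_iff.mp hx
    exact ofCycle_eq_zero_iff.mpr ⟨φ (n + 1) y, by rw [← hφ, hy]; rfl⟩

lemma map_ofCycle (hφ : IsChainMap d d' φ) {n : ℕ} (x : cycles d n) :
    map hφ n (ofCycle d n x) = ofCycle d' n ⟨φ n x, hφ.mem_cycles x.2⟩ :=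
  descend_apply ..

/-- The isomorphism on homology induced by an isomorphism of complexes. -/
def equiv (e : ∀ n, C n ≃ₗ[k] C' n) (he : IsChainMap d d' fun n ↦ (e n).toLinearMap) (n : ℕ) :
    Hml k d n ≃ₗ[k] Hml k d' n :=
  have he' : IsChainMap d' d fun n ↦ (e n).symm.toLinearMap := fun n x ↦ by
    simp only [LinearEquiv.coe_coe, LinearEquiv.symm_apply_eq]
    rw [← LinearEquiv.coe_coe, he n]
    simp only [LinearEquiv.coe_coe, LinearEquiv.apply_symm_apply]
  LinearEquiv.ofLinearMap (map he n) (map he' n)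
    (LinearMap.ext fun h ↦ by
      obtain ⟨x, rfl⟩ := ofCycle_surjective d' n h
      simp [map_ofCycle])
    (LinearMap.ext fun h ↦ by
      obtain ⟨x, rfl⟩ := ofCycle_surjective d n h
      simp [map_ofCycle])

end Map

/-- The pairs `(y, x)` with `d y = i x`; the connecting map sends the class of the image of `y`
to that of `x`. -/
def snake (d : ∀ n, C (n + 1) →ₗ[k] C n) (i : ∀ n, C' n →ₗ[k] C n) (n : ℕ) :
    Submodule k (C (n + 1) × C' n) :=
  LinearMap.eqLocus (d n ∘ₗ LinearMap.fst k _ _) (i n ∘ₗ LinearMap.snd k _ _)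

/-- A short exact sequence `0 → (C', d') → (C, d) → (C'', d'') → 0` of complexes. -/
structure IsShortExact (d' : ∀ n, C' (n + 1) →ₗ[k] C' n) (d : ∀ n, C (n + 1) →ₗ[k] C n)
    (d'' : ∀ n, C'' (n + 1) →ₗ[k] C'' n) (i : ∀ n, C' n →ₗ[k] C n)
    (p : ∀ n, C n →ₗ[k] C'' n) : Prop where
  d_comp_d : ∀ n x, d n (d (n + 1) x) = 0
  chain_i : IsChainMap d' d i
  chain_p : IsChainMap d d'' p
  injective : ∀ n, Function.Injective (i n)
  exact : ∀ n, Function.Exact (i n) (p n)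
  surjective : ∀ n, Function.Surjective (p n)

namespace IsShortExact

variable {d' : ∀ n, C' (n + 1) →ₗ[k] C' n} {d : ∀ n, C (n + 1) →ₗ[k] C n}
  {d'' : ∀ n, C'' (n + 1) →ₗ[k] C'' n} {i : ∀ n, C' n →ₗ[k] C n} {p : ∀ n, C n →ₗ[k] C'' n}
  (s : IsShortExact d' d d'' i p)
include s

lemma mem_cycles_left {n : ℕ} {x : C' n} {y : C (n + 1)} (h : i n x = d n y) :
    x ∈ cycles d' n := by
  cases n with
  | zero => exact Submodule.mem_top
  | succ n => exact s.injective n (by rw [s.chain_i, h, s.d_comp_d, map_zero])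

lemma mem_cycles_right {n : ℕ} {x : C' n} {y : C (n + 1)} (h : i n x = d n y) :
    p (n + 1) y ∈ cycles d'' (n + 1) := by
  rw [cycles, LinearMap.mem_ker, ← s.chain_p, ← h, (s.exact n).apply_apply_eq_zero]

lemma exists_eq_d {n : ℕ} {y : C (n + 1)} (hy : p (n + 1) y ∈ cycles d'' (n + 1)) :
    ∃ x, i n x = d n y :=
  (s.exact n _).mp ((s.chain_p n y).trans hy)

/-- The connecting map of the long exact homology sequence. -/
def connecting (n : ℕ) : Hml k d'' (n + 1) →ₗ[k] Hml k d' n :=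
  descend
    (ofCycle d'' (n + 1) ∘ₗ ((p (n + 1) ∘ₗ LinearMap.fst k _ _).restrict
      fun _ h ↦ s.mem_cycles_right h.symm : snake d i n →ₗ[k] cycles d'' (n + 1)))
    (by
      intro h
      obtain ⟨⟨z, hz⟩, rfl⟩ := ofCycle_surjective d'' _ h
      obtain ⟨y, rfl⟩ := s.surjective _ z
      obtain ⟨x, hx⟩ := s.exists_eq_d hz
      exact ⟨⟨(y, x), hx.symm⟩, rfl⟩)
    (ofCycle d' n ∘ₗ ((LinearMap.snd k _ _).restrict
      fun _ h ↦ s.mem_cycles_left h.symm : snake d i n →ₗ[k] cycles d' n))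
    (by
      rintro ⟨⟨y, x⟩, hyx : d n y = i n x⟩ h
      obtain ⟨z, hz : d'' (n + 1) z = p (n + 1) y⟩ :=
        ofCycle_eq_zero_iff.mp (LinearMap.mem_ker.mp h)
      obtain ⟨w, rfl⟩ := s.surjective _ z
      obtain ⟨x', hx'⟩ := (s.exact (n + 1) (y - d (n + 1) w)).mp
        (by rw [map_sub, s.chain_p, hz, sub_self])
      refine ofCycle_eq_zero_iff.mpr ⟨x', s.injective n ?_⟩
      rw [s.chain_i, hx', map_sub, s.d_comp_d, sub_zero, hyx]
      rfl)

lemma connecting_ofCycle {n : ℕ} {x : C' n} {y : C (n + 1)} (h : i n x = d n y) :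
    s.connecting n (ofCycle d'' (n + 1) ⟨p (n + 1) y, s.mem_cycles_right h⟩) =
      ofCycle d' n ⟨x, s.mem_cycles_left h⟩ :=
  descend_apply _ _ _ _ (⟨(y, x), h.symm⟩ : snake d i n)

lemma exact_connecting_map (n : ℕ) : Function.Exact (s.connecting n) (map s.chain_i n) := by
  intro h
  constructor
  · intro hh
    obtain ⟨x, rfl⟩ := ofCycle_surjective d' n h
    rw [map_ofCycle, ofCycle_eq_zero_iff] at hh
    obtain ⟨y, hy⟩ := hh
    exact ⟨_, s.connecting_ofCycle hy.symm⟩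
  · rintro ⟨h, rfl⟩
    obtain ⟨⟨z, hz⟩, rfl⟩ := ofCycle_surjective d'' _ h
    obtain ⟨y, rfl⟩ := s.surjective _ z
    obtain ⟨x, hx⟩ := s.exists_eq_d hz
    rw [s.connecting_ofCycle hx, map_ofCycle, ofCycle_eq_zero_iff]
    exact ⟨y, hx.symm⟩

lemma exact_map_connecting (n : ℕ) :
    Function.Exact (map s.chain_p (n + 1)) (s.connecting n) := by
  intro h
  constructor
  · intro hh
    obtain ⟨⟨z, hz⟩, rfl⟩ := ofCycle_surjective d'' _ h
    obtain ⟨y, rfl⟩ := s.surjective _ z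
    obtain ⟨x, hx⟩ := s.exists_eq_d hz
    rw [s.connecting_ofCycle hx, ofCycle_eq_zero_iff] at hh
    obtain ⟨x', hx'⟩ := hh
    refine ⟨ofCycle d (n + 1) ⟨y - i (n + 1) x', ?_⟩, ?_⟩
    · rw [cycles, LinearMap.mem_ker, map_sub, ← s.chain_i, hx', ← hx, sub_self]
    · rw [map_ofCycle]
      congr 2
      rw [map_sub, (s.exact _).apply_apply_eq_zero, sub_zero]
  · rintro ⟨h, rfl⟩
    obtain ⟨⟨y, hy⟩, rfl⟩ := ofCycle_surjective d _ h
    have h0 : i n 0 = d n y := by rw [map_zero]; exact hy.symm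
    rw [map_ofCycle, s.connecting_ofCycle h0, ofCycle_eq_zero_iff]
    exact ⟨0, map_zero _⟩

lemma exact_map_map (n : ℕ) : Function.Exact (map s.chain_i n) (map s.chain_p n) := by
  intro h
  constructor
  · intro hh
    obtain ⟨⟨y, hy⟩, rfl⟩ := ofCycle_surjective d _ h
    rw [map_ofCycle, ofCycle_eq_zero_iff] at hh
    obtain ⟨z, hz⟩ := hh
    obtain ⟨w, rfl⟩ := s.surjective _ z
    obtain ⟨x, hx⟩ := (s.exact n (y - d n w)).mp (by rw [map_sub, s.chain_p, hz, sub_self])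
    have hx' : x ∈ cycles d' n := by
      cases n with
      | zero => exact Submodule.mem_top
      | succ n =>
        rw [cycles, LinearMap.mem_ker] at hy ⊢
        exact s.injective n (by rw [s.chain_i, hx, map_sub, hy, s.d_comp_d, sub_zero, map_zero])
    refine ⟨ofCycle d' n ⟨x, hx'⟩, ?_⟩
    rw [map_ofCycle, ofCycle_eq_iff]
    exact ⟨-w, by simp only [map_neg, hx, sub_sub_cancel_left]⟩
  · rintro ⟨h, rfl⟩
    obtain ⟨x, rfl⟩ := ofCycle_surjective d' n h
    rw [map_ofCycle, map_ofCycle, ofCycle_eq_zero_iff]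
    exact ⟨0, (map_zero _).trans ((s.exact n).apply_apply_eq_zero _).symm⟩

lemma map_zero_surjective : Function.Surjective (map s.chain_p 0) := by
  intro h
  obtain ⟨z, rfl⟩ := ofCycle_surjective d'' 0 h
  obtain ⟨y, hy⟩ := s.surjective 0 z
  refine ⟨ofCycle d 0 ⟨y, Submodule.mem_top⟩, ?_⟩
  rw [map_ofCycle]
  exact congrArg _ (Subtype.ext hy)

end IsShortExact

end Hml

end Complexes

/-! ### The normalized Hochschild complex -/

section TensorPowers

variable {k : Type} [CommRing k] {V : Type} [AddCommGroup V] [Module k V]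

/-- The defining isomorphism of the tensor power of degree `n + 1`. -/
def Tpow.cons (n : ℕ) : V ⊗[k] Tpow k V n ≃ₗ[k] Tpow k V (n + 1) := LinearEquiv.refl k _

lemma tp_succ {n : ℕ} (v : Fin (n + 1) → V) :
    tp k v = Tpow.cons n (v 0 ⊗ₜ[k] tp k fun i ↦ v i.succ) := rfl

lemma Tpow.hom_ext {n : ℕ} {X : Type} [AddCommGroup X] [Module k X]
    {f g : Tpow k V n →ₗ[k] X} (h : ∀ v : Fin n → V, f (tp k v) = g (tp k v)) : f = g := by
  induction n generalizing X with
  | zero => exact LinearMap.ext_ring (h Fin.elim0)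
  | succ n ih =>
    have key : f ∘ₗ (cons n).toLinearMap = g ∘ₗ (cons n).toLinearMap :=
      TensorProduct.ext <| LinearMap.ext fun v ↦ ih fun w ↦ h (Fin.cons v w)
    exact LinearMap.ext fun x ↦ LinearMap.congr_fun key ((cons n).symm x)

/-- Tensor powers are also built by adding factors on the right. -/
def Tpow.snoc : ∀ n : ℕ, Tpow k V n ⊗[k] V ≃ₗ[k] Tpow k V (n + 1)
  | 0 => TensorProduct.comm k (Tpow k V 0) V ≪≫ₗ cons 0
  | n + 1 => TensorProduct.congr (cons n).symm (LinearEquiv.refl k V) ≪≫ₗ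
      TensorProduct.assoc k V (Tpow k V n) V ≪≫ₗ
        TensorProduct.congr (LinearEquiv.refl k V) (snoc n) ≪≫ₗ cons (n + 1)

lemma Tpow.snoc_tp {n : ℕ} (v : Fin (n + 1) → V) :
    snoc n ((tp k fun i ↦ v i.castSucc) ⊗ₜ[k] v (Fin.last n)) = tp k v := by
  induction n with
  | zero => rfl
  | succ n ih =>
    rw [tp_succ v, ← Fin.succ_last, ← ih fun i ↦ v i.succ,
      tp_succ fun i : Fin (n + 1) ↦ v i.castSucc]
    simp [snoc]

end TensorPowers

section NormalizedChains

variable {k : Type} [CommRing k] {B : Type} [Ring B] [Algebra k B]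
  {N : Type} [AddCommGroup N] [Module k N] {X : Type} [AddCommGroup X] [Module k X]

lemma qbar_one : qbar k B 1 = 0 :=
  (Submodule.Quotient.mk_eq_zero _).mpr ⟨1, map_one (algebraMap k B)⟩

/-- The map on `B̄` induced by a linear map that vanishes at `1`. -/
def Qbar.lift (f : B →ₗ[k] X) (h : f 1 = 0) : Qbar k B →ₗ[k] X :=
  (unitSub k B).liftQ f <| by
    rintro _ ⟨c, rfl⟩
    simp [Algebra.algebraMap_eq_smul_one, h]

lemma Qbar.tensor_hom_ext {f g : Qbar k B ⊗[k] N →ₗ[k] X}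
    (h : ∀ x n, f (qbar k B x ⊗ₜ n) = g (qbar k B x ⊗ₜ n)) : f = g :=
  TensorProduct.ext' fun v n ↦ by
    obtain ⟨x, rfl⟩ := Submodule.mkQ_surjective _ v
    exact h x n

lemma HCh.hom_ext {n : ℕ} {f g : HCh k B N n →ₗ[k] X}
    (h : ∀ (m : N) (x : Fin n → B), f (m ⊗ₜ[k] tp k fun i ↦ qbar k B (x i)) =
      g (m ⊗ₜ[k] tp k fun i ↦ qbar k B (x i))) : f = g :=
  TensorProduct.ext <| LinearMap.ext fun m ↦ Tpow.hom_ext fun v ↦ by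
    choose x hx using fun i ↦ Submodule.mkQ_surjective (unitSub k B) (v i)
    obtain rfl : (fun i ↦ qbar k B (x i)) = v := funext hx
    exact h m x

/-- Chains of degree `n + 1` with coefficients in `N` are chains of degree `n` with coefficients
in `B̄ ⊗ N`: the last tensor factor is moved to the coefficients. -/
def HCh.peel (n : ℕ) : HCh k B N (n + 1) ≃ₗ[k] HCh k B (Qbar k B ⊗[k] N) n :=
  TensorProduct.congr (LinearEquiv.refl k N) (Tpow.snoc n).symm ≪≫ₗ
    (TensorProduct.assoc k N _ _).symm ≪≫ₗ TensorProduct.comm k _ _ ≪≫ₗ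
      (TensorProduct.assoc k _ N _).symm

lemma HCh.peel_tmul {n : ℕ} (m : N) (v : Fin (n + 1) → Qbar k B) :
    peel n (m ⊗ₜ[k] tp k v) = (v (Fin.last n) ⊗ₜ[k] m) ⊗ₜ[k] tp k fun i ↦ v i.castSucc := by
  rw [← Tpow.snoc_tp v]
  simp [peel]

end NormalizedChains

namespace Bimod

section Omega

variable {k : Type} [CommRing k] {B : Type} [Ring B] [Algebra k B]
  {N : Type} [AddCommGroup N] [Module k N] (Bi : Bimod k B N)

lemma l_one_apply (n : N) : Bi.l 1 n = n :=
  LinearMap.congr_fun Bi.l_one n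

lemma r_one_apply (n : N) : Bi.r 1 n = n :=
  LinearMap.congr_fun Bi.r_one n

lemma l_mul_apply (x y : B) (n : N) : Bi.l (x * y) n = Bi.l x (Bi.l y n) :=
  LinearMap.congr_fun (Bi.l_mul x y) n

lemma r_mul_apply (x y : B) (n : N) : Bi.r (x * y) n = Bi.r y (Bi.r x n) :=
  LinearMap.congr_fun (Bi.r_mul x y) n

lemma l_r_apply (x y : B) (n : N) : Bi.l x (Bi.r y n) = Bi.r y (Bi.l x n) :=
  LinearMap.congr_fun (Bi.lr_comm x y) n

/-- The left action as a map on `B ⊗ N`. -/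
def action : B ⊗[k] N →ₗ[k] N := TensorProduct.lift Bi.l

lemma action_tmul (b : B) (n : N) : Bi.action (b ⊗ₜ n) = Bi.l b n := rfl

/-- The left action of `y` on `B̄ ⊗ N`, see `Bimod.omega`. -/
def omegaLeft (y : B) : Qbar k B ⊗[k] N →ₗ[k] Qbar k B ⊗[k] N :=
  TensorProduct.lift <| Qbar.lift (X := N →ₗ[k] Qbar k B ⊗[k] N)
    (LinearMap.mk₂ k (fun x n ↦ qbar k B (y * x) ⊗ₜ[k] n - qbar k B y ⊗ₜ[k] Bi.l x n)
      (by intros; simp only [mul_add, map_add, tmul_add, add_tmul, LinearMap.add_apply]; abel)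
      (by intros; simp only [mul_smul_comm, map_smul, tmul_smul, ← smul_tmul', smul_sub,
        LinearMap.smul_apply])
      (by intros; simp only [map_add, tmul_add]; abel)
      (by intros; simp only [map_smul, tmul_smul, smul_sub]))
    (LinearMap.ext fun n ↦ by rw [LinearMap.mk₂_apply, mul_one, Bi.l_one]; exact sub_self _)

lemma omegaLeft_tmul (y x : B) (n : N) : Bi.omegaLeft y (qbar k B x ⊗ₜ n) =
    qbar k B (y * x) ⊗ₜ n - qbar k B y ⊗ₜ Bi.l x n := rfl

/-- The first syzygy `Ω N` of a bimodule `N`: the module `B̄ ⊗ N`, embedded in `B ⊗ N` by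
`x̄ ⊗ n ↦ x ⊗ n - 1 ⊗ x n` as the kernel of the action map `B ⊗ N → N`. -/
def omega : Bimod k B (Qbar k B ⊗[k] N) where
  l :=
    { toFun := Bi.omegaLeft
      map_add' := fun y z ↦ Qbar.tensor_hom_ext fun x n ↦ by
        simp only [LinearMap.add_apply, omegaLeft_tmul, add_mul, map_add, add_tmul]
        abel
      map_smul' := fun c y ↦ Qbar.tensor_hom_ext fun x n ↦ by
        simp only [LinearMap.smul_apply, omegaLeft_tmul, smul_mul_assoc, map_smul, ← smul_tmul',
          smul_sub, RingHom.id_apply] }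
  r := LinearMap.lTensorHom (Qbar k B) ∘ₗ Bi.r
  l_one := Qbar.tensor_hom_ext fun x n ↦ by
    simp only [LinearMap.coe_mk, AddHom.coe_mk, omegaLeft_tmul, qbar_one, one_mul, zero_tmul,
      sub_zero, LinearMap.id_apply]
  r_one := Qbar.tensor_hom_ext fun x n ↦ by simp [Bi.r_one]
  l_mul y z := Qbar.tensor_hom_ext fun x n ↦ by
    simp only [LinearMap.coe_mk, AddHom.coe_mk, omegaLeft_tmul, LinearMap.comp_apply, map_sub,
      Bi.l_mul, mul_assoc]
    abel
  r_mul y z := Qbar.tensor_hom_ext fun x n ↦ by simp [Bi.r_mul]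
  lr_comm y z := Qbar.tensor_hom_ext fun x n ↦ by
    simp only [LinearMap.coe_mk, AddHom.coe_mk, omegaLeft_tmul, LinearMap.comp_apply, map_sub,
      LinearMap.coe_lTensorHom, LinearMap.lTensor_tmul, Bi.l_r_apply]

lemma omega_l (y x : B) (n : N) : Bi.omega.l y (qbar k B x ⊗ₜ n) =
    qbar k B (y * x) ⊗ₜ n - qbar k B y ⊗ₜ Bi.l x n := rfl

lemma omega_r (y : B) (x : Qbar k B) (n : N) : Bi.omega.r y (x ⊗ₜ n) = x ⊗ₜ Bi.r y n := rfl

lemma omega_l_rTensor (y : B) (s : B ⊗[k] N) :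
    Bi.omega.l y ((qbar k B).rTensor N s) =
      (qbar k B).rTensor N ((LinearMap.mulLeft k y).rTensor N s) -
        qbar k B y ⊗ₜ Bi.action s := by
  induction s with
  | zero => simp
  | add s t hs ht =>
    simp only [map_add, tmul_add, hs, ht]
    abel
  | tmul x n => rfl

lemma omega_r_rTensor (y : B) (s : B ⊗[k] N) :
    Bi.omega.r y ((qbar k B).rTensor N s) = (qbar k B).rTensor N ((Bi.r y).lTensor B s) :=
  LinearMap.congr_fun (LinearMap.lTensor_comp_rTensor _ _ _) s |>.trans
    (LinearMap.congr_fun (LinearMap.rTensor_comp_lTensor _ _ _) s).symm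

/-- The commutator map `x̄ ⊗ n ↦ n x - x n`. -/
def commutator : Qbar k B ⊗[k] N →ₗ[k] N :=
  TensorProduct.lift (Qbar.lift (Bi.r - Bi.l) (by simp [Bi.l_one, Bi.r_one]))

lemma commutator_tmul (x : B) (n : N) :
    Bi.commutator (qbar k B x ⊗ₜ n) = Bi.r x n - Bi.l x n := rfl

lemma commutator_comp_commutator_omega : Bi.commutator ∘ₗ Bi.omega.commutator = 0 := by
  refine Qbar.tensor_hom_ext fun x z ↦ ?_
  suffices h : Bi.commutator ∘ₗ Bi.omega.commutator ∘ₗ TensorProduct.mk k _ _ (qbar k B x) = 0 from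
    LinearMap.congr_fun h z
  refine Qbar.tensor_hom_ext fun y n ↦ ?_
  simp only [LinearMap.comp_apply, TensorProduct.mk_apply, commutator_tmul, omega_l, omega_r,
    map_sub, Bi.r_mul, Bi.l_mul, Bi.l_r_apply, LinearMap.zero_apply]
  abel

end Omega

/-- The Hochschild differential. Under `HCh.peel` the Hochschild complex of `N` in positive degrees
becomes the shifted complex of `Ω N`, which makes dimension shifting immediate. -/
def hochschildD {k : Type} [CommRing k] {B : Type} [Ring B] [Algebra k B] : ∀ {N : Type}
    [AddCommGroup N] [Module k N] (_ : Bimod k B N) (n : ℕ), HCh k B N (n + 1) →ₗ[k] HCh k B N n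
  | _, _, _, Bi, 0 => Bi.commutator.rTensor _ ∘ₗ (HCh.peel 0).toLinearMap
  | _, _, _, Bi, n + 1 =>
    (HCh.peel n).symm.toLinearMap ∘ₗ Bi.omega.hochschildD n ∘ₗ (HCh.peel (n + 1)).toLinearMap

end Bimod

section MulAt

variable {B : Type} [Mul B] {n : ℕ} (x : Fin (n + 2) → B)

lemma mulAt_castSucc_last (i : Fin n) :
    mulAt x i.castSucc (Fin.last n) = x (Fin.last (n + 1)) := by
  have := i.2
  simp only [mulAt, Fin.val_last, Fin.val_castSucc, Fin.succ_last]
  rw [if_neg (by omega), if_neg (by omega)]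

lemma mulAt_castSucc_castSucc (i j : Fin n) :
    mulAt x i.castSucc j.castSucc = mulAt (fun i ↦ x i.castSucc) i j := rfl

lemma mulAt_last_last :
    mulAt x (Fin.last n) (Fin.last n) = x (Fin.last n).castSucc * x (Fin.last (n + 1)) := by
  simp [mulAt]

lemma mulAt_last_castSucc (j : Fin n) :
    mulAt x (Fin.last n) j.castSucc = x j.castSucc.castSucc := by
  simp [mulAt]

end MulAt

section HochschildD

variable {k : Type} [CommRing k] {B : Type} [Ring B] [Algebra k B]
  {N : Type} [AddCommGroup N] [Module k N] {N' : Type} [AddCommGroup N'] [Module k N']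

namespace Bimod

lemma hochschildD_hochschildD (Bi : Bimod k B N) (n : ℕ) (x : HCh k B N (n + 2)) :
    Bi.hochschildD n (Bi.hochschildD (n + 1) x) = 0 := by
  induction n generalizing N with
  | zero =>
    simp only [hochschildD, LinearMap.comp_apply, LinearEquiv.coe_coe, LinearEquiv.apply_symm_apply]
    rw [← LinearMap.comp_apply, ← LinearMap.rTensor_comp, commutator_comp_commutator_omega]
    simp
  | succ n ih =>
    rw [hochschildD, hochschildD]
    simp [ih]

lemma isHochschildD (Bi : Bimod k B N) : IsHochschildD k Bi.l Bi.r Bi.hochschildD := by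
  intro n
  induction n generalizing N with
  | zero =>
    intro m x
    simp only [hochschildD, LinearMap.comp_apply, LinearEquiv.coe_coe, HCh.peel_tmul,
      LinearMap.rTensor_tmul, commutator_tmul, sub_tmul, Finset.univ_eq_empty, Finset.sum_empty,
      add_zero, zero_add, pow_one]
    rw [sub_eq_add_neg]
    congr 1
    exact (neg_one_zsmul _).symm
  | succ n ih =>
    intro m x
    have h := ih Bi.omega (qbar k B (x (Fin.last (n + 1))) ⊗ₜ[k] m) fun i ↦ x i.castSucc
    simp only [hochschildD, LinearMap.comp_apply, LinearEquiv.coe_coe, HCh.peel_tmul]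
    rw [LinearEquiv.symm_apply_eq, h, map_add, map_add, Fin.sum_univ_castSucc, map_add, map_sum]
    simp only [map_zsmul, HCh.peel_tmul, omega_l, omega_r, mulAt_castSucc_last,
      mulAt_castSucc_castSucc, mulAt_last_last, mulAt_last_castSucc, Fin.val_castSucc,
      Fin.val_last, sub_tmul, Fin.succ_castSucc, Fin.succ_last, Fin.castSucc_zero]
    module

lemma eq_hochschildD (Bi : Bimod k B N) {b : ∀ n, HCh k B N (n + 1) →ₗ[k] HCh k B N n}
    (h : IsHochschildD k Bi.l Bi.r b) : b = Bi.hochschildD :=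
  funext fun n ↦ HCh.hom_ext fun m x ↦ by rw [h, Bi.isHochschildD]

/-- Homomorphisms of bimodules. -/
structure IsHom (Bi : Bimod k B N) (Bi' : Bimod k B N') (φ : N →ₗ[k] N') : Prop where
  map_l : ∀ x n, φ (Bi.l x n) = Bi'.l x (φ n)
  map_r : ∀ x n, φ (Bi.r x n) = Bi'.r x (φ n)

lemma IsHom.isChainMap {Bi : Bimod k B N} {Bi' : Bimod k B N'} {φ : N →ₗ[k] N'}
    (h : Bi.IsHom Bi' φ) :
    Hml.IsChainMap Bi.hochschildD Bi'.hochschildD fun n ↦ φ.rTensor (Tpow k (Qbar k B) n) := by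
  intro n
  refine LinearMap.congr_fun (f := φ.rTensor _ ∘ₗ Bi.hochschildD n)
    (g := Bi'.hochschildD n ∘ₗ φ.rTensor _) (HCh.hom_ext fun m x ↦ ?_)
  simp only [LinearMap.comp_apply, LinearMap.rTensor_tmul, isHochschildD _ n, map_add, map_sum,
    map_zsmul, h.map_l, h.map_r]

/-- A section `σ : N → B ⊗ N` of the action map that intertwines the left action with
multiplication on `B`, and the right action with the right action on `N`. It exhibits `N` as a
direct summand of the relatively projective bimodule `B ⊗ N`. -/
structure IsSplitting (Bi : Bimod k B N) (σ : N →ₗ[k] B ⊗[k] N) : Prop where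
  action_apply : ∀ n, Bi.action (σ n) = n
  map_l : ∀ x n, σ (Bi.l x n) = (LinearMap.mulLeft k x).rTensor N (σ n)
  map_r : ∀ x n, σ (Bi.r x n) = (Bi.r x).lTensor B (σ n)

/-- The contracting homotopy of the Hochschild complex attached to `σ : N → B ⊗ N`. -/
def homotopy (σ : N →ₗ[k] B ⊗[k] N) (n : ℕ) : HCh k B N n →ₗ[k] HCh k B N (n + 1) :=
  (HCh.peel n).symm.toLinearMap ∘ₗ ((qbar k B).rTensor N ∘ₗ σ).rTensor _

lemma peel_homotopy (σ : N →ₗ[k] B ⊗[k] N) {n : ℕ} (m : N) (t : Tpow k (Qbar k B) n) :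
    HCh.peel n (homotopy σ n (m ⊗ₜ[k] t)) = (qbar k B).rTensor N (σ m) ⊗ₜ[k] t := by
  simp [homotopy]

lemma IsSplitting.hochschildD_homotopy {Bi : Bimod k B N} {σ : N →ₗ[k] B ⊗[k] N}
    (hσ : Bi.IsSplitting σ) (n : ℕ) (x : HCh k B N (n + 1)) :
    Bi.hochschildD (n + 1) (homotopy σ (n + 1) x) - homotopy σ n (Bi.hochschildD n x) =
      (-1 : ℤ) ^ n • x := by
  refine LinearMap.congr_fun (g := (-1 : ℤ) ^ n • LinearMap.id)
    (f := Bi.hochschildD (n + 1) ∘ₗ homotopy σ (n + 1) - homotopy σ n ∘ₗ Bi.hochschildD n)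
    (HCh.hom_ext fun m x ↦ (HCh.peel n).injective ?_) x
  simp only [LinearMap.sub_apply, LinearMap.comp_apply, isHochschildD _ n, map_sub, map_add,
    map_sum, map_zsmul, LinearMap.smul_apply, LinearMap.id_apply, hochschildD,
    LinearEquiv.coe_coe, LinearEquiv.apply_symm_apply, peel_homotopy, hσ.map_l, hσ.map_r]
  rw [HCh.peel_tmul, omega_l_rTensor, omega_r_rTensor, hσ.action_apply, sub_tmul]
  module

lemma IsSplitting.exists_eq_hochschildD {Bi : Bimod k B N} {σ : N →ₗ[k] B ⊗[k] N}
    (hσ : Bi.IsSplitting σ) {n : ℕ} {x : HCh k B N (n + 1)} (hx : Bi.hochschildD n x = 0) :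
    ∃ y, Bi.hochschildD (n + 1) y = x := by
  have h := hσ.hochschildD_homotopy n x
  rw [hx, map_zero, sub_zero] at h
  refine ⟨(-1 : ℤ) ^ n • homotopy σ (n + 1) x, ?_⟩
  rw [map_zsmul, h, smul_smul, ← mul_pow, neg_mul_neg, one_mul, one_pow, one_smul]

end Bimod

end HochschildD

section HochschildHomology

variable {k : Type} [CommRing k] {B : Type} [Ring B] [Algebra k B]
  {N : Type} [AddCommGroup N] [Module k N] {N' : Type} [AddCommGroup N'] [Module k N']
  {N'' : Type} [AddCommGroup N''] [Module k N'']

namespace Bimod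

/-- The Hochschild homology `H_n(B, N)`. -/
abbrev HH (Bi : Bimod k B N) (n : ℕ) : Type := Hml k Bi.hochschildD n

variable (k B N) in
/-- The identification of `N` with the degree-zero Hochschild chains. -/
def zeroChain : N ≃ₗ[k] HCh k B N 0 :=
  ((TensorProduct.rid k N).symm : N ≃ₗ[k] N ⊗[k] k)

variable (k B N) in
/-- The identification of `B̄ ⊗ N` with the degree-one Hochschild chains. -/
def oneChain : Qbar k B ⊗[k] N ≃ₗ[k] HCh k B N 1 :=
  (zeroChain k B _).trans (HCh.peel 0).symm

lemma oneChain_tmul (x : Qbar k B) (n : N) : oneChain k B N (x ⊗ₜ n) = n ⊗ₜ tp k fun _ ↦ x := by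
  rw [oneChain, LinearEquiv.trans_apply, LinearEquiv.symm_apply_eq, HCh.peel_tmul]
  rfl

lemma rTensor_oneChain (φ : N →ₗ[k] N') (t : Qbar k B ⊗[k] N) :
    φ.rTensor _ (oneChain k B N t) = oneChain k B N' (φ.lTensor _ t) := by
  refine LinearMap.congr_fun (f := φ.rTensor _ ∘ₗ (oneChain k B N).toLinearMap)
    (g := (oneChain k B N').toLinearMap ∘ₗ φ.lTensor _) (TensorProduct.ext' fun x n ↦ ?_) t
  simp [oneChain_tmul]

lemma hochschildD_oneChain (Bi : Bimod k B N) (t : Qbar k B ⊗[k] N) :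
    Bi.hochschildD 0 (oneChain k B N t) = zeroChain k B N (Bi.commutator t) := by
  rw [hochschildD, LinearMap.comp_apply, LinearEquiv.coe_coe, oneChain, LinearEquiv.trans_apply,
    LinearEquiv.apply_symm_apply]
  rfl

/-- The class in `H_0(B, N) = N / [B, N]` of an element of `N`. -/
def toHHZero (Bi : Bimod k B N) : N →ₗ[k] Bi.HH 0 :=
  Hml.ofCycle Bi.hochschildD 0 ∘ₗ
    (zeroChain k B N).toLinearMap.codRestrict (Hml.cycles Bi.hochschildD 0)
      fun _ ↦ Submodule.mem_top

lemma toHHZero_surjective (Bi : Bimod k B N) : Function.Surjective Bi.toHHZero := by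
  intro h
  obtain ⟨⟨x, hx⟩, rfl⟩ := Hml.ofCycle_surjective _ _ h
  obtain ⟨n, rfl⟩ := (zeroChain k B N).surjective x
  exact ⟨n, rfl⟩

lemma toHHZero_eq_zero_iff (Bi : Bimod k B N) {n : N} :
    Bi.toHHZero n = 0 ↔ ∃ t, Bi.commutator t = n := by
  rw [toHHZero, LinearMap.comp_apply, Hml.ofCycle_eq_zero_iff]
  constructor
  · rintro ⟨y, hy⟩
    obtain ⟨t, rfl⟩ := (oneChain k B N).surjective y
    exact ⟨t, (zeroChain k B N).injective ((Bi.hochschildD_oneChain t).symm.trans hy)⟩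
  · rintro ⟨t, rfl⟩
    exact ⟨_, Bi.hochschildD_oneChain t⟩

lemma toHHZero_l (Bi : Bimod k B N) (x : B) (n : N) :
    Bi.toHHZero (Bi.l x n) = Bi.toHHZero (Bi.r x n) := by
  rw [← sub_eq_zero, ← map_sub, toHHZero_eq_zero_iff]
  exact ⟨-(qbar k B x ⊗ₜ n), by rw [map_neg, commutator_tmul, neg_sub]⟩

/-- The map on `H_0(B, N) = N / [B, N]` induced by a map which vanishes on commutators. -/
def liftHHZero (Bi : Bimod k B N) (φ : N →ₗ[k] N') (hφ : ∀ x n, φ (Bi.l x n) = φ (Bi.r x n)) :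
    Bi.HH 0 →ₗ[k] N' :=
  descend Bi.toHHZero Bi.toHHZero_surjective φ fun n hn ↦ by
    obtain ⟨t, rfl⟩ := Bi.toHHZero_eq_zero_iff.mp hn
    have hcomm : φ ∘ₗ Bi.commutator = 0 := Qbar.tensor_hom_ext fun x m ↦ by
      rw [LinearMap.comp_apply, commutator_tmul, map_sub, hφ, sub_self, LinearMap.zero_apply]
    exact LinearMap.congr_fun hcomm t

lemma liftHHZero_toHHZero (Bi : Bimod k B N) {φ : N →ₗ[k] N'}
    (hφ : ∀ x n, φ (Bi.l x n) = φ (Bi.r x n)) (n : N) :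
    Bi.liftHHZero φ hφ (Bi.toHHZero n) = φ n :=
  descend_apply ..

lemma IsHom.map_toHHZero {Bi : Bimod k B N} {Bi' : Bimod k B N'} {φ : N →ₗ[k] N'}
    (h : Bi.IsHom Bi' φ) (n : N) :
    Hml.map h.isChainMap 0 (Bi.toHHZero n) = Bi'.toHHZero (φ n) :=
  Hml.map_ofCycle ..

lemma oneChain_mem_cycles_iff (Bi : Bimod k B N) {t : Qbar k B ⊗[k] N} :
    oneChain k B N t ∈ Hml.cycles Bi.hochschildD 1 ↔ Bi.commutator t = 0 := by
  rw [Hml.cycles, LinearMap.mem_ker, hochschildD_oneChain, LinearEquiv.map_eq_zero_iff]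

/-- The class in `H_1(B, N)` of an element of `B̄ ⊗ N` with vanishing commutator. -/
def toHHOne (Bi : Bimod k B N) : LinearMap.ker Bi.commutator →ₗ[k] Bi.HH 1 :=
  Hml.ofCycle Bi.hochschildD 1 ∘ₗ
    (oneChain k B N).toLinearMap.restrict fun _ ↦ Bi.oneChain_mem_cycles_iff.mpr

lemma toHHOne_surjective (Bi : Bimod k B N) : Function.Surjective Bi.toHHOne := by
  intro h
  obtain ⟨⟨x, hx⟩, rfl⟩ := Hml.ofCycle_surjective _ _ h
  obtain ⟨t, rfl⟩ := (oneChain k B N).surjective x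
  exact ⟨⟨t, Bi.oneChain_mem_cycles_iff.mp hx⟩, rfl⟩

lemma IsSplitting.subsingleton_HH {Bi : Bimod k B N} {σ : N →ₗ[k] B ⊗[k] N}
    (hσ : Bi.IsSplitting σ) (n : ℕ) : Subsingleton (Bi.HH (n + 1)) :=
  Hml.subsingleton_of_ker_le_range fun _ hx ↦ hσ.exists_eq_hochschildD hx

/-- A short exact sequence `0 → N' → N → N'' → 0` of bimodules that remains exact after
tensoring with the powers of `B̄`. -/
structure IsShortExact (Bi' : Bimod k B N') (Bi : Bimod k B N) (Bi'' : Bimod k B N'')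
    (i : N' →ₗ[k] N) (p : N →ₗ[k] N'') : Prop where
  isHom_i : Bi'.IsHom Bi i
  isHom_p : Bi.IsHom Bi'' p
  injective : ∀ n, Function.Injective (i.rTensor (Tpow k (Qbar k B) n))
  exact : Function.Exact i p
  surjective : Function.Surjective p

lemma IsShortExact.isShortExact_hochschildD {Bi' : Bimod k B N'} {Bi : Bimod k B N}
    {Bi'' : Bimod k B N''} {i : N' →ₗ[k] N} {p : N →ₗ[k] N''}
    (s : IsShortExact Bi' Bi Bi'' i p) :
    Hml.IsShortExact Bi'.hochschildD Bi.hochschildD Bi''.hochschildD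
      (fun n ↦ i.rTensor (Tpow k (Qbar k B) n)) (fun n ↦ p.rTensor (Tpow k (Qbar k B) n)) where
  d_comp_d := Bi.hochschildD_hochschildD
  chain_i := s.isHom_i.isChainMap
  chain_p := s.isHom_p.isChainMap
  injective := s.injective
  exact _ := rTensor_exact _ s.exact s.surjective
  surjective _ := LinearMap.rTensor_surjective _ s.surjective

/-- The connecting map of the long exact sequence of Hochschild homology. -/
abbrev IsShortExact.connecting {Bi' : Bimod k B N'} {Bi : Bimod k B N} {Bi'' : Bimod k B N''}
    {i : N' →ₗ[k] N} {p : N →ₗ[k] N''} (s : IsShortExact Bi' Bi Bi'' i p) (n : ℕ) :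
    Bi''.HH (n + 1) →ₗ[k] Bi'.HH n :=
  s.isShortExact_hochschildD.connecting n

lemma IsShortExact.connecting_injective {Bi' : Bimod k B N'} {Bi : Bimod k B N}
    {Bi'' : Bimod k B N''} {i : N' →ₗ[k] N} {p : N →ₗ[k] N''} (s : IsShortExact Bi' Bi Bi'' i p)
    {n : ℕ} (h : Subsingleton (Bi.HH (n + 1))) : Function.Injective (s.connecting n) := by
  refine (injective_iff_map_eq_zero _).mpr fun x hx ↦ ?_
  obtain ⟨y, rfl⟩ := (s.isShortExact_hochschildD.exact_map_connecting n x).mp hx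
  rw [Subsingleton.elim y 0, map_zero]

lemma IsShortExact.range_connecting {Bi' : Bimod k B N'} {Bi : Bimod k B N}
    {Bi'' : Bimod k B N''} {i : N' →ₗ[k] N} {p : N →ₗ[k] N''} (s : IsShortExact Bi' Bi Bi'' i p)
    (n : ℕ) : LinearMap.range (s.connecting n) = LinearMap.ker (Hml.map s.isHom_i.isChainMap n) :=
  (LinearMap.exact_iff.mp (s.isShortExact_hochschildD.exact_connecting_map n)).symm

/-- The bimodule obtained by restriction along an algebra homomorphism. -/
def restrict {A : Type} [Ring A] [Algebra k A] (Bi : Bimod k B N) (φ : A →ₐ[k] B) :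
    Bimod k A N where
  l := Bi.l ∘ₗ φ.toLinearMap
  r := Bi.r ∘ₗ φ.toLinearMap
  l_one := by rw [← Bi.l_one, ← map_one φ]; rfl
  r_one := by rw [← Bi.r_one, ← map_one φ]; rfl
  l_mul x y := (congrArg Bi.l (map_mul φ x y)).trans (Bi.l_mul _ _)
  r_mul x y := (congrArg Bi.r (map_mul φ x y)).trans (Bi.r_mul _ _)
  lr_comm x y := Bi.lr_comm _ _

lemma restrict_l {A : Type} [Ring A] [Algebra k A] (Bi : Bimod k B N) (φ : A →ₐ[k] B) (a : A) :
    (Bi.restrict φ).l a = Bi.l (φ a) := rfl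

lemma restrict_r {A : Type} [Ring A] [Algebra k A] (Bi : Bimod k B N) (φ : A →ₐ[k] B) (a : A) :
    (Bi.restrict φ).r a = Bi.r (φ a) := rfl

lemma IsHom.restrict {A : Type} [Ring A] [Algebra k A] {Bi : Bimod k B N} {Bi' : Bimod k B N'}
    {ψ : N →ₗ[k] N'} (h : Bi.IsHom Bi' ψ) (φ : A →ₐ[k] B) :
    (Bi.restrict φ).IsHom (Bi'.restrict φ) ψ where
  map_l a := h.map_l (φ a)
  map_r a := h.map_r (φ a)

end Bimod

end HochschildHomology

section Free

variable {k : Type} [CommRing k] {B : Type} [Ring B] [Algebra k B]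
  {N : Type} [AddCommGroup N] [Module k N] (Bi : Bimod k B N)

/-- The linear map `Ā → B̄` induced by an algebra homomorphism. -/
def Qbar.map {A : Type} [Ring A] [Algebra k A] (φ : A →ₐ[k] B) : Qbar k A →ₗ[k] Qbar k B :=
  Qbar.lift (qbar k B ∘ₗ φ.toLinearMap) ((congrArg (qbar k B) (map_one φ)).trans qbar_one)

lemma Qbar.map_qbar {A : Type} [Ring A] [Algebra k A] (φ : A →ₐ[k] B) (a : A) :
    Qbar.map φ (qbar k A a) = qbar k B (φ a) := rfl

namespace Bimod

/-- The bimodule `B ⊗ N`, with left action on `B` and right action on `N`. -/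
def free : Bimod k B (B ⊗[k] N) where
  l := LinearMap.rTensorHom N ∘ₗ LinearMap.mul k B
  r := LinearMap.lTensorHom B ∘ₗ Bi.r
  l_one := by ext; simp
  r_one := by ext; simp [Bi.r_one]
  l_mul x y := by ext; simp [mul_assoc]
  r_mul x y := by ext; simp [Bi.r_mul]
  lr_comm x y := by ext; simp

lemma free_l (x b : B) (n : N) : Bi.free.l x (b ⊗ₜ n) = (x * b) ⊗ₜ n := rfl

lemma free_r (x b : B) (n : N) : Bi.free.r x (b ⊗ₜ n) = b ⊗ₜ Bi.r x n := rfl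

lemma isSplitting_free : Bi.free.IsSplitting ((TensorProduct.mk k B N 1).lTensor B) where
  action_apply := LinearMap.congr_fun (g := LinearMap.id) (f := Bi.free.action ∘ₗ _) <|
    TensorProduct.ext' fun b n ↦ by simp [action_tmul, free_l]
  map_l x := LinearMap.congr_fun (f := (TensorProduct.mk k B N 1).lTensor B ∘ₗ Bi.free.l x)
      (g := (LinearMap.mulLeft k x).rTensor _ ∘ₗ (TensorProduct.mk k B N 1).lTensor B) <|
    TensorProduct.ext' fun b n ↦ by simp [free_l]
  map_r x := LinearMap.congr_fun (f := (TensorProduct.mk k B N 1).lTensor B ∘ₗ Bi.free.r x)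
      (g := (Bi.free.r x).lTensor B ∘ₗ (TensorProduct.mk k B N 1).lTensor B) <|
    TensorProduct.ext' fun b n ↦ by simp [free_r]

lemma isHom_action : Bi.free.IsHom Bi Bi.action where
  map_l x := LinearMap.congr_fun (f := Bi.action ∘ₗ Bi.free.l x) (g := Bi.l x ∘ₗ Bi.action) <|
    TensorProduct.ext' fun b n ↦ Bi.l_mul_apply x b n
  map_r x := LinearMap.congr_fun (f := Bi.action ∘ₗ Bi.free.r x) (g := Bi.r x ∘ₗ Bi.action) <|
    TensorProduct.ext' fun b n ↦ Bi.l_r_apply b x n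

lemma action_surjective : Function.Surjective Bi.action :=
  fun n ↦ ⟨1 ⊗ₜ n, Bi.l_one_apply n⟩

/-- The embedding `x̄ ⊗ n ↦ x ⊗ n - 1 ⊗ x n` of `Ω N` in `B ⊗ N`. -/
def omegaIncl : Qbar k B ⊗[k] N →ₗ[k] B ⊗[k] N :=
  TensorProduct.lift <| Qbar.lift (X := N →ₗ[k] B ⊗[k] N)
    (LinearMap.mk₂ k (fun b n ↦ b ⊗ₜ[k] n - 1 ⊗ₜ[k] Bi.l b n)
      (by intros; simp only [add_tmul, tmul_add, map_add, LinearMap.add_apply]; abel)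
      (by intros; simp only [← smul_tmul', tmul_smul, smul_sub, map_smul, LinearMap.smul_apply])
      (by intros; simp only [tmul_add, map_add]; abel)
      (by intros; simp only [tmul_smul, smul_sub, map_smul]))
    (by ext n; simp [Bi.l_one])

lemma omegaIncl_tmul (b : B) (n : N) :
    Bi.omegaIncl (qbar k B b ⊗ₜ n) = b ⊗ₜ n - 1 ⊗ₜ Bi.l b n := rfl

lemma rTensor_qbar_comp_omegaIncl : (qbar k B).rTensor N ∘ₗ Bi.omegaIncl = LinearMap.id :=
  Qbar.tensor_hom_ext fun b n ↦ by
    rw [LinearMap.comp_apply, omegaIncl_tmul, map_sub, LinearMap.rTensor_tmul,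
      LinearMap.rTensor_tmul, qbar_one, zero_tmul, sub_zero, LinearMap.id_apply]

lemma omegaIncl_rTensor_qbar (w : B ⊗[k] N) :
    Bi.omegaIncl ((qbar k B).rTensor N w) = w - 1 ⊗ₜ Bi.action w :=
  LinearMap.congr_fun (f := Bi.omegaIncl ∘ₗ (qbar k B).rTensor N)
    (g := LinearMap.id - TensorProduct.mk k B N 1 ∘ₗ Bi.action)
    (TensorProduct.ext' fun _ _ ↦ rfl) w

lemma isHom_omegaIncl : Bi.omega.IsHom Bi.free Bi.omegaIncl where
  map_l x := LinearMap.congr_fun (f := Bi.omegaIncl ∘ₗ Bi.omega.l x)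
      (g := Bi.free.l x ∘ₗ Bi.omegaIncl) <| Qbar.tensor_hom_ext fun b n ↦ by
    simp only [LinearMap.comp_apply, omega_l, map_sub, omegaIncl_tmul, free_l, l_mul_apply,
      mul_one]
    abel
  map_r x := LinearMap.congr_fun (f := Bi.omegaIncl ∘ₗ Bi.omega.r x)
      (g := Bi.free.r x ∘ₗ Bi.omegaIncl) <| Qbar.tensor_hom_ext fun b n ↦ by
    simp only [LinearMap.comp_apply, omega_r, map_sub, omegaIncl_tmul, free_r, l_r_apply]

lemma omegaIncl_rTensor_injective (T : Type) [AddCommGroup T] [Module k T] :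
    Function.Injective (Bi.omegaIncl.rTensor T) :=
  Function.LeftInverse.injective (g := ((qbar k B).rTensor N).rTensor T) fun x ↦ by
    rw [← LinearMap.rTensor_comp_apply, rTensor_qbar_comp_omegaIncl, LinearMap.rTensor_id,
      LinearMap.id_apply]

lemma exact_omegaIncl_action : Function.Exact Bi.omegaIncl Bi.action := by
  refine LinearMap.exact_of_comp_of_mem_range
    (Qbar.tensor_hom_ext fun b n ↦ ?_) fun w hw ↦ ⟨(qbar k B).rTensor N w, ?_⟩
  · rw [LinearMap.comp_apply, omegaIncl_tmul, map_sub, action_tmul, action_tmul, l_one_apply,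
      sub_self, LinearMap.zero_apply]
  · rw [omegaIncl_rTensor_qbar, hw, tmul_zero, sub_zero]

lemma isShortExact_omega : Bi.omega.IsShortExact Bi.free Bi Bi.omegaIncl Bi.action where
  isHom_i := Bi.isHom_omegaIncl
  isHom_p := Bi.isHom_action
  injective _ := Bi.omegaIncl_rTensor_injective _
  exact := Bi.exact_omegaIncl_action
  surjective := Bi.action_surjective

lemma isShortExact_omega_restrict {A : Type} [Ring A] [Algebra k A] (φ : A →ₐ[k] B) :
    (Bi.omega.restrict φ).IsShortExact (Bi.free.restrict φ) (Bi.restrict φ) Bi.omegaIncl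
      Bi.action where
  isHom_i := Bi.isHom_omegaIncl.restrict φ
  isHom_p := Bi.isHom_action.restrict φ
  injective _ := Bi.omegaIncl_rTensor_injective _
  exact := Bi.exact_omegaIncl_action
  surjective := Bi.action_surjective

lemma free_commutator_lTensor {A : Type} [Ring A] [Algebra k A] (φ : A →ₐ[k] B)
    (t : Qbar k A ⊗[k] N) :
    (Bi.free.restrict φ).commutator ((TensorProduct.mk k B N 1).lTensor _ t) =
      1 ⊗ₜ (Bi.restrict φ).commutator t - Bi.omegaIncl ((Qbar.map φ).rTensor N t) := by
  refine LinearMap.congr_fun (f := (Bi.free.restrict φ).commutator ∘ₗ _)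
    (g := TensorProduct.mk k B N 1 ∘ₗ (Bi.restrict φ).commutator -
      Bi.omegaIncl ∘ₗ (Qbar.map φ).rTensor N) (Qbar.tensor_hom_ext fun a n ↦ ?_) t
  simp only [LinearMap.comp_apply, LinearMap.sub_apply, LinearMap.lTensor_tmul,
    LinearMap.rTensor_tmul, mk_apply, commutator_tmul, Qbar.map_qbar, omegaIncl_tmul, tmul_sub,
    restrict_l, restrict_r, free_l, free_r, mul_one]
  abel

lemma connecting_omega_restrict_toHHOne {A : Type} [Ring A] [Algebra k A] (φ : A →ₐ[k] B)
    (t : LinearMap.ker (Bi.restrict φ).commutator) :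
    (Bi.isShortExact_omega_restrict φ).connecting 0 ((Bi.restrict φ).toHHOne t) =
      -(Bi.omega.restrict φ).toHHZero ((Qbar.map φ).rTensor N t) := by
  obtain ⟨t, ht⟩ := t
  let y := oneChain k A _ ((TensorProduct.mk k B N 1).lTensor _ t)
  have hy : Bi.omegaIncl.rTensor _ (zeroChain k A _ (-(Qbar.map φ).rTensor N t)) =
      (Bi.free.restrict φ).hochschildD 0 y := by
    rw [hochschildD_oneChain, free_commutator_lTensor, LinearMap.mem_ker.mp ht, tmul_zero,
      zero_sub, ← map_neg Bi.omegaIncl]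
    rfl
  have hpy : Bi.action.rTensor _ y = oneChain k A N t := by
    rw [rTensor_oneChain, ← LinearMap.lTensor_comp_apply,
      show Bi.action ∘ₗ TensorProduct.mk k B N 1 = LinearMap.id from Bi.l_one,
      LinearMap.lTensor_id, LinearMap.id_apply]
  rw [← map_neg (Bi.omega.restrict φ).toHHZero]
  refine .trans ?_ ((Bi.isShortExact_omega_restrict φ).isShortExact_hochschildD.connecting_ofCycle
    (n := 0) hy)
  exact congrArg _ (congrArg (Hml.ofCycle _ 1) (Subtype.ext hpy.symm))

end Bimod

end Free

section BarComplex

variable {k : Type} [CommRing k] {H : Type} [Ring H] [HopfAlgebra k H]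
  {X : Type} [AddCommGroup X] [Module k X]

/-- `act` is a left module structure over `H`. -/
structure IsLeftModule (act : H →ₗ[k] X →ₗ[k] X) : Prop where
  one_act : ∀ x, act 1 x = x
  mul_act : ∀ g h x, act (g * h) x = act g (act h x)

/-- A left `H`-module as an `H`-bimodule, with `H` acting on the right through the counit. Its
Hochschild homology is the homology of `H` with coefficients in the module. -/
def IsLeftModule.bimod {act : H →ₗ[k] X →ₗ[k] X} (ha : IsLeftModule act) : Bimod k H X where
  l := act
  r := LinearMap.lsmul k X ∘ₗ Coalgebra.counit
  l_one := LinearMap.ext ha.one_act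
  r_one := by ext; simp
  l_mul g h := LinearMap.ext (ha.mul_act g h)
  r_mul g h := by ext; simp [smul_smul]
  lr_comm g h := by ext; simp

lemma IsLeftModule.bimod_l {act : H →ₗ[k] X →ₗ[k] X} (ha : IsLeftModule act) (h : H) (x : X) :
    ha.bimod.l h x = act h x := rfl

lemma IsLeftModule.bimod_r {act : H →ₗ[k] X →ₗ[k] X} (ha : IsLeftModule act) (h : H) (x : X) :
    ha.bimod.r h x = Coalgebra.counit (R := k) h • x := rfl

/-- The bar complex of a left `H`-module is the Hochschild complex of the corresponding bimodule,
up to the order of the tensor factors. -/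
def IsLeftModule.barEquiv {act : H →ₗ[k] X →ₗ[k] X} (ha : IsLeftModule act)
    {d : ∀ s, BarCh k (H := H) X (s + 1) →ₗ[k] BarCh k (H := H) X s} (hd : IsBarD k act d)
    (n : ℕ) : Hml k d n ≃ₗ[k] ha.bimod.HH n :=
  Hml.equiv (fun n ↦ TensorProduct.comm k (Tpow k (Qbar k H) n) X)
    (by
      let b n : HCh k H X (n + 1) →ₗ[k] HCh k H X n :=
        (TensorProduct.comm k _ _).toLinearMap ∘ₗ d n ∘ₗ
          (TensorProduct.comm k _ _).symm.toLinearMap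
      have hb : IsHochschildD k ha.bimod.l ha.bimod.r b := fun n m x ↦ by
        simp only [b, LinearMap.comp_apply, LinearEquiv.coe_coe, TensorProduct.comm_symm_tmul,
          hd n x m, map_add, map_sum, map_zsmul, map_smul, TensorProduct.comm_tmul, bimod_l,
          bimod_r, ← smul_tmul']
      intro n x
      simp [← ha.bimod.eq_hochschildD hb, b]) n

end BarComplex

/-! ### Sweedler sums and convolution -/

section Sweedler

open Coalgebra

variable {k : Type} [CommRing k] {H : Type} [AddCommGroup H] [Module k H] [Coalgebra k H]
  {X : Type} [AddCommGroup X] [Module k X]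

variable (k) in
/-- The sum `∑ T(h⁽¹⁾, …, h⁽ⁿ⁺¹⁾)`, computed with the chosen representatives `ℛ` of the successive
coproducts of the rightmost factor. -/
def sweedlerSum {X : Type} [AddCommGroup X] : ∀ n : ℕ, ((Fin (n + 1) → H) → X) → H → X
  | 0, T, h => T fun _ ↦ h
  | n + 1, T, h => ∑ i ∈ (ℛ k h).index,
      sweedlerSum n (fun v ↦ T (Fin.cons ((ℛ k h).left i) v)) ((ℛ k h).right i)

lemma sum_coassoc (T : H ⊗[k] (H ⊗[k] H) →ₗ[k] X) (h : H) :
    ∑ i ∈ (ℛ k h).index, ∑ j ∈ (ℛ k ((ℛ k h).left i)).index,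
        T ((ℛ k ((ℛ k h).left i)).left j ⊗ₜ
          ((ℛ k ((ℛ k h).left i)).right j ⊗ₜ (ℛ k h).right i)) =
      ∑ i ∈ (ℛ k h).index, ∑ j ∈ (ℛ k ((ℛ k h).right i)).index,
        T ((ℛ k h).left i ⊗ₜ
          ((ℛ k ((ℛ k h).right i)).left j ⊗ₜ (ℛ k ((ℛ k h).right i)).right j)) := by
  simpa only [map_sum] using congr(T $(sum_tmul_tmul_eq (ℛ k h)
    (fun i ↦ ℛ k ((ℛ k h).left i)) fun i ↦ ℛ k ((ℛ k h).right i)))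

lemma lTensor_map_comul_comul {P Y : Type} [AddCommGroup P] [Module k P] [AddCommGroup Y]
    [Module k Y] (ψ : H →ₗ[k] P) (φ : H →ₗ[k] Y) :
    (TensorProduct.map ψ φ ∘ₗ comul).lTensor H ∘ₗ comul =
      (TensorProduct.assoc k H P Y).toLinearMap ∘ₗ
        TensorProduct.map (ψ.lTensor H ∘ₗ comul) φ ∘ₗ comul := by
  have hassoc : (TensorProduct.map ψ φ).lTensor H ∘ₗ (TensorProduct.assoc k H H H).toLinearMap =
      (TensorProduct.assoc k H P Y).toLinearMap ∘ₗ TensorProduct.map (ψ.lTensor H) φ :=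
    TensorProduct.ext_threefold fun x y z ↦ rfl
  rw [LinearMap.lTensor_comp, LinearMap.comp_assoc, ← coassoc, ← LinearMap.comp_assoc, hassoc,
    ← LinearMap.map_comp_rTensor]
  rfl

lemma itComul_succ (n : ℕ) (h : H) :
    itComul k (n + 1) h = Tpow.cons (n + 1) ((itComul k n).lTensor H (comul h)) := rfl

lemma sRep_zero (h : H) : SRep k 0 h 1 fun _ _ ↦ h :=
  (Fin.sum_univ_one fun _ : Fin 1 ↦ tp k fun _ : Fin 1 ↦ h).symm

variable (k) in
lemma exists_sRep : ∀ (n : ℕ) (h : H), ∃ (N : ℕ) (u : Fin N → Fin (n + 1) → H), SRep k n h N u ∧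
    ∀ {X : Type} [AddCommGroup X] (T : (Fin (n + 1) → H) → X),
      ∑ i, T (u i) = sweedlerSum k n T h
  | 0, h => ⟨1, fun _ _ ↦ h, sRep_zero h, fun T ↦ Fin.sum_univ_one _⟩
  | n + 1, h => by
    choose N u hu hT using fun i ↦ exists_sRep n ((ℛ k h).right i)
    let e := Fintype.equivFin (Σ i : (ℛ k h).index, Fin (N i))
    have key : ∀ {Y : Type} [AddCommGroup Y] (T : (Fin (n + 2) → H) → Y),
        ∑ i, T (Fin.cons ((ℛ k h).left (e.symm i).1) (u _ (e.symm i).2)) =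
          ∑ i ∈ (ℛ k h).index, ∑ j, T (Fin.cons ((ℛ k h).left i) (u i j)) := fun {Y} _ T ↦ by
      rw [e.symm.sum_comp fun p ↦ T (Fin.cons ((ℛ k h).left p.1) (u _ p.2)),
        Fintype.sum_sigma]
      exact Finset.sum_coe_sort (ℛ k h).index
        fun i ↦ ∑ j, T (Fin.cons ((ℛ k h).left i) (u i j))
    refine ⟨_, fun i ↦ Fin.cons ((ℛ k h).left (e.symm i).1) (u _ (e.symm i).2), ?_, fun T ↦ ?_⟩
    · rw [SRep, key, itComul_succ, ← (ℛ k h).eq, map_sum, map_sum]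
      refine Finset.sum_congr rfl fun i _ ↦ ?_
      rw [LinearMap.lTensor_tmul, hu, TensorProduct.tmul_sum, map_sum]
      rfl
    · rw [key]
      exact Finset.sum_congr rfl fun i _ ↦ hT i fun v ↦ T (Fin.cons ((ℛ k h).left i) v)

lemma sRep_apply_one {H : Type} [Ring H] [HopfAlgebra k H] :
    ∀ n : ℕ, SRep k n (1 : H) 1 fun _ _ ↦ 1
  | 0 => sRep_zero 1
  | n + 1 => by
    rw [SRep, itComul_succ, Bialgebra.comul_one, Algebra.TensorProduct.one_def,
      LinearMap.lTensor_tmul, sRep_apply_one n]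
    simp only [Fin.sum_univ_one]
    rfl

end Sweedler

section Convolution

open Coalgebra HopfAlgebra

/-- The convolution algebra of linear maps from a coalgebra `C` to an algebra `R`. -/
abbrev Conv (k C R : Type) [CommRing k] [AddCommGroup C] [Module k C] [Ring R] [Algebra k R] :
    Type :=
  WithConv (C →ₗ[k] R)

namespace Conv

variable {k : Type} [CommRing k] {C : Type} [AddCommGroup C] [Module k C] [Coalgebra k C]
  {D : Type} [AddCommGroup D] [Module k D] [Coalgebra k D] {R : Type} [Ring R] [Algebra k R]
  {R' : Type} [Ring R'] [Algebra k R']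

/-- Postcomposition with an algebra homomorphism. -/
def map (φ : R →ₐ[k] R') : Conv k C R →* Conv k C R' where
  toFun u := .toConv (φ.toLinearMap ∘ₗ u.ofConv)
  map_one' := by ext; simp
  map_mul' u v := WithConv.ext (LinearMap.algHom_comp_convMul_distrib φ u v)

@[simp]
lemma map_apply (φ : R →ₐ[k] R') (u : Conv k C R) (c : C) : map φ u c = φ (u c) := rfl

/-- Precomposition with a coalgebra homomorphism. -/
def comap (ψ : C →ₗc[k] D) : Conv k D R →* Conv k C R where
  toFun u := .toConv (u.ofConv ∘ₗ ψ.toLinearMap)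
  map_one' := by ext; simp
  map_mul' u v := WithConv.ext (LinearMap.convMul_comp_coalgHom_distrib u v ψ)

@[simp]
lemma comap_apply (ψ : C →ₗc[k] D) (u : Conv k D R) (c : C) : comap ψ u c = u (ψ c) := rfl

variable (k C) in
/-- The map `c ↦ ε(c) x`. -/
def const (x : R) : Conv k C R := .toConv ((counit (R := k) (A := C)).smulRight x)

@[simp]
lemma const_mul_apply (x : R) (u : Conv k C R) (c : C) : (const k C x * u) c = x * u c := by
  rw [(ℛ k c).convMul_apply]
  simp only [const, LinearMap.smulRight_apply, smul_mul_assoc, ← mul_smul_comm, ← map_smul]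
  rw [← Finset.mul_sum, ← map_sum, sum_counit_smul]

lemma sum_counit_smul_left (c : C) :
    ∑ i ∈ (ℛ k c).index, counit (R := k) ((ℛ k c).right i) • (ℛ k c).left i = c := by
  simpa only [map_sum, TensorProduct.rid_tmul, one_smul] using
    congr(TensorProduct.rid k C $(sum_tmul_counit_eq (ℛ k c)))

@[simp]
lemma mul_const_apply (x : R) (u : Conv k C R) (c : C) : (u * const k C x) c = u c * x := by
  rw [(ℛ k c).convMul_apply]
  simp only [const, LinearMap.smulRight_apply, mul_smul_comm, ← smul_mul_assoc, ← map_smul]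
  rw [← Finset.sum_mul, ← map_sum, sum_counit_smul_left]

variable (k C D) in
/-- The coalgebra projection `C ⊗ D → C`. -/
def fst : C ⊗[k] D →ₗc[k] C :=
  (Coalgebra.TensorProduct.rid k k C).toCoalgHom.comp
    (Coalgebra.TensorProduct.map (.id k C) (counitCoalgHom k D))

variable (k C D) in
/-- The coalgebra projection `C ⊗ D → D`. -/
def snd : C ⊗[k] D →ₗc[k] D :=
  (Coalgebra.TensorProduct.lid k D).toCoalgHom.comp
    (Coalgebra.TensorProduct.map (counitCoalgHom k C) (.id k D))

@[simp]
lemma fst_tmul (c : C) (d : D) : fst k C D (c ⊗ₜ d) = counit (R := k) d • c := rfl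

@[simp]
lemma snd_tmul (c : C) (d : D) : snd k C D (c ⊗ₜ d) = counit (R := k) c • d := rfl

lemma comap_fst_mul_comap_snd (u : Conv k C R) (v : Conv k D R) (c : C) (d : D) :
    (comap (fst k C D) u * comap (snd k C D) v) (c ⊗ₜ d) = u c * v d := by
  rw [LinearMap.convMul_apply, comul_tmul, ← (ℛ k c).eq, ← (ℛ k d).eq, TensorProduct.sum_tmul]
  conv_rhs => rw [← sum_counit_smul_left (k := k) c, ← sum_counit_smul (ℛ k d)]
  simp [TensorProduct.tmul_sum, Finset.sum_mul_sum, smul_comm (counit (R := k) (_ : C))]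

lemma comap_snd_mul_comap_fst (u : Conv k C R) (v : Conv k D R) (c : C) (d : D) :
    (comap (snd k C D) v * comap (fst k C D) u) (c ⊗ₜ d) = v d * u c := by
  rw [LinearMap.convMul_apply, comul_tmul, ← (ℛ k c).eq, ← (ℛ k d).eq]
  conv_rhs => rw [← sum_counit_smul_left (k := k) d, ← sum_counit_smul (ℛ k c)]
  simp [TensorProduct.sum_tmul, TensorProduct.tmul_sum, Finset.sum_mul_sum,
    smul_comm (counit (R := k) (_ : C))]

variable (k R) in
/-- Right multiplication as an algebra homomorphism. -/
def mulRightHom : R →ₐ[k] (Module.End k R)ᵐᵒᵖ := AlgHom.opComm.symm (Algebra.lsmul k k R)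

lemma mulRightHom_apply (x y : R) : (mulRightHom k R x).unop y = y * x := rfl

lemma mulRightHom_injective : Function.Injective (mulRightHom k R) := fun x y hxy ↦ by
  simpa [mulRightHom_apply] using congr(($hxy).unop 1)

lemma map_injective {φ : R →ₐ[k] R'} (hφ : Function.Injective φ) :
    Function.Injective (map (C := C) φ) := fun u v huv ↦ by
  ext c
  exact hφ congr($huv c)

lemma isUnit_of_isUnit_map_mulRightHom {u : Conv k C R} (hu : IsUnit (map (mulRightHom k R) u)) :
    IsUnit u := by
  obtain ⟨U, hU⟩ := hu
  let v : Conv k C R := .toConv (LinearMap.applyₗ (1 : R) ∘ₗ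
    (MulOpposite.opLinearEquiv k).symm.toLinearMap ∘ₗ U⁻¹.1.ofConv)
  -- The values of `U⁻¹` are right multiplications, since they commute with left multiplications.
  have hv : map (mulRightHom k R) v = U⁻¹.1 := by
    ext c
    refine MulOpposite.unop_injective (LinearMap.ext fun x ↦ ?_)
    have hcomm : Commute (const k C (.op (LinearMap.mulLeft k x))) U.1 := by
      ext c
      rw [const_mul_apply, mul_const_apply, hU]
      exact MulOpposite.unop_injective (LinearMap.ext fun y ↦ mul_assoc x y (u c))
    have := congr(($(hcomm.units_inv_right.eq) c).unop 1)
    rw [const_mul_apply, mul_const_apply, MulOpposite.unop_mul, MulOpposite.unop_mul] at this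
    simpa [mulRightHom_apply, v] using this.symm
  have hinj := map_injective (C := C) (mulRightHom_injective (k := k) (R := R))
  exact ⟨⟨u, v, hinj (by rw [map_mul, ← hU, hv, Units.mul_inv, map_one]),
    hinj (by rw [map_mul, ← hU, hv, Units.inv_mul, map_one])⟩, rfl⟩

variable (k) in
/-- The identity of a Hopf algebra as a unit, with inverse the antipode. -/
def idUnit (H : Type) [Ring H] [HopfAlgebra k H] : (Conv k H H)ˣ :=
  ⟨.toConv .id, .toConv (antipode k), LinearMap.id_mul_antipode, LinearMap.antipode_mul_id⟩

end Conv

lemma comul_antipode {k : Type} [CommRing k] {H : Type} [Ring H] [HopfAlgebra k H] (h : H) :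
    comul (antipode k h) = ∑ i ∈ (ℛ k h).index,
      antipode k ((ℛ k h).right i) ⊗ₜ[k] antipode k ((ℛ k h).left i) := by
  let incl₁ : H →ₐ[k] H ⊗[k] H := Algebra.TensorProduct.includeLeft
  let incl₂ : H →ₐ[k] H ⊗[k] H := Algebra.TensorProduct.includeRight
  let comulUnit : (Conv k H (H ⊗[k] H))ˣ :=
    Units.map (Conv.map incl₁) (Conv.idUnit k H) * Units.map (Conv.map incl₂) (Conv.idUnit k H)
  have hcomul : comulUnit.1 = .toConv comul := by
    ext h
    simp [comulUnit, Conv.idUnit, incl₁, incl₂, (ℛ k h).convMul_apply, (ℛ k h).eq]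
  have hinv : WithConv.toConv (comul ∘ₗ antipode k) = comulUnit⁻¹.1 := by
    rw [← mul_one (comulUnit⁻¹.1), ← LinearMap.comul_right_inv, ← hcomul, Units.inv_mul_cancel_left]
  calc
    comul (antipode k h) = comulUnit⁻¹.1 h := congr($hinv h)
    _ = _ := by
      simp [comulUnit, Conv.idUnit, incl₁, incl₂, (ℛ k h).convMul_apply]

end Convolution

/-! ### The crossed product -/

section ConvInverse

open Coalgebra

variable {k A H : Type} [CommRing k] [Ring A] [Algebra k A] [Ring H] [HopfAlgebra k H]
  {f g : H →ₗ[k] H →ₗ[k] A}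

/-- A bilinear map `g : H × H → A` as the element `l ↦ g(-, l)` of an iterated convolution
algebra. -/
def curryFlip (g : H →ₗ[k] H →ₗ[k] A) : Conv k H (Conv k H A) :=
  .toConv ((WithConv.linearEquiv k _).symm.toLinearMap ∘ₗ g.flip)

lemma IsConvInverse.symm (hfg : IsConvInverse f g) : IsConvInverse g f :=
  fun h l N M u v hu hv ↦ And.symm (hfg h l N M u v hu hv)

lemma IsConvInverse.curryFlip_mul_curryFlip (hfg : IsConvInverse f g) :
    curryFlip f * curryFlip g = 1 := by
  ext l h
  obtain ⟨N, u, hu, hsum_u⟩ := exists_sRep k 1 h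
  obtain ⟨M, v, hv, hsum_v⟩ := exists_sRep k 1 l
  have inner (x y : H) : ∑ i ∈ (ℛ k h).index, f ((ℛ k h).left i) x * g ((ℛ k h).right i) y =
      ∑ i, f (u i 0) x * g (u i 1) y := (hsum_u fun z ↦ f (z 0) x * g (z 1) y).symm
  calc
    (curryFlip f * curryFlip g) l h
    _ = ∑ j ∈ (ℛ k l).index, ∑ i,
          f (u i 0) ((ℛ k l).left j) * g (u i 1) ((ℛ k l).right j) := by
      rw [(ℛ k l).convMul_apply]
      simp [curryFlip, (ℛ k h).convMul_apply, inner]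
    _ = ∑ j, ∑ i, f (u i 0) (v j 0) * g (u i 1) (v j 1) :=
      (hsum_v fun y ↦ ∑ i, f (u i 0) (y 0) * g (u i 1) (y 1)).symm
    _ = (counit h * counit l) • (1 : A) := by
      rw [Finset.sum_comm, (hfg h l N M u v hu hv).1]
    _ = (1 : Conv k H (Conv k H A)) l h := by
      rw [mul_comm]
      simp [Algebra.algebraMap_eq_smul_one, mul_smul]

/-- The unit of an iterated convolution algebra defined by a convolution invertible map. -/
def IsConvInverse.unit (hfg : IsConvInverse f g) : (Conv k H (Conv k H A))ˣ :=
  ⟨curryFlip f, curryFlip g, hfg.curryFlip_mul_curryFlip, hfg.symm.curryFlip_mul_curryFlip⟩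

end ConvInverse

namespace CrossedProduct

open Coalgebra HopfAlgebra MulOpposite

variable {k A H E : Type} [CommRing k] [Ring A] [Algebra k A] [Ring H] [HopfAlgebra k H]
  [Ring E] [Algebra k E] (S : CrossedProduct k A H E)

lemma ι_tmul_mul_ι_tmul (a b : A) (h l : H) {M : ℕ} {v : Fin M → Fin 2 → H}
    (hv : SRep k 1 l M v) :
    S.ι (a ⊗ₜ h) * S.ι (b ⊗ₜ l) =
      ∑ j, ∑ i ∈ (ℛ k h).index, ∑ i' ∈ (ℛ k ((ℛ k h).right i)).index,
        S.ι ((a * S.act ((ℛ k h).left i) b *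
            S.f ((ℛ k ((ℛ k h).right i)).left i') (v j 0)) ⊗ₜ
          ((ℛ k ((ℛ k h).right i)).right i' * v j 1)) := by
  obtain ⟨N, u, hu, hsum⟩ := exists_sRep k 2 h
  rw [S.ι_mul a b h l N M u v hu hv, Finset.sum_comm]
  exact Finset.sum_congr rfl fun j _ ↦ hsum fun x ↦
    S.ι ((a * S.act (x 0) b * S.f (x 1) (v j 0)) ⊗ₜ (x 2 * v j 1))

@[simp]
lemma ι_tmul_one (a : A) : S.ι (a ⊗ₜ 1) = S.aE a := rfl

@[simp]
lemma ι_one_tmul (h : H) : S.ι (1 ⊗ₜ h) = S.hE h := rfl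

lemma ι_tmul_mul_aE (a b : A) (h : H) :
    S.ι (a ⊗ₜ h) * S.aE b =
      ∑ i ∈ (ℛ k h).index, S.ι ((a * S.act ((ℛ k h).left i) b) ⊗ₜ (ℛ k h).right i) := by
  rw [← ι_tmul_one, S.ι_tmul_mul_ι_tmul a b h 1 (sRep_apply_one 1), Fin.sum_univ_one]
  refine Finset.sum_congr rfl fun i _ ↦ ?_
  conv_rhs => rw [← sum_counit_smul (ℛ k ((ℛ k h).right i)), TensorProduct.tmul_sum, map_sum]
  simp [(S.f_normal _).1, ← TensorProduct.smul_tmul']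

lemma aE_mul_ι_tmul (a b : A) (l : H) : S.aE a * S.ι (b ⊗ₜ l) = S.ι ((a * b) ⊗ₜ l) := by
  obtain ⟨N, u, hu, hsum⟩ := exists_sRep k 1 l
  rw [← ι_tmul_one, S.ι_mul a b 1 l 1 N _ u (sRep_apply_one 2) hu, Finset.sum_comm,
    hsum fun x ↦ ∑ _j : Fin 1, S.ι ((a * S.act 1 b * S.f 1 (x 0)) ⊗ₜ (1 * x 1))]
  conv_rhs => rw [← sum_counit_smul (ℛ k l), TensorProduct.tmul_sum, map_sum]
  simp [sweedlerSum, (S.f_normal _).2, S.one_act, ← TensorProduct.smul_tmul']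

lemma aE_mul_hE (a : A) (h : H) : S.aE a * S.hE h = S.ι (a ⊗ₜ h) := by
  rw [← ι_one_tmul, aE_mul_ι_tmul, mul_one]

lemma hom_ext {X : Type} [AddCommGroup X] [Module k X] {φ ψ : E →ₗ[k] X}
    (h : ∀ a h, φ (S.ι (a ⊗ₜ h)) = ψ (S.ι (a ⊗ₜ h))) : φ = ψ := by
  refine LinearMap.ext fun e ↦ ?_
  obtain ⟨t, rfl⟩ := S.ι.surjective e
  exact LinearMap.congr_fun (f := φ ∘ₗ S.ι.toLinearMap) (g := ψ ∘ₗ S.ι.toLinearMap)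
    (TensorProduct.ext' h) t

lemma hE_mul_aE (h : H) (a : A) :
    S.hE h * S.aE a =
      ∑ i ∈ (ℛ k h).index, S.aE (S.act ((ℛ k h).left i) a) * S.hE ((ℛ k h).right i) := by
  simp only [← ι_one_tmul, ι_tmul_mul_aE, aE_mul_ι_tmul, one_mul, mul_one]

/-- The operator `a # h ↦ ∑ a c(h⁽¹⁾) # h⁽²⁾` on `E`. -/
def twist : (H →ₗ[k] A) →ₗ[k] Module.End k E where
  toFun c := S.ι.conj ((LinearMap.mul' k A).rTensor H ∘ₗ
    (TensorProduct.assoc k A A H).symm.toLinearMap ∘ₗ (c.rTensor H ∘ₗ comul).lTensor A)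
  map_add' c c' := by
    simp [LinearMap.rTensor_add, LinearMap.add_comp, LinearMap.lTensor_add, LinearMap.comp_add]
  map_smul' x c := by
    simp [LinearMap.rTensor_smul, LinearMap.smul_comp, LinearMap.lTensor_smul,
      LinearMap.comp_smul]

lemma twist_apply (c : H →ₗ[k] A) (a : A) (h : H) :
    S.twist c (S.ι (a ⊗ₜ h)) =
      ∑ i ∈ (ℛ k h).index, S.ι ((a * c ((ℛ k h).left i)) ⊗ₜ (ℛ k h).right i) := by
  simp [twist, LinearEquiv.conj_apply, ← (ℛ k h).eq, TensorProduct.tmul_sum]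

/-- The operator `a # h ↦ a # h g` on `E`. -/
def shift : H →ₗ[k] Module.End k E :=
  S.ι.conj.toLinearMap ∘ₗ LinearMap.lTensorHom A ∘ₗ (LinearMap.mul k H).flip

@[simp]
lemma shift_apply (g : H) (a : A) (h : H) :
    S.shift g (S.ι (a ⊗ₜ h)) = S.ι (a ⊗ₜ (h * g)) := by
  simp [shift, LinearEquiv.conj_apply]

lemma shift_apply_one (g : H) : S.shift g 1 = S.hE g := by
  rw [← S.ι_one, shift_apply, one_mul, ι_one_tmul]

lemma twist_apply_hE_antipode (c : H →ₗ[k] A) (h : H) :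
    S.twist c (S.hE (antipode k h)) = ∑ i ∈ (ℛ k h).index,
      S.ι (c (antipode k ((ℛ k h).right i)) ⊗ₜ antipode k ((ℛ k h).left i)) := by
  simp [twist, LinearEquiv.conj_apply, ← ι_one_tmul, comul_antipode, TensorProduct.tmul_sum]

lemma mul_hE (e : E) (l : H) :
    e * S.hE l = ∑ j ∈ (ℛ k l).index,
      S.shift ((ℛ k l).right j) (S.twist (S.f.flip ((ℛ k l).left j)) e) := by
  suffices LinearMap.mulRight k (S.hE l) = ∑ j ∈ (ℛ k l).index,
      S.shift ((ℛ k l).right j) ∘ₗ S.twist (S.f.flip ((ℛ k l).left j)) by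
    simpa using congr($this e)
  obtain ⟨M, v, hv, hsum⟩ := exists_sRep k 1 l
  refine S.hom_ext fun a h ↦ ?_
  calc
    S.ι (a ⊗ₜ h) * S.hE l
    _ = ∑ j, ∑ i ∈ (ℛ k h).index, counit (R := k) ((ℛ k h).left i) •
          S.shift (v j 1) (S.twist (S.f.flip (v j 0)) (S.ι (a ⊗ₜ (ℛ k h).right i))) := by
      rw [← ι_one_tmul, S.ι_tmul_mul_ι_tmul a 1 h l hv]
      refine Finset.sum_congr rfl fun j _ ↦ Finset.sum_congr rfl fun i _ ↦ ?_
      simp [twist_apply, S.act_one, ← TensorProduct.smul_tmul', Finset.smul_sum]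
    _ = ∑ j, S.shift (v j 1) (S.twist (S.f.flip (v j 0)) (S.ι (a ⊗ₜ h))) := by
      simp only [← map_smul, ← map_sum, ← TensorProduct.tmul_smul, ← TensorProduct.tmul_sum,
        sum_counit_smul]
    _ = _ := by
      rw [hsum fun x ↦ S.shift (x 1) (S.twist (S.f.flip (x 0)) (S.ι (a ⊗ₜ h)))]
      simp [sweedlerSum]

/-- The algebra homomorphism `A → E`, `a ↦ a # 1`. -/
def aEHom : A →ₐ[k] E := .ofLinearMap S.aE S.ι_one fun a b ↦ (S.aE_mul_ι_tmul a b 1).symm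

/-- The operators `twist c`, composed in the opposite order, as an algebra homomorphism. -/
def twistHom : Conv k H A →ₐ[k] (Module.End k E)ᵐᵒᵖ :=
  .ofLinearMap ((opLinearEquiv k).toLinearMap ∘ₗ S.twist ∘ₗ
      (WithConv.linearEquiv k _).toLinearMap)
    (by
      refine unop_injective (S.hom_ext fun a h ↦ ?_)
      conv_rhs => rw [← sum_counit_smul (ℛ k h)]
      simp [twist_apply, TensorProduct.tmul_sum, Algebra.algebraMap_eq_smul_one,
        ← TensorProduct.smul_tmul'])
    fun c c' ↦ by
      refine unop_injective (S.hom_ext fun a h ↦ ?_)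
      have coassoc := sum_coassoc (S.ι.toLinearMap ∘ₗ (LinearMap.mul' k A ∘ₗ
        TensorProduct.map (LinearMap.mulLeft k a ∘ₗ c.ofConv) c'.ofConv).rTensor H ∘ₗ
          (TensorProduct.assoc k H H H).symm.toLinearMap) h
      simp only [LinearMap.comp_apply, LinearEquiv.coe_coe, TensorProduct.assoc_symm_tmul,
        LinearMap.rTensor_tmul, TensorProduct.map_tmul, LinearMap.mul'_apply,
        LinearMap.mulLeft_apply] at coassoc
      simpa [twist_apply, (ℛ k ((ℛ k h).left _)).convMul_apply, Finset.mul_sum,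
        TensorProduct.sum_tmul, ← mul_assoc] using coassoc

/-- The operators `shift h`, composed in the opposite order, as an algebra homomorphism. -/
def shiftHom : H →ₐ[k] (Module.End k E)ᵐᵒᵖ :=
  .ofLinearMap ((opLinearEquiv k).toLinearMap ∘ₗ S.shift)
    (unop_injective (S.hom_ext fun a h ↦ by simp))
    fun g g' ↦ unop_injective (S.hom_ext fun a h ↦ by simp [mul_assoc])

/-- The canonical map `H → E` as an element of the convolution algebra. -/
def γ : Conv k H E := .toConv S.hE

lemma map_mulRightHom_γ :
    Conv.map (Conv.mulRightHom k E) S.γ =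
      Conv.map S.twistHom (curryFlip S.f) * Conv.map S.shiftHom (Conv.idUnit k H).1 := by
  ext l
  refine unop_injective (LinearMap.ext fun e ↦ ?_)
  rw [(ℛ k l).convMul_apply]
  simpa [twistHom, shiftHom, curryFlip, γ, Conv.mulRightHom_apply, Conv.idUnit]
    using S.mul_hE e l

/-- The convolution inverse of `γ`, with junk value `0` if `γ` is not invertible. -/
def γInv : Conv k H E := Ring.inverse S.γ

variable {S} {finv : H →ₗ[k] H →ₗ[k] A}

lemma isUnit_γ (hfinv : IsConvInverse S.f finv) : IsUnit S.γ :=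
  Conv.isUnit_of_isUnit_map_mulRightHom <| by
    rw [map_mulRightHom_γ]
    exact (hfinv.unit.isUnit.map _).mul ((Conv.idUnit k H).isUnit.map _)

lemma γ_mul_γInv (hγ : IsUnit S.γ) : S.γ * S.γInv = 1 := Ring.mul_inverse_cancel _ hγ

lemma γInv_mul_γ (hγ : IsUnit S.γ) : S.γInv * S.γ = 1 := Ring.inverse_mul_cancel _ hγ

lemma map_mulRightHom_γInv (hfinv : IsConvInverse S.f finv) :
    Conv.map (Conv.mulRightHom k E) S.γInv =
      Conv.map S.shiftHom (Conv.idUnit k H)⁻¹.1 * Conv.map S.twistHom (curryFlip finv) := by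
  let U := Units.map (Conv.map S.twistHom) hfinv.unit *
    Units.map (Conv.map S.shiftHom) (Conv.idUnit k H)
  have hU : Conv.map (Conv.mulRightHom k E) S.γ = U.1 := S.map_mulRightHom_γ
  refine left_inv_eq_right_inv (a := U.1) ?_ U.mul_inv
  rw [← hU, ← map_mul, γInv_mul_γ (isUnit_γ hfinv), map_one]

variable (S finv) in
/-- The map `x ⊗ y ⊗ z ↦ finv(S(y), z) # S(x)`. -/
def ginvHom : H ⊗[k] (H ⊗[k] H) →ₗ[k] E :=
  S.ι.toLinearMap ∘ₗ (TensorProduct.comm k H A).toLinearMap ∘ₗ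
    TensorProduct.map (antipode k) (TensorProduct.lift (finv ∘ₗ antipode k))

lemma ginvHom_tmul (x y z : H) : S.ginvHom finv (x ⊗ₜ (y ⊗ₜ z)) = ginv S finv x y z := rfl

lemma γInv_apply (hfinv : IsConvInverse S.f finv) (h : H) :
    S.γInv h = S.ginvHom finv ((comul (R := k)).lTensor H (comul h)) := by
  have key := congr(($(map_mulRightHom_γInv hfinv) h).unop 1)
  rw [(ℛ k h).convMul_apply] at key
  have coassoc := sum_coassoc (S.ginvHom finv) h
  simp only [← map_sum, ← TensorProduct.tmul_sum, (ℛ k ((ℛ k h).right _)).eq,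
    ← LinearMap.lTensor_tmul, (ℛ k h).eq] at coassoc
  rw [← coassoc]
  simpa [twistHom, shiftHom, curryFlip, Conv.mulRightHom_apply, Conv.idUnit, shift_apply_one,
    twist_apply_hE_antipode, ginvHom_tmul, ginv] using key

lemma sum_ginv (hfinv : IsConvInverse S.f finv) {X : Type} [AddCommGroup X] [Module k X]
    {n N : ℕ} {h : H} {u : Fin N → Fin (n + 4) → H} (hu : SRep k (n + 3) h N u)
    (K : E →ₗ[k] Tpow k H (n + 1) →ₗ[k] X) :
    ∑ i, K (ginv S finv (u i 0) (u i 1) (u i 2)) (tp k fun j ↦ u i j.succ.succ.succ) =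
      ∑ i ∈ (ℛ k h).index, K (S.γInv ((ℛ k h).left i)) (itComul k n ((ℛ k h).right i)) := by
  let assoc₁ := TensorProduct.assoc k H H (Tpow k H (n + 1))
  let assoc₂ := TensorProduct.assoc k H (H ⊗[k] H) (Tpow k H (n + 1))
  let T := TensorProduct.lift (K ∘ₗ S.ginvHom finv) ∘ₗ assoc₂.symm.toLinearMap ∘ₗ
    assoc₁.symm.toLinearMap.lTensor H
  have hcomul₁ : ((itComul k n).lTensor H ∘ₗ comul).lTensor H ∘ₗ comul =
      assoc₁.toLinearMap ∘ₗ TensorProduct.map comul (itComul k n) ∘ₗ comul :=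
    (lTensor_map_comul_comul LinearMap.id (itComul k n)).trans
      (by rw [LinearMap.lTensor_id, LinearMap.id_comp])
  have hcomul₂ : (TensorProduct.map comul (itComul k n) ∘ₗ comul).lTensor H (comul h) =
      assoc₂ (TensorProduct.map (comul.lTensor H ∘ₗ comul) (itComul k n) (comul h)) :=
    congr($(lTensor_map_comul_comul comul (itComul k n)) h)
  calc
    ∑ i, K (ginv S finv (u i 0) (u i 1) (u i 2)) (tp k fun j ↦ u i j.succ.succ.succ)
    _ = T (itComul k (n + 3) h) :=
      (map_sum T (fun i ↦ tp k (u i)) _).symm.trans (congrArg T hu.symm)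
    _ = T ((((itComul k n).lTensor H ∘ₗ comul).lTensor H ∘ₗ comul).lTensor H (comul h)) := rfl
    _ = TensorProduct.lift (K ∘ₗ S.ginvHom finv)
          (TensorProduct.map (comul.lTensor H ∘ₗ comul) (itComul k n) (comul h)) := by
      rw [hcomul₁, LinearMap.lTensor_comp_apply, hcomul₂]
      simp only [T, LinearMap.comp_apply, LinearEquiv.coe_coe, ← LinearMap.lTensor_comp_apply,
        LinearEquiv.symm_comp, LinearMap.lTensor_id, LinearMap.id_apply,
        LinearEquiv.symm_apply_apply]
    _ = _ := by
      rw [← (ℛ k h).eq]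
      simp [γInv_apply hfinv]

end CrossedProduct

/-! ### The Hopf algebra action on the coinvariants of a bimodule -/

section Coinvariants

open Coalgebra MulOpposite

variable {k : Type} [CommRing k] {C : Type} [AddCommGroup C] [Module k C]
  {A H E : Type} [Ring A] [Algebra k A] [Ring H] [HopfAlgebra k H] [Ring E] [Algebra k E]
  {N N' : Type} [AddCommGroup N] [Module k N] [AddCommGroup N'] [Module k N']

lemma Conv.unop_mul_apply [Coalgebra k C] (u v : Conv k C (Module.End k N)ᵐᵒᵖ) (c : C) (n : N) :
    ((u * v) c).unop n = ∑ i ∈ (ℛ k c).index,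
      (v ((ℛ k c).right i)).unop ((u ((ℛ k c).left i)).unop n) := by
  simp [(ℛ k c).convMul_apply]

/-- The right action of a bimodule as an algebra homomorphism. -/
def Bimod.rHom (Bi : Bimod k E N) : E →ₐ[k] (Module.End k N)ᵐᵒᵖ :=
  .ofLinearMap ((opLinearEquiv k).toLinearMap ∘ₗ Bi.r) (congrArg op Bi.r_one)
    fun x y ↦ congrArg op (Bi.r_mul x y)

/-- The operator-valued function `c ↦ (n ↦ u(c) n)` attached to `u : C → E`, in the convolution
algebra where the right action lives. -/
def Bimod.lConv (Bi : Bimod k E N) (u : Conv k C E) : Conv k C (Module.End k N)ᵐᵒᵖ :=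
  .toConv ((opLinearEquiv k).toLinearMap ∘ₗ Bi.l ∘ₗ u.ofConv)

@[simp]
lemma Bimod.rHom_apply (Bi : Bimod k E N) (x : E) : Bi.rHom x = op (Bi.r x) := rfl

@[simp]
lemma Bimod.lConv_apply (Bi : Bimod k E N) (u : Conv k C E) (c : C) :
    Bi.lConv u c = op (Bi.l (u c)) := rfl

lemma Conv.map_comap {D : Type} [AddCommGroup D] [Module k D] [Coalgebra k C] [Coalgebra k D]
    {R R' : Type} [Ring R] [Algebra k R] [Ring R'] [Algebra k R'] (φ : R →ₐ[k] R')
    (ψ : C →ₗc[k] D) (u : Conv k D R) :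
    Conv.map φ (Conv.comap ψ u) = Conv.comap ψ (Conv.map φ u) := rfl

namespace CrossedProduct

variable (S : CrossedProduct k A H E) (Bi : Bimod k E N) (Bi' : Bimod k E N')

/-- The quotient `N / [A, N]`. -/
abbrev Coinv : Type := N ⧸ commSub S Bi

/-- The projection `N → N / [A, N]`. -/
abbrev toCoinv : N →ₗ[k] S.Coinv Bi := (commSub S Bi).mkQ

lemma toCoinv_l_aE (a : A) (n : N) :
    S.toCoinv Bi (Bi.l (S.aE a) n) = S.toCoinv Bi (Bi.r (S.aE a) n) :=
  (Submodule.Quotient.eq _).mpr (Submodule.subset_span ⟨a, n, rfl⟩)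

lemma ker_toCoinv_le {X : Type} [AddCommGroup X] [Module k X] {φ : N →ₗ[k] X}
    (h : ∀ a n, φ (Bi.l (S.aE a) n) = φ (Bi.r (S.aE a) n)) :
    commSub S Bi ≤ LinearMap.ker φ :=
  Submodule.span_le.mpr fun _ ⟨a, n, hz⟩ ↦ hz ▸ LinearMap.sub_mem_ker_iff.mpr (h a n)

/-- Operator-valued functions which agree modulo `[A, N]`. -/
def CoinvEq (u v : Conv k C (Module.End k N)ᵐᵒᵖ) : Prop :=
  ∀ c n, S.toCoinv Bi ((u c).unop n) = S.toCoinv Bi ((v c).unop n)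

variable {S Bi Bi'}

lemma CoinvEq.mul_left [Coalgebra k C] {u v : Conv k C (Module.End k N)ᵐᵒᵖ} (h : S.CoinvEq Bi u v)
    (w : Conv k C (Module.End k N)ᵐᵒᵖ) : S.CoinvEq Bi (w * u) (w * v) := fun c n ↦ by
  simp only [Conv.unop_mul_apply, map_sum]
  exact Finset.sum_congr rfl fun i _ ↦ h _ _

variable (S Bi) in
lemma coinvEq_rHom_aEHom_mul_lConv [Coalgebra k C] (c : Conv k C A) (u : Conv k C E) :
    S.CoinvEq Bi (Conv.map Bi.rHom (Conv.map S.aEHom c) * Bi.lConv u)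
      (Bi.lConv (Conv.map S.aEHom c * u)) := fun x n ↦ by
  rw [Conv.unop_mul_apply, Bimod.lConv_apply, (ℛ k x).convMul_apply]
  simp only [unop_op, map_sum, LinearMap.sum_apply, Bi.l_mul_apply, Conv.map_apply,
    Bimod.rHom_apply, Bimod.lConv_apply, Bi.l_r_apply]
  exact Finset.sum_congr rfl fun i _ ↦ (S.toCoinv_l_aE Bi _ _).symm

variable (S Bi) in
/-- The conjugation `n ↦ ∑ γ(h⁽²⁾) n γ⁻¹(h⁽¹⁾)`, as an operator-valued function of `h`. -/
def conj : Conv k H (Module.End k N)ᵐᵒᵖ := Conv.map Bi.rHom S.γInv * Bi.lConv S.γ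

lemma conj_apply (h : H) (n : N) :
    (S.conj Bi h).unop n = ∑ i ∈ (ℛ k h).index,
      Bi.l (S.γ ((ℛ k h).right i)) (Bi.r (S.γInv ((ℛ k h).left i)) n) := by
  simp only [conj, Conv.unop_mul_apply, Conv.map_apply, Bimod.rHom_apply, Bimod.lConv_apply,
    unop_op]

variable (S) in
lemma γ_mul_aE (h : H) (a : A) : S.γ h * S.aE a = ∑ i ∈ (ℛ k h).index,
    S.aE (S.act ((ℛ k h).left i) a) * S.γ ((ℛ k h).right i) :=
  S.hE_mul_aE h a

variable (S) in
lemma γ_mul_const_aE (a : A) :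
    S.γ * Conv.const k H (S.aE a) = Conv.map S.aEHom (.toConv (S.act.flip a)) * S.γ := by
  ext h
  rw [Conv.mul_const_apply, (ℛ k h).convMul_apply]
  exact S.γ_mul_aE h a

lemma γInv_mul_map_aEHom (hγ : IsUnit S.γ) (a : A) :
    S.γInv * Conv.map S.aEHom (.toConv (S.act.flip a)) = Conv.const k H (S.aE a) * S.γInv := by
  rw [← mul_one (S.γInv * _), ← γ_mul_γInv hγ, mul_assoc S.γInv, ← mul_assoc _ S.γ,
    ← γ_mul_const_aE, ← mul_assoc, ← mul_assoc, γInv_mul_γ hγ, one_mul]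

lemma sum_γInv_mul_aE_tmul_γ (hγ : IsUnit S.γ) (h : H) (a : A) :
    ∑ i ∈ (ℛ k h).index, ∑ j ∈ (ℛ k ((ℛ k h).right i)).index,
        (S.γInv ((ℛ k h).left i) * S.aE (S.act ((ℛ k ((ℛ k h).right i)).left j) a)) ⊗ₜ[k]
          S.γ ((ℛ k ((ℛ k h).right i)).right j) =
      ∑ i ∈ (ℛ k h).index, (S.aE a * S.γInv ((ℛ k h).left i)) ⊗ₜ[k] S.γ ((ℛ k h).right i) := by
  let inl : E →ₐ[k] E ⊗[k] E := Algebra.TensorProduct.includeLeft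
  let inr : E →ₐ[k] E ⊗[k] E := Algebra.TensorProduct.includeRight
  let actA : Conv k H E := Conv.map S.aEHom (.toConv (S.act.flip a))
  have key : Conv.map inl S.γInv * (Conv.map inl actA * Conv.map inr S.γ) =
      Conv.map inl (Conv.const k H (S.aE a) * S.γInv) * Conv.map inr S.γ := by
    rw [← mul_assoc, ← map_mul, γInv_mul_map_aEHom hγ]
  have := congr($key h)
  simp only [(ℛ k h).convMul_apply, (ℛ k ((ℛ k h).right _)).convMul_apply, Finset.mul_sum,
    Conv.map_apply, Conv.const_mul_apply, inl, inr, Algebra.TensorProduct.includeLeft_apply,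
    Algebra.TensorProduct.includeRight_apply, Algebra.TensorProduct.tmul_mul_tmul, one_mul,
    mul_one] at this
  exact this

variable (Bi) in
lemma sum_γ_aE_γInv (hγ : IsUnit S.γ) {X : Type} [AddCommGroup X] [Module k X]
    (K : E →ₗ[k] N →ₗ[k] X) (h : H) (a : A) (n : N) :
    ∑ i ∈ (ℛ k h).index, ∑ j ∈ (ℛ k ((ℛ k h).right i)).index,
        K (S.γ ((ℛ k ((ℛ k h).right i)).right j))
          (Bi.r (S.aE (S.act ((ℛ k ((ℛ k h).right i)).left j) a))
            (Bi.r (S.γInv ((ℛ k h).left i)) n)) =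
      ∑ i ∈ (ℛ k h).index,
        K (S.γ ((ℛ k h).right i)) (Bi.r (S.γInv ((ℛ k h).left i)) (Bi.r (S.aE a) n)) := by
  have := congr(TensorProduct.lift (K.flip ∘ₗ Bi.r.flip n) $(sum_γInv_mul_aE_tmul_γ hγ h a))
  simpa only [map_sum, TensorProduct.lift.tmul, LinearMap.comp_apply, LinearMap.flip_apply,
    Bi.r_mul_apply] using this

variable (Bi) in
lemma l_γ_l_aE (g : H) (a : A) (n : N) : Bi.l (S.γ g) (Bi.l (S.aE a) n) =
    ∑ j ∈ (ℛ k g).index,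
      Bi.l (S.aE (S.act ((ℛ k g).left j) a)) (Bi.l (S.γ ((ℛ k g).right j)) n) := by
  simp only [← Bi.l_mul_apply, γ_mul_aE, map_sum, LinearMap.sum_apply]

lemma toCoinv_conj_aE (hγ : IsUnit S.γ) (h : H) (a : A) (n : N) :
    S.toCoinv Bi ((S.conj Bi h).unop (Bi.l (S.aE a) n)) =
      S.toCoinv Bi ((S.conj Bi h).unop (Bi.r (S.aE a) n)) := by
  have hr := sum_γ_aE_γInv Bi hγ (Bi.l.compr₂ (S.toCoinv Bi)) h a n
  simp only [LinearMap.compr₂_apply] at hr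
  simp only [conj_apply, map_sum, ← hr, ← Bi.l_r_apply, l_γ_l_aE, toCoinv_l_aE]

variable (S) in
/-- The convolution form of `γ(g) γ(h) = ∑ f(g⁽¹⁾, h⁽¹⁾) γ(g⁽²⁾ h⁽²⁾)`. -/
lemma comap_fst_γ_mul_comap_snd_γ :
    Conv.comap (Conv.fst k H H) S.γ * Conv.comap (Conv.snd k H H) S.γ =
      Conv.map S.aEHom (.toConv (TensorProduct.lift S.f)) *
        Conv.comap (Bialgebra.mulCoalgHom k H) S.γ := by
  refine WithConv.ext (TensorProduct.ext' fun g h ↦ ?_)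
  refine (Conv.comap_fst_mul_comap_snd S.γ S.γ g h).trans ((S.mul_hE (S.hE g) h).trans ?_)
  refine .trans ?_ (((ℛ k g).tmul (ℛ k h)).convMul_apply ..).symm
  rw [Coalgebra.Repr.tmul_index, Finset.sum_product_right]
  simp only [← ι_one_tmul, twist_apply, map_sum, shift_apply, one_mul]
  exact Finset.sum_congr rfl fun j _ ↦ Finset.sum_congr rfl fun i _ ↦ (S.aE_mul_hE _ _).symm

lemma map_rHom_γ_mul_conj (hγ : IsUnit S.γ) :
    Conv.map Bi.rHom S.γ * S.conj Bi = Bi.lConv S.γ := by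
  rw [conj, ← mul_assoc, ← map_mul, γ_mul_γInv hγ, map_one, one_mul]

lemma map_rHom_mul_comap_conj_mul_comap_conj (hγ : IsUnit S.γ) :
    Conv.map Bi.rHom (Conv.comap (Conv.fst k H H) S.γ * Conv.comap (Conv.snd k H H) S.γ) *
      (Conv.comap (Conv.snd k H H) (S.conj Bi) * Conv.comap (Conv.fst k H H) (S.conj Bi)) =
    Bi.lConv (Conv.comap (Conv.fst k H H) S.γ * Conv.comap (Conv.snd k H H) S.γ) := by
  let r := Conv.map Bi.rHom S.γ
  let l := Bi.lConv S.γ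
  have hr : r * S.conj Bi = l := map_rHom_γ_mul_conj hγ
  have hcomm : Conv.comap (Conv.fst k H H) r * Conv.comap (Conv.snd k H H) l =
      Conv.comap (Conv.snd k H H) l * Conv.comap (Conv.fst k H H) r := by
    refine WithConv.ext (TensorProduct.ext' fun g h ↦ ?_)
    refine (Conv.comap_fst_mul_comap_snd r l g h).trans <|
      .trans ?_ (Conv.comap_snd_mul_comap_fst r l g h).symm
    exact congrArg op (Bi.lr_comm _ _)
  have hmul : Conv.comap (Conv.snd k H H) l * Conv.comap (Conv.fst k H H) l =
      Bi.lConv (Conv.comap (Conv.fst k H H) S.γ * Conv.comap (Conv.snd k H H) S.γ) := by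
    refine WithConv.ext (TensorProduct.ext' fun g h ↦ ?_)
    refine (Conv.comap_snd_mul_comap_fst l l g h).trans ?_
    refine .trans ?_ (congrArg (fun e ↦ op (Bi.l e)) (Conv.comap_fst_mul_comap_snd ..)).symm
    exact congrArg op (Bi.l_mul _ _).symm
  calc
    _ = Conv.comap (Conv.fst k H H) r * Conv.comap (Conv.snd k H H) (r * S.conj Bi) *
          Conv.comap (Conv.fst k H H) (S.conj Bi) := by
      simp only [map_mul, mul_assoc]
      rfl
    _ = Conv.comap (Conv.snd k H H) l * Conv.comap (Conv.fst k H H) l := by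
      rw [hr, hcomm, mul_assoc, ← map_mul, hr]
    _ = _ := hmul

lemma toCoinv_conj_mul (hγ : IsUnit S.γ) (g h : H) (n : N) :
    S.toCoinv Bi ((S.conj Bi (g * h)).unop n) =
      S.toCoinv Bi ((S.conj Bi g).unop ((S.conj Bi h).unop n)) := by
  let γγ := Conv.comap (Conv.fst k H H) S.γ * Conv.comap (Conv.snd k H H) S.γ
  let F : Conv k (H ⊗[k] H) A := .toConv (TensorProduct.lift S.f)
  let γμ := Conv.comap (Bialgebra.mulCoalgHom k H) S.γ
  let conj₁ := Conv.comap (Conv.fst k H H) (S.conj Bi)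
  let conj₂ := Conv.comap (Conv.snd k H H) (S.conj Bi)
  let conjμ := Conv.comap (Bialgebra.mulCoalgHom k H) (S.conj Bi)
  have hγγ : γγ = Conv.map S.aEHom F * γμ := S.comap_fst_γ_mul_comap_snd_γ
  have hμ : Conv.map Bi.rHom γγ * conjμ =
      Conv.map Bi.rHom (Conv.map S.aEHom F) * Bi.lConv γμ := by
    rw [hγγ, map_mul, mul_assoc, Conv.map_comap, ← map_mul, map_rHom_γ_mul_conj hγ]
    rfl
  have hunit : IsUnit (Conv.map Bi.rHom γγ) := ((hγ.map _).mul (hγ.map _)).map _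
  obtain ⟨R, hR⟩ := hunit.exists_left_inv
  have key : S.CoinvEq Bi conjμ (conj₂ * conj₁) := by
    have := (coinvEq_rHom_aEHom_mul_lConv S Bi F γμ).mul_left R
    rwa [← hμ, ← hγγ, ← map_rHom_mul_comap_conj_mul_comap_conj hγ, ← mul_assoc, ← mul_assoc, hR,
      one_mul, one_mul] at this
  refine (key (g ⊗ₜ h) n).trans ?_
  rw [Conv.comap_snd_mul_comap_fst]
  rfl

end CrossedProduct

end Coinvariants

section CoinvariantsModule

open Coalgebra MulOpposite

variable {k A H E : Type} [CommRing k] [Ring A] [Algebra k A] [Ring H] [HopfAlgebra k H]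
  [Ring E] [Algebra k E] {N N' N'' : Type} [AddCommGroup N] [Module k N] [AddCommGroup N']
  [Module k N'] [AddCommGroup N''] [Module k N'']

lemma Conv.mul_apply_one {R : Type} [Ring R] [Algebra k R] (u v : Conv k H R) :
    (u * v) 1 = u 1 * v 1 := by
  rw [LinearMap.convMul_apply, Bialgebra.comul_one, Algebra.TensorProduct.one_def,
    TensorProduct.map_tmul, LinearMap.mul'_apply]

namespace CrossedProduct

variable {S : CrossedProduct k A H E} (Bi : Bimod k E N) (hγ : IsUnit S.γ)

omit hγ in
variable (S) in
lemma γ_one : S.γ 1 = 1 := S.ι_one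

/-- The left `H`-module structure `h · [n] = ∑ [γ(h⁽²⁾) n γ⁻¹(h⁽¹⁾)]` on `N / [A, N]`. -/
def coinvAct : H →ₗ[k] S.Coinv Bi →ₗ[k] S.Coinv Bi :=
  ((commSub S Bi).liftQ
    (((opLinearEquiv k).symm.toLinearMap ∘ₗ (S.conj Bi).ofConv).compr₂ (S.toCoinv Bi)).flip
    (ker_toCoinv_le S Bi fun a n ↦ LinearMap.ext fun h ↦ toCoinv_conj_aE hγ h a n)).flip

lemma coinvAct_toCoinv (h : H) (n : N) :
    coinvAct Bi hγ h (S.toCoinv Bi n) = S.toCoinv Bi ((S.conj Bi h).unop n) := rfl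

include hγ in
lemma γInv_one : S.γInv 1 = 1 := by
  have h := congr($(γ_mul_γInv hγ) 1)
  rwa [Conv.mul_apply_one, γ_one, one_mul, LinearMap.convOne_apply, Bialgebra.counit_one,
    (algebraMap k E).map_one] at h

lemma isLeftModule_coinvAct : IsLeftModule (coinvAct Bi hγ) where
  one_act := (commSub S Bi).mkQ_surjective.forall.mpr fun n ↦ by
    rw [coinvAct_toCoinv, conj, Conv.mul_apply_one, Conv.map_apply, γInv_one hγ,
      Bimod.lConv_apply, γ_one, map_one, one_mul, unop_op, Bi.l_one_apply]
  mul_act g h := (commSub S Bi).mkQ_surjective.forall.mpr fun n ↦ toCoinv_conj_mul hγ g h n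

/-- The `H`-bimodule of the left `H`-module `N / [A, N]`. -/
abbrev coinvBimod : Bimod k H (S.Coinv Bi) := (isLeftModule_coinvAct Bi hγ).bimod

/-- The map `N / [A, N] → N' / [A, N']` induced by a homomorphism of `E`-bimodules. -/
def coinvMap (S : CrossedProduct k A H E) {Bi : Bimod k E N} {Bi' : Bimod k E N'}
    {φ : N →ₗ[k] N'} (hφ : Bi.IsHom Bi' φ) : S.Coinv Bi →ₗ[k] S.Coinv Bi' :=
  (commSub S Bi).liftQ (S.toCoinv Bi' ∘ₗ φ) <| ker_toCoinv_le S Bi fun a n ↦ by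
    rw [LinearMap.comp_apply, LinearMap.comp_apply, hφ.map_l, hφ.map_r, toCoinv_l_aE]

section CoinvMap

variable {Bi} {Bi' : Bimod k E N'} {Bi'' : Bimod k E N''} {φ : N →ₗ[k] N'} {ψ : N' →ₗ[k] N''}

lemma coinvMap_toCoinv (hφ : Bi.IsHom Bi' φ) (n : N) :
    S.coinvMap hφ (S.toCoinv Bi n) = S.toCoinv Bi' (φ n) := rfl

lemma isHom_coinvMap (hφ : Bi.IsHom Bi' φ) :
    (coinvBimod Bi hγ).IsHom (coinvBimod Bi' hγ) (S.coinvMap hφ) where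
  map_l h := (commSub S Bi).mkQ_surjective.forall.mpr fun n ↦ by
    simp only [IsLeftModule.bimod_l, coinvAct_toCoinv, coinvMap_toCoinv, conj_apply, map_sum,
      hφ.map_l, hφ.map_r]
  map_r h x := map_smul _ _ _

lemma coinvMap_surjective (hφ : Bi.IsHom Bi' φ) (hsurj : Function.Surjective φ) :
    Function.Surjective (S.coinvMap hφ) :=
  (commSub S Bi').mkQ_surjective.forall.mpr fun n ↦ by
    obtain ⟨n, rfl⟩ := hsurj n
    exact ⟨S.toCoinv Bi n, rfl⟩

lemma commSub_eq_map (hφ : Bi.IsHom Bi' φ) (hsurj : Function.Surjective φ) :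
    commSub S Bi' = (commSub S Bi).map φ := by
  rw [commSub, commSub, Submodule.map_span]
  congr 1
  ext z
  constructor
  · rintro ⟨a, m, rfl⟩
    obtain ⟨n, rfl⟩ := hsurj m
    exact ⟨_, ⟨a, n, rfl⟩, by rw [map_sub, hφ.map_l, hφ.map_r]⟩
  · rintro ⟨_, ⟨a, n, rfl⟩, rfl⟩
    exact ⟨a, φ n, by rw [map_sub, hφ.map_l, hφ.map_r]⟩

lemma exact_coinvMap (hφ : Bi.IsHom Bi' φ) (hψ : Bi'.IsHom Bi'' ψ) (hexact : Function.Exact φ ψ)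
    (hsurj : Function.Surjective ψ) : Function.Exact (S.coinvMap hφ) (S.coinvMap hψ) := by
  refine (commSub S Bi').mkQ_surjective.forall.mpr fun n ↦ ⟨fun hn ↦ ?_, ?_⟩
  · rw [coinvMap_toCoinv, Submodule.mkQ_apply, Submodule.Quotient.mk_eq_zero,
      commSub_eq_map hψ hsurj] at hn
    obtain ⟨z, hz, hzn⟩ := hn
    obtain ⟨m, hm⟩ := (hexact (n - z)).mp (by rw [map_sub, hzn, sub_self])
    refine ⟨S.toCoinv Bi m, ?_⟩
    rw [coinvMap_toCoinv, hm, map_sub, sub_eq_self]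
    exact (Submodule.Quotient.mk_eq_zero _).mpr hz
  · rintro ⟨x, hx⟩
    obtain ⟨m, rfl⟩ := (commSub S Bi).mkQ_surjective x
    rw [← hx, coinvMap_toCoinv, coinvMap_toCoinv, hexact.apply_apply_eq_zero, map_zero]

end CoinvMap

variable (S) in
/-- The comodule structure `ι(a ⊗ h) ↦ ∑ ι(a ⊗ h⁽¹⁾) ⊗ h⁽²⁾` of a crossed product. -/
def coact : E →ₗ[k] E ⊗[k] H :=
  S.ι.toLinearMap.rTensor H ∘ₗ (TensorProduct.assoc k A H H).symm.toLinearMap ∘ₗ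
    (comul.lTensor A) ∘ₗ S.ι.symm.toLinearMap

lemma coact_ι_tmul (a : A) (h : H) :
    S.coact (S.ι (a ⊗ₜ h)) =
      ∑ i ∈ (ℛ k h).index, S.ι (a ⊗ₜ (ℛ k h).left i) ⊗ₜ (ℛ k h).right i := by
  simp only [coact, LinearMap.comp_apply, LinearEquiv.coe_coe, LinearEquiv.symm_apply_apply,
    LinearMap.lTensor_tmul, ← (ℛ k h).eq, TensorProduct.tmul_sum, map_sum,
    TensorProduct.assoc_symm_tmul, LinearMap.rTensor_tmul]

lemma coact_aE_mul (a : A) (e : E) :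
    S.coact (S.aE a * e) = (LinearMap.mulLeft k (S.aE a)).rTensor H (S.coact e) :=
  LinearMap.congr_fun (f := S.coact ∘ₗ LinearMap.mulLeft k (S.aE a))
    (g := (LinearMap.mulLeft k (S.aE a)).rTensor H ∘ₗ S.coact)
    (S.hom_ext fun b h ↦ by
      simp only [LinearMap.comp_apply, LinearMap.mulLeft_apply, aE_mul_ι_tmul, coact_ι_tmul,
        map_sum, LinearMap.rTensor_tmul]) e

lemma rid_lTensor_counit_coact (e : E) :
    TensorProduct.rid k E ((counit (R := k)).lTensor E (S.coact e)) = e :=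
  LinearMap.congr_fun (g := LinearMap.id)
    (f := (TensorProduct.rid k E).toLinearMap ∘ₗ counit.lTensor E ∘ₗ S.coact)
    (S.hom_ext fun a h ↦ by
      simp only [LinearMap.comp_apply, coact_ι_tmul, map_sum, LinearMap.lTensor_tmul,
        LinearEquiv.coe_coe, TensorProduct.rid_tmul, LinearMap.id_apply, ← map_smul,
        ← TensorProduct.tmul_smul]
      rw [← map_sum, ← TensorProduct.tmul_sum, Conv.sum_counit_smul_left]) e

/-- The map `(e ⊗ h) ⊗ n ↦ h ⊗ n e`. -/
def rightAct : (E ⊗[k] H) ⊗[k] N →ₗ[k] H ⊗[k] N :=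
  (TensorProduct.lift Bi.r).lTensor H ∘ₗ (TensorProduct.assoc k H E N).toLinearMap ∘ₗ
    (TensorProduct.comm k E H).toLinearMap.rTensor N

lemma rightAct_tmul (e : E) (h : H) (n : N) :
    rightAct Bi ((e ⊗ₜ h) ⊗ₜ n) = h ⊗ₜ Bi.r e n := rfl

lemma rightAct_rTensor_mulLeft (x : E) (w : E ⊗[k] H) (n : N) :
    rightAct Bi ((LinearMap.mulLeft k x).rTensor H w ⊗ₜ n) = rightAct Bi (w ⊗ₜ Bi.r x n) :=
  LinearMap.congr_fun
    (f := rightAct Bi ∘ₗ (TensorProduct.mk k _ N).flip n ∘ₗ (LinearMap.mulLeft k x).rTensor H)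
    (g := rightAct Bi ∘ₗ (TensorProduct.mk k _ N).flip (Bi.r x n))
    (TensorProduct.ext' fun e h ↦ congrArg (h ⊗ₜ[k] ·) (Bi.r_mul_apply x e n)) w

lemma toCoinv_l (e : E) (n : N) :
    S.toCoinv Bi (Bi.l e n) = (coinvBimod Bi hγ).action
      ((S.toCoinv Bi).lTensor H (rightAct Bi (S.coact e ⊗ₜ n))) := by
  refine LinearMap.congr_fun (f := S.toCoinv Bi ∘ₗ Bi.l.flip n)
    (g := (coinvBimod Bi hγ).action ∘ₗ (S.toCoinv Bi).lTensor H ∘ₗ rightAct Bi ∘ₗ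
      (TensorProduct.mk k _ N).flip n ∘ₗ S.coact) (S.hom_ext fun a h ↦ ?_) e
  have hconj := congr(($(map_rHom_γ_mul_conj (Bi := Bi) hγ) h).unop (Bi.r (S.aE a) n))
  rw [Conv.unop_mul_apply, Bimod.lConv_apply, unop_op, Bi.l_r_apply] at hconj
  simp only [LinearMap.comp_apply, LinearMap.flip_apply, mk_apply]
  rw [coact_ι_tmul, TensorProduct.sum_tmul, ← aE_mul_hE, Bi.l_mul_apply, toCoinv_l_aE]
  refine (congrArg _ hconj.symm).trans ?_
  simp only [map_sum, rightAct_tmul, LinearMap.lTensor_tmul, Bimod.action_tmul,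
    IsLeftModule.bimod_l, coinvAct_toCoinv, ← aE_mul_hE, Bi.r_mul_apply]
  rfl

/-- The map `h ⊗ n ↦ h ⊗ [1 ⊗ n]`. -/
def toCoinvFree : H ⊗[k] N →ₗ[k] H ⊗[k] S.Coinv Bi.free :=
  (S.toCoinv Bi.free ∘ₗ TensorProduct.mk k E N 1).lTensor H

variable (S) in
/-- The map `[e ⊗ n] ↦ ∑ e⁽¹⁾ ⊗ n e⁽⁰⁾` from `(E ⊗ N) / [A, E ⊗ N]` to `H ⊗ N`, where
`∑ e⁽⁰⁾ ⊗ e⁽¹⁾` is the coaction; it is inverse to `h ⊗ n ↦ h · [1 ⊗ n]`. -/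
def ofCoinvFree : S.Coinv Bi.free →ₗ[k] H ⊗[k] N :=
  (commSub S Bi.free).liftQ (rightAct Bi ∘ₗ S.coact.rTensor N) <|
    ker_toCoinv_le S Bi.free fun a w ↦ LinearMap.congr_fun
      (f := rightAct Bi ∘ₗ S.coact.rTensor N ∘ₗ Bi.free.l (S.aE a))
      (g := rightAct Bi ∘ₗ S.coact.rTensor N ∘ₗ Bi.free.r (S.aE a))
      (TensorProduct.ext' fun e n ↦ by
        simp only [LinearMap.comp_apply, Bimod.free_l, Bimod.free_r, LinearMap.rTensor_tmul,
          coact_aE_mul, rightAct_rTensor_mulLeft]) w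

lemma ofCoinvFree_toCoinv (e : E) (n : N) :
    S.ofCoinvFree Bi (S.toCoinv Bi.free (e ⊗ₜ n)) = rightAct Bi (S.coact e ⊗ₜ n) := rfl

lemma rightAct_free (w : E ⊗[k] H) (n : N) :
    rightAct Bi.free (w ⊗ₜ (1 ⊗ₜ n)) =
      (TensorProduct.mk k E N 1).lTensor H (rightAct Bi (w ⊗ₜ n)) :=
  LinearMap.congr_fun (f := rightAct Bi.free ∘ₗ (TensorProduct.mk k _ _).flip (1 ⊗ₜ n))
    (g := (TensorProduct.mk k E N 1).lTensor H ∘ₗ rightAct Bi ∘ₗ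
      (TensorProduct.mk k _ _).flip n)
    (TensorProduct.ext' fun _ _ ↦ rfl) w

lemma action_toCoinvFree_ofCoinvFree (x : S.Coinv Bi.free) :
    (coinvBimod Bi.free hγ).action (toCoinvFree Bi (S.ofCoinvFree Bi x)) = x := by
  obtain ⟨w, rfl⟩ := (commSub S Bi.free).mkQ_surjective x
  refine LinearMap.congr_fun (g := S.toCoinv Bi.free)
    (f := (coinvBimod Bi.free hγ).action ∘ₗ toCoinvFree Bi ∘ₗ S.ofCoinvFree Bi ∘ₗ
      S.toCoinv Bi.free) (TensorProduct.ext' fun e n ↦ ?_) w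
  have h := toCoinv_l Bi.free hγ e (1 ⊗ₜ n)
  rw [Bimod.free_l, mul_one, rightAct_free, ← LinearMap.lTensor_comp_apply] at h
  exact h.symm

include hγ in
lemma sum_γInv_mul_coact_γ (h : H) :
    ∑ i ∈ (ℛ k h).index, (LinearMap.mulLeft k (S.γInv ((ℛ k h).left i))).rTensor H
      (S.coact (S.γ ((ℛ k h).right i))) = 1 ⊗ₜ h := by
  let incl : Conv k H E →* Conv k H (E ⊗[k] H) := Conv.map Algebra.TensorProduct.includeLeft
  let idR : Conv k H (E ⊗[k] H) := .toConv Algebra.TensorProduct.includeRight.toLinearMap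
  have hcoact (h : H) : S.coact (S.γ h) = (incl S.γ * idR) h := by
    refine (S.coact_ι_tmul 1 h).trans (.trans ?_ ((ℛ k h).convMul_apply ..).symm)
    refine Finset.sum_congr rfl fun i _ ↦ ?_
    exact ((Algebra.TensorProduct.tmul_mul_tmul ..).trans (by rw [mul_one, one_mul]; rfl)).symm
  have hmulLeft (e : E) (w : E ⊗[k] H) : (LinearMap.mulLeft k e).rTensor H w =
      Algebra.TensorProduct.includeLeft (R := k) (S := k) e * w :=
    LinearMap.congr_fun (f := (LinearMap.mulLeft k e).rTensor H)
      (g := LinearMap.mulLeft k (Algebra.TensorProduct.includeLeft (R := k) (S := k) e))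
      (TensorProduct.ext' fun x h ↦ by simp) w
  have hcancel : incl S.γInv * (incl S.γ * idR) = idR := by
    rw [← mul_assoc, ← map_mul, γInv_mul_γ hγ, map_one, one_mul]
  simp only [hcoact, hmulLeft]
  exact ((ℛ k h).convMul_apply ..).symm.trans congr($hcancel h)

lemma ofCoinvFree_action_toCoinvFree (w : H ⊗[k] N) :
    S.ofCoinvFree Bi ((coinvBimod Bi.free hγ).action (toCoinvFree Bi w)) = w := by
  refine LinearMap.congr_fun (g := LinearMap.id)
    (f := S.ofCoinvFree Bi ∘ₗ (coinvBimod Bi.free hγ).action ∘ₗ toCoinvFree Bi)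
    (TensorProduct.ext' fun h n ↦ ?_) w
  change S.ofCoinvFree Bi (S.toCoinv Bi.free ((S.conj Bi.free h).unop (1 ⊗ₜ n))) = h ⊗ₜ n
  simp only [conj_apply, map_sum, Bimod.free_l, Bimod.free_r, mul_one, ofCoinvFree_toCoinv,
    ← rightAct_rTensor_mulLeft]
  rw [← map_sum, ← TensorProduct.sum_tmul, sum_γInv_mul_coact_γ hγ, rightAct_tmul,
    Bi.r_one_apply]

lemma isSplitting_coinvBimod_free :
    (coinvBimod Bi.free hγ).IsSplitting (toCoinvFree Bi ∘ₗ S.ofCoinvFree Bi) where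
  action_apply := action_toCoinvFree_ofCoinvFree Bi hγ
  map_l h x := by
    have hΘ (w : H ⊗[k] N) : (coinvBimod Bi.free hγ).action
        (toCoinvFree Bi ((LinearMap.mulLeft k h).rTensor N w)) =
        (coinvBimod Bi.free hγ).l h ((coinvBimod Bi.free hγ).action (toCoinvFree Bi w)) :=
      LinearMap.congr_fun
        (f := (coinvBimod Bi.free hγ).action ∘ₗ toCoinvFree Bi ∘ₗ
          (LinearMap.mulLeft k h).rTensor N)
        (g := (coinvBimod Bi.free hγ).l h ∘ₗ (coinvBimod Bi.free hγ).action ∘ₗ toCoinvFree Bi)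
        (TensorProduct.ext' fun g n ↦ by
          exact (coinvBimod Bi.free hγ).l_mul_apply h g (S.toCoinv Bi.free (1 ⊗ₜ n))) w
    obtain ⟨w, hw⟩ : ∃ w, (coinvBimod Bi.free hγ).action (toCoinvFree Bi w) = x :=
      ⟨_, action_toCoinvFree_ofCoinvFree Bi hγ x⟩
    rw [← hw, ← hΘ, LinearMap.comp_apply, LinearMap.comp_apply, ofCoinvFree_action_toCoinvFree,
      ofCoinvFree_action_toCoinvFree, toCoinvFree, ← LinearMap.comp_apply, ← LinearMap.comp_apply,
      LinearMap.lTensor_comp_rTensor, LinearMap.rTensor_comp_lTensor]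
  map_r h x := by
    have hr : (coinvBimod Bi.free hγ).r h = counit (R := k) h • LinearMap.id := rfl
    rw [hr, LinearMap.smul_apply, LinearMap.id_apply, map_smul, LinearMap.lTensor_smul,
      LinearMap.lTensor_id, LinearMap.smul_apply, LinearMap.id_apply]

end CrossedProduct

end CoinvariantsModule

/-! ### Comparison of the homology of `E` with that of `H` -/

section Comparison

open Coalgebra

variable {k A H E : Type} [CommRing k] [Ring A] [Algebra k A] [Ring H] [HopfAlgebra k H]
  [Ring E] [Algebra k E] {N N' : Type} [AddCommGroup N] [Module k N] [AddCommGroup N']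
  [Module k N']

lemma IsLeftModule.toHHZero_action {act : H →ₗ[k] N →ₗ[k] N} (ha : IsLeftModule act)
    (w : H ⊗[k] N) : ha.bimod.toHHZero (ha.bimod.action w) =
      ha.bimod.toHHZero (TensorProduct.lid k N ((counit (R := k)).rTensor N w)) :=
  LinearMap.congr_fun (f := ha.bimod.toHHZero ∘ₗ ha.bimod.action)
    (g := ha.bimod.toHHZero ∘ₗ (TensorProduct.lid k N).toLinearMap ∘ₗ counit.rTensor N)
    (TensorProduct.ext' fun h n ↦ ha.bimod.toHHZero_l h n) w

namespace CrossedProduct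

variable {S : CrossedProduct k A H E} (Bi : Bimod k E N) {Bi' : Bimod k E N'}
  (hγ : IsUnit S.γ)

lemma toCoinv_restrict_l (a : A) (n : N) :
    S.toCoinv Bi ((Bi.restrict S.aEHom).l a n) = S.toCoinv Bi ((Bi.restrict S.aEHom).r a n) :=
  S.toCoinv_l_aE Bi a n

lemma toHHZero_l_aE (a : A) (n : N) :
    (Bi.restrict S.aEHom).toHHZero (Bi.l (S.aE a) n) =
      (Bi.restrict S.aEHom).toHHZero (Bi.r (S.aE a) n) :=
  (Bi.restrict S.aEHom).toHHZero_l a n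

variable (S) in
/-- The identification of `H_0(A, N)` with `N / [A, N]`. -/
def coinvEquiv : (Bi.restrict S.aEHom).HH 0 ≃ₗ[k] S.Coinv Bi :=
  LinearEquiv.ofLinearMap
    ((Bi.restrict S.aEHom).liftHHZero (S.toCoinv Bi) (toCoinv_restrict_l Bi))
    ((commSub S Bi).liftQ (Bi.restrict S.aEHom).toHHZero
      (S.ker_toCoinv_le Bi (toHHZero_l_aE Bi)))
    (LinearMap.ext <| (commSub S Bi).mkQ_surjective.forall.mpr fun n ↦ by
      rw [LinearMap.comp_apply, Submodule.mkQ_apply, Submodule.liftQ_apply,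
        Bimod.liftHHZero_toHHZero]
      rfl)
    (LinearMap.ext <| (Bi.restrict S.aEHom).toHHZero_surjective.forall.mpr fun n ↦ by
      rw [LinearMap.comp_apply, Bimod.liftHHZero_toHHZero]
      rfl)

lemma coinvEquiv_toHHZero (n : N) :
    S.coinvEquiv Bi ((Bi.restrict S.aEHom).toHHZero n) = S.toCoinv Bi n :=
  Bimod.liftHHZero_toHHZero _ (toCoinv_restrict_l Bi) n

lemma coinvEquiv_map {φ : N →ₗ[k] N'} (hφ : Bi.IsHom Bi' φ) (x : (Bi.restrict S.aEHom).HH 0) :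
    S.coinvEquiv Bi' (Hml.map (hφ.restrict S.aEHom).isChainMap 0 x) =
      S.coinvMap hφ (S.coinvEquiv Bi x) := by
  obtain ⟨n, rfl⟩ := (Bi.restrict S.aEHom).toHHZero_surjective x
  rw [(hφ.restrict S.aEHom).map_toHHZero, coinvEquiv_toHHZero, coinvEquiv_toHHZero,
    coinvMap_toCoinv]

lemma counit_rightAct (w : E ⊗[k] H) (n : N) :
    TensorProduct.lid k N ((counit (R := k)).rTensor N (rightAct Bi (w ⊗ₜ n))) =
      Bi.r (TensorProduct.rid k E ((counit (R := k)).lTensor E w)) n :=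
  LinearMap.congr_fun
    (f := (TensorProduct.lid k N).toLinearMap ∘ₗ counit.rTensor N ∘ₗ rightAct Bi ∘ₗ
      (TensorProduct.mk k _ N).flip n)
    (g := Bi.r.flip n ∘ₗ (TensorProduct.rid k E).toLinearMap ∘ₗ counit.lTensor E)
    (TensorProduct.ext' fun e h ↦ by simp [rightAct_tmul]) w

lemma toHHZero_toCoinv_l (e : E) (n : N) :
    (coinvBimod Bi hγ).toHHZero (S.toCoinv Bi (Bi.l e n)) =
      (coinvBimod Bi hγ).toHHZero (S.toCoinv Bi (Bi.r e n)) := by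
  have hnat (w : H ⊗[k] N) : TensorProduct.lid k _
      ((counit (R := k)).rTensor _ ((S.toCoinv Bi).lTensor H w)) =
      S.toCoinv Bi (TensorProduct.lid k N ((counit (R := k)).rTensor N w)) :=
    LinearMap.congr_fun
      (f := (TensorProduct.lid k _).toLinearMap ∘ₗ counit.rTensor _ ∘ₗ (S.toCoinv Bi).lTensor H)
      (g := S.toCoinv Bi ∘ₗ (TensorProduct.lid k N).toLinearMap ∘ₗ counit.rTensor N)
      (TensorProduct.ext' fun _ _ ↦ rfl) w
  rw [toCoinv_l Bi hγ, IsLeftModule.toHHZero_action, hnat, counit_rightAct,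
    rid_lTensor_counit_coact]

include hγ in
lemma toHHZero_conj (h : H) (n : N) :
    Bi.toHHZero ((S.conj Bi h).unop n) = counit (R := k) h • Bi.toHHZero n := by
  have hinv := congr($(γInv_mul_γ hγ) h)
  rw [(ℛ k h).convMul_apply, LinearMap.convOne_apply] at hinv
  simp only [conj_apply, map_sum, Bi.toHHZero_l, ← Bi.r_mul_apply]
  rw [← map_sum, ← LinearMap.sum_apply, ← map_sum, hinv, Algebra.algebraMap_eq_smul_one, map_smul,
    LinearMap.smul_apply, Bi.r_one_apply, map_smul]

/-- The isomorphism `H_0(E, N) ≃ H_0(H, N / [A, N])`. -/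
def hhZeroEquiv : Bi.HH 0 ≃ₗ[k] (coinvBimod Bi hγ).HH 0 :=
  LinearEquiv.ofLinearMap
    (Bi.liftHHZero ((coinvBimod Bi hγ).toHHZero ∘ₗ S.toCoinv Bi) (toHHZero_toCoinv_l Bi hγ))
    ((coinvBimod Bi hγ).liftHHZero
      ((commSub S Bi).liftQ Bi.toHHZero (S.ker_toCoinv_le Bi fun a ↦ Bi.toHHZero_l (S.aE a)))
      fun h ↦ (commSub S Bi).mkQ_surjective.forall.mpr fun n ↦
        (toHHZero_conj Bi hγ h n).trans (by rw [IsLeftModule.bimod_r, map_smul]; rfl))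
    (LinearMap.ext <| (coinvBimod Bi hγ).toHHZero_surjective.forall.mpr <|
      (commSub S Bi).mkQ_surjective.forall.mpr fun n ↦ by
        rw [LinearMap.comp_apply, Bimod.liftHHZero_toHHZero]
        exact Bimod.liftHHZero_toHHZero ..)
    (LinearMap.ext <| Bi.toHHZero_surjective.forall.mpr fun n ↦ by
      rw [LinearMap.comp_apply, Bimod.liftHHZero_toHHZero]
      exact Bimod.liftHHZero_toHHZero ..)

lemma hhZeroEquiv_toHHZero (n : N) :
    hhZeroEquiv Bi hγ (Bi.toHHZero n) = (coinvBimod Bi hγ).toHHZero (S.toCoinv Bi n) :=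
  Bimod.liftHHZero_toHHZero _ (toHHZero_toCoinv_l Bi hγ) n

variable {Bi} in
lemma hhZeroEquiv_map {φ : N →ₗ[k] N'} (hφ : Bi.IsHom Bi' φ) (x : Bi.HH 0) :
    hhZeroEquiv Bi' hγ (Hml.map hφ.isChainMap 0 x) =
      Hml.map (isHom_coinvMap hγ hφ).isChainMap 0 (hhZeroEquiv Bi hγ x) := by
  obtain ⟨n, rfl⟩ := Bi.toHHZero_surjective x
  rw [hφ.map_toHHZero, hhZeroEquiv_toHHZero, hhZeroEquiv_toHHZero,
    (isHom_coinvMap hγ hφ).map_toHHZero, coinvMap_toCoinv]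

variable (S) in
/-- The bimodule `N` over `E` has this property if `N ↦ N / [A, N]` carries the embedding
`ΩN → E ⊗ N` to an injection that stays injective after tensoring with the powers of `H̄`. -/
def IsCoinvExact : Prop :=
  ∀ n, Function.Injective ((S.coinvMap Bi.isHom_omegaIncl).rTensor (Tpow k (Qbar k H) n))

variable {Bi} in
lemma IsCoinvExact.isShortExact (h : S.IsCoinvExact Bi) :
    (coinvBimod Bi.omega hγ).IsShortExact (coinvBimod Bi.free hγ) (coinvBimod Bi hγ)
      (S.coinvMap Bi.isHom_omegaIncl) (S.coinvMap Bi.isHom_action) where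
  isHom_i := isHom_coinvMap hγ _
  isHom_p := isHom_coinvMap hγ _
  injective := h
  exact := exact_coinvMap _ _ Bi.exact_omegaIncl_action Bi.action_surjective
  surjective := coinvMap_surjective _ Bi.action_surjective

lemma exists_injective_range_eq_ker {n : ℕ}
    (e : Nonempty (Bi.omega.HH n ≃ₗ[k] (coinvBimod Bi.omega hγ).HH n)) :
    ∃ u : Bi.HH (n + 1) →ₗ[k] (coinvBimod Bi.omega hγ).HH n, Function.Injective u ∧
      LinearMap.range u =
        LinearMap.ker (Hml.map (isHom_coinvMap hγ Bi.isHom_omegaIncl).isChainMap n) := by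
  suffices h : ∃ e : Bi.omega.HH n ≃ₗ[k] (coinvBimod Bi.omega hγ).HH n,
      ∀ x, Hml.map Bi.isHom_omegaIncl.isChainMap n x = 0 ↔
        Hml.map (isHom_coinvMap hγ Bi.isHom_omegaIncl).isChainMap n (e x) = 0 by
    obtain ⟨e, he⟩ := h
    refine ⟨e.toLinearMap ∘ₗ Bi.isShortExact_omega.connecting n, e.injective.comp
      (Bi.isShortExact_omega.connecting_injective (Bi.isSplitting_free.subsingleton_HH n)), ?_⟩
    rw [LinearMap.range_comp, Bi.isShortExact_omega.range_connecting]
    ext y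
    obtain ⟨x, rfl⟩ := e.surjective y
    exact (Submodule.mem_map_equiv ..).trans (by simp [he])
  cases n with
  | zero =>
    refine ⟨hhZeroEquiv Bi.omega hγ, fun x ↦ ?_⟩
    rw [← hhZeroEquiv_map, LinearEquiv.map_eq_zero_iff]
  | succ n =>
    have := Bi.isSplitting_free.subsingleton_HH n
    have := (isSplitting_coinvBimod_free Bi hγ).subsingleton_HH n
    exact ⟨e.some, fun x ↦ iff_of_true (Subsingleton.elim _ _) (Subsingleton.elim _ _)⟩

theorem nonempty_equiv_HH_coinvBimod
    (hΩ : ∀ {N : Type} [AddCommGroup N] [Module k N] (Bi : Bimod k E N), S.IsCoinvExact Bi.omega)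
    (n : ℕ) : ∀ {N : Type} [AddCommGroup N] [Module k N] {Bi : Bimod k E N},
      S.IsCoinvExact Bi → Nonempty (Bi.HH n ≃ₗ[k] (coinvBimod Bi hγ).HH n) := by
  induction n with
  | zero => exact fun _ ↦ ⟨hhZeroEquiv _ hγ⟩
  | succ n ih =>
    intro N _ _ Bi h
    obtain ⟨u, hu, hur⟩ := exists_injective_range_eq_ker Bi hγ (ih (hΩ Bi))
    have hδ := (h.isShortExact hγ).connecting_injective
      ((isSplitting_coinvBimod_free Bi hγ).subsingleton_HH n)
    have hrange := hur.trans ((h.isShortExact hγ).range_connecting n).symm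
    exact ⟨(LinearEquiv.ofInjective u hu).trans
      ((LinearEquiv.ofEq _ _ hrange).trans (LinearEquiv.ofInjective _ hδ).symm)⟩

end CrossedProduct

end Comparison

section Separable

variable {k A H E : Type} [CommRing k] [Ring A] [Algebra k A] [Ring H] [HopfAlgebra k H]
  [Ring E] [Algebra k E] {N : Type} [AddCommGroup N] [Module k N]

namespace Bimod

variable (Bi : Bimod k A N)

/-- The operator `n ↦ ∑ y n x` attached to `∑ x ⊗ y ∈ A ⊗ A`. -/
def sandwich : A ⊗[k] A →ₗ[k] N →ₗ[k] N :=
  TensorProduct.lift ((LinearMap.llcomp k N N N).compl₁₂ Bi.l Bi.r).flip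

lemma sandwich_tmul (x y : A) (n : N) : Bi.sandwich (x ⊗ₜ y) n = Bi.l y (Bi.r x n) := rfl

lemma sandwich_map_mul (a b : A) (t : A ⊗[k] A) (n : N) :
    Bi.sandwich (TensorProduct.map (LinearMap.mulLeft k a) (LinearMap.mulRight k b) t) n =
      Bi.sandwich t (Bi.l b (Bi.r a n)) := by
  refine LinearMap.congr_fun
    (f := Bi.sandwich.flip n ∘ₗ TensorProduct.map (LinearMap.mulLeft k a) (LinearMap.mulRight k b))
    (g := Bi.sandwich.flip (Bi.l b (Bi.r a n))) (TensorProduct.ext' fun x y ↦ ?_) t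
  simp [sandwich_tmul, Bi.r_mul_apply, Bi.l_mul_apply, Bi.l_r_apply]

lemma IsHom.map_sandwich {N' : Type} [AddCommGroup N'] [Module k N'] {Bi : Bimod k A N}
    {Bi' : Bimod k A N'} {φ : N →ₗ[k] N'}
    (hφ : Bi.IsHom Bi' φ) (t : A ⊗[k] A) (n : N) :
    φ (Bi.sandwich t n) = Bi'.sandwich t (φ n) := by
  refine LinearMap.congr_fun (f := φ ∘ₗ Bi.sandwich.flip n) (g := Bi'.sandwich.flip (φ n))
    (TensorProduct.ext' fun x y ↦ ?_) t
  simp [sandwich_tmul, hφ.map_l, hφ.map_r]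

lemma sandwich_l_of_separable {s : A →ₗ[k] A ⊗[k] A}
    (hs : ∀ a b x, s (a * x * b) =
      TensorProduct.map (LinearMap.mulLeft k a) (LinearMap.mulRight k b) (s x)) (a : A) (n : N) :
    Bi.sandwich (s 1) (Bi.l a n) = Bi.sandwich (s 1) (Bi.r a n) := by
  have hl := Bi.sandwich_map_mul 1 a (s 1) n
  have hr := Bi.sandwich_map_mul a 1 (s 1) n
  rw [← hs, one_mul, one_mul, Bi.r_one_apply] at hl
  rw [← hs, mul_one, mul_one, Bi.l_one_apply] at hr
  exact hl.symm.trans hr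

end Bimod

namespace CrossedProduct

variable {S : CrossedProduct k A H E} (Bi : Bimod k E N)

lemma toCoinv_sandwich (t : A ⊗[k] A) (n : N) :
    S.toCoinv Bi ((Bi.restrict S.aEHom).sandwich t n) =
      S.toCoinv Bi (Bi.r (S.aE (LinearMap.mul' k A t)) n) := by
  refine LinearMap.congr_fun (f := S.toCoinv Bi ∘ₗ (Bi.restrict S.aEHom).sandwich.flip n)
    (g := S.toCoinv Bi ∘ₗ Bi.r.flip n ∘ₗ S.aE ∘ₗ LinearMap.mul' k A)
    (TensorProduct.ext' fun x y ↦ ?_) t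
  refine (S.toCoinv_l_aE Bi y (Bi.r (S.aE x) n)).trans (congrArg _ ?_)
  exact (Bi.r_mul_apply _ _ _).symm.trans
    (congrArg (Bi.r · n) (map_mul S.aEHom x y).symm)

theorem isCoinvExact_of_isSeparableAlg (hA : IsSeparableAlg k A) : S.IsCoinvExact Bi := by
  obtain ⟨s, hmul, hs⟩ := hA
  let τ : S.Coinv Bi.free →ₗ[k] E ⊗[k] N := (commSub S Bi.free).liftQ
    ((Bi.free.restrict S.aEHom).sandwich (s 1)) (S.ker_toCoinv_le Bi.free
      ((Bi.free.restrict S.aEHom).sandwich_l_of_separable hs))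
  let retract : S.Coinv Bi.free →ₗ[k] S.Coinv Bi.omega :=
    S.toCoinv Bi.omega ∘ₗ (qbar k E).rTensor N ∘ₗ τ
  have hτ (z : Qbar k E ⊗[k] N) : τ (S.toCoinv Bi.free (Bi.omegaIncl z)) =
      Bi.omegaIncl ((Bi.omega.restrict S.aEHom).sandwich (s 1) z) :=
    ((Bi.isHom_omegaIncl.restrict S.aEHom).map_sandwich (s 1) z).symm
  have hqbar (z : Qbar k E ⊗[k] N) : (qbar k E).rTensor N (Bi.omegaIncl z) = z :=
    LinearMap.congr_fun Bi.rTensor_qbar_comp_omegaIncl z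
  have hs1 : LinearMap.mul' k A (s 1) = 1 := LinearMap.congr_fun hmul 1
  have haE : S.aE 1 = 1 := map_one S.aEHom
  have hretract : retract ∘ₗ S.coinvMap Bi.isHom_omegaIncl = LinearMap.id := by
    refine LinearMap.ext <| (commSub S Bi.omega).mkQ_surjective.forall.mpr fun z ↦ ?_
    rw [LinearMap.comp_apply, coinvMap_toCoinv, LinearMap.comp_apply, LinearMap.comp_apply, hτ,
      hqbar, toCoinv_sandwich, hs1, haE, Bi.omega.r_one_apply]
    rfl
  refine fun n ↦ Function.LeftInverse.injective (g := retract.rTensor _) fun x ↦ ?_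
  rw [← LinearMap.rTensor_comp_apply, hretract, LinearMap.rTensor_id, LinearMap.id_apply]

variable (S) in
/-- The `A`-linear splitting `ι(a ⊗ h) ⊗ n ↦ a ⊗ (ι(1 ⊗ h) ⊗ n)` of the action on `E ⊗ N`. -/
def freeSplitting : E ⊗[k] N →ₗ[k] A ⊗[k] (E ⊗[k] N) :=
  (TensorProduct.assoc k A E N).toLinearMap ∘ₗ
    (S.hE.lTensor A ∘ₗ S.ι.symm.toLinearMap).rTensor N

lemma freeSplitting_ι_tmul (a : A) (h : H) (n : N) :
    S.freeSplitting (S.ι (a ⊗ₜ h) ⊗ₜ n) = a ⊗ₜ (S.hE h ⊗ₜ n) := by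
  simp [freeSplitting]

variable (S) in
lemma hom_ext_tmul {X : Type} [AddCommGroup X] [Module k X] {φ ψ : E ⊗[k] N →ₗ[k] X}
    (h : ∀ a h n, φ (S.ι (a ⊗ₜ h) ⊗ₜ n) = ψ (S.ι (a ⊗ₜ h) ⊗ₜ n)) : φ = ψ :=
  TensorProduct.ext (S.hom_ext fun a g ↦ LinearMap.ext fun n ↦ h a g n)

lemma isSplitting_free_restrict :
    (Bi.free.restrict S.aEHom).IsSplitting (S.freeSplitting (N := N)) where
  action_apply := LinearMap.congr_fun (g := LinearMap.id)
    (f := (Bi.free.restrict S.aEHom).action ∘ₗ S.freeSplitting) <| S.hom_ext_tmul fun a h n ↦ by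
      rw [LinearMap.comp_apply, freeSplitting_ι_tmul]
      exact congrArg (· ⊗ₜ[k] n) (S.aE_mul_hE a h)
  map_l b := LinearMap.congr_fun (f := S.freeSplitting ∘ₗ Bi.free.l (S.aE b))
      (g := (LinearMap.mulLeft k b).rTensor _ ∘ₗ S.freeSplitting) <| S.hom_ext_tmul fun a h n ↦ by
    rw [LinearMap.comp_apply, Bimod.free_l, aE_mul_ι_tmul, freeSplitting_ι_tmul,
      LinearMap.comp_apply, freeSplitting_ι_tmul, LinearMap.rTensor_tmul, LinearMap.mulLeft_apply]
  map_r b := LinearMap.congr_fun (f := S.freeSplitting ∘ₗ Bi.free.r (S.aE b))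
      (g := (Bi.free.r (S.aE b)).lTensor A ∘ₗ S.freeSplitting) <| S.hom_ext_tmul fun a h n ↦ by
    rw [LinearMap.comp_apply, Bimod.free_r, freeSplitting_ι_tmul, LinearMap.comp_apply,
      freeSplitting_ι_tmul, LinearMap.lTensor_tmul, Bimod.free_r]

lemma subsingleton_HH_omega_restrict {n : ℕ}
    (h : Subsingleton ((Bi.restrict S.aEHom).HH (n + 2))) :
    Subsingleton ((Bi.omega.restrict S.aEHom).HH (n + 1)) := by
  refine subsingleton_of_forall_eq 0 fun y ↦ ?_
  have := (isSplitting_free_restrict (S := S) Bi).subsingleton_HH n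
  obtain ⟨z, rfl⟩ := ((Bi.isShortExact_omega_restrict
    S.aEHom).isShortExact_hochschildD.exact_connecting_map (n + 1) y).mp (Subsingleton.elim _ _)
  rw [Subsingleton.elim z 0, map_zero]

end CrossedProduct

end Separable

/-! ### The action on the first homology of `A` -/

section FirstHomology

open Coalgebra

variable {k A H E : Type} [CommRing k] [Ring A] [Algebra k A] [Ring H] [HopfAlgebra k H]
  [Ring E] [Algebra k E] {N : Type} [AddCommGroup N] [Module k N]

lemma itComul_one (h : H) : itComul k 1 h =
    ∑ j ∈ (ℛ k h).index, (ℛ k h).left j ⊗ₜ[k] ((ℛ k h).right j ⊗ₜ[k] (1 : k)) := by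
  rw [itComul_succ, ← (ℛ k h).eq, map_sum, map_sum]
  rfl

lemma IsLeftModule.of_injective {X Y : Type} [AddCommGroup X] [Module k X] [AddCommGroup Y]
    [Module k Y] {act : H →ₗ[k] X →ₗ[k] X} {act' : H →ₗ[k] Y →ₗ[k] Y} (ha : IsLeftModule act')
    {φ : X →ₗ[k] Y} (hφ : Function.Injective φ) (hact : ∀ h x, φ (act h x) = act' h (φ x)) :
    IsLeftModule act where
  one_act x := hφ (by rw [hact, ha.one_act])
  mul_act g h x := hφ (by rw [hact, ha.mul_act, hact, hact])

namespace CrossedProduct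

variable {S : CrossedProduct k A H E} (Bi : Bimod k E N)

variable (S) in
/-- The action `ā ↦ ā^h` on `Ā`. -/
def actQbar (h : H) : Qbar k A →ₗ[k] Qbar k A :=
  Qbar.lift (qbar k A ∘ₗ S.act h) (by
    rw [LinearMap.comp_apply, S.act_one, map_smul, qbar_one, smul_zero])

lemma actQbar_qbar (h : H) (a : A) : S.actQbar h (qbar k A a) = qbar k A (S.act h a) := rfl

variable (S) in
/-- The operator `ā ⊗ n ↦ ∑ ā^{h⁽²⁾} ⊗ γ(h⁽³⁾) n γ⁻¹(h⁽¹⁾)` on `Ā ⊗ N`, which induces the action of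
`h` on `H_1(A, N)`. -/
def conjOne (h : H) : Qbar k A ⊗[k] N →ₗ[k] Qbar k A ⊗[k] N :=
  ∑ i ∈ (ℛ k h).index, ∑ j ∈ (ℛ k ((ℛ k h).right i)).index,
    TensorProduct.map (S.actQbar ((ℛ k ((ℛ k h).right i)).left j))
      (Bi.l (S.γ ((ℛ k ((ℛ k h).right i)).right j)) ∘ₗ Bi.r (S.γInv ((ℛ k h).left i)))

lemma conjOne_tmul (h : H) (a : A) (n : N) :
    S.conjOne Bi h (qbar k A a ⊗ₜ n) =
      ∑ i ∈ (ℛ k h).index, ∑ j ∈ (ℛ k ((ℛ k h).right i)).index,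
        qbar k A (S.act ((ℛ k ((ℛ k h).right i)).left j) a) ⊗ₜ
          Bi.l (S.γ ((ℛ k ((ℛ k h).right i)).right j)) (Bi.r (S.γInv ((ℛ k h).left i)) n) := by
  simp only [conjOne, LinearMap.sum_apply, map_tmul, actQbar_qbar, LinearMap.comp_apply]

lemma commutator_conjOne (hγ : IsUnit S.γ) (h : H) (t : Qbar k A ⊗[k] N) :
    (Bi.restrict S.aEHom).commutator (S.conjOne Bi h t) =
      (S.conj Bi h).unop ((Bi.restrict S.aEHom).commutator t) := by
  refine LinearMap.congr_fun (f := (Bi.restrict S.aEHom).commutator ∘ₗ S.conjOne Bi h)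
    (g := (S.conj Bi h).unop ∘ₗ (Bi.restrict S.aEHom).commutator)
    (Qbar.tensor_hom_ext fun a n ↦ ?_) t
  have hcomm (b : A) (m : N) : (Bi.restrict S.aEHom).commutator (qbar k A b ⊗ₜ m) =
      Bi.r (S.aE b) m - Bi.l (S.aE b) m := Bimod.commutator_tmul ..
  simp only [LinearMap.comp_apply, conjOne_tmul, map_sum, hcomm, map_sub, conj_apply,
    Finset.sum_sub_distrib, ← sum_γ_aE_γInv Bi hγ Bi.l h a n, ← Bi.l_r_apply, l_γ_l_aE]

variable (S) in
/-- The map from `Ā ⊗ N` to the coinvariants of `ΩN = Ē ⊗ N`. It carries `H_1(A, N)` onto the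
kernel of `(ΩN)_A → (E ⊗ N)_A`. -/
def toCoinvOmega : Qbar k A ⊗[k] N →ₗ[k] S.Coinv Bi.omega :=
  S.toCoinv Bi.omega ∘ₗ (Qbar.map S.aEHom).rTensor N

lemma toCoinvOmega_tmul (a : A) (n : N) :
    S.toCoinvOmega Bi (qbar k A a ⊗ₜ n) = S.toCoinv Bi.omega (qbar k E (S.aE a) ⊗ₜ n) := rfl

lemma toCoinv_omega_γ_mul_aE (g : H) (a : A) (n : N) :
    S.toCoinv Bi.omega (qbar k E (S.γ g * S.aE a) ⊗ₜ n) =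
      ∑ j ∈ (ℛ k g).index,
        (S.toCoinv Bi.omega
            (qbar k E (S.γ ((ℛ k g).right j)) ⊗ₜ Bi.r (S.aE (S.act ((ℛ k g).left j) a)) n) +
          S.toCoinvOmega Bi
            (qbar k A (S.act ((ℛ k g).left j) a) ⊗ₜ Bi.l (S.γ ((ℛ k g).right j)) n)) := by
  rw [γ_mul_aE, map_sum, sum_tmul, map_sum]
  refine Finset.sum_congr rfl fun j _ ↦ ?_
  rw [← Bi.omega_r, ← toCoinv_l_aE, Bi.omega_l, map_sub, toCoinvOmega_tmul, sub_add_cancel]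

lemma coinvAct_toCoinvOmega (hγ : IsUnit S.γ) (h : H) (t : Qbar k A ⊗[k] N) :
    coinvAct Bi.omega hγ h (S.toCoinvOmega Bi t) = S.toCoinvOmega Bi (S.conjOne Bi h t) +
      ∑ i ∈ (ℛ k h).index, S.toCoinv Bi.omega (qbar k E (S.γ ((ℛ k h).right i)) ⊗ₜ
        Bi.r (S.γInv ((ℛ k h).left i)) ((Bi.restrict S.aEHom).commutator t)) := by
  let K : E →ₗ[k] N →ₗ[k] S.Coinv Bi.omega :=
    (TensorProduct.mk k _ N ∘ₗ qbar k E).compr₂ (S.toCoinv Bi.omega)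
  refine LinearMap.congr_fun (f := coinvAct Bi.omega hγ h ∘ₗ S.toCoinvOmega Bi)
    (g := S.toCoinvOmega Bi ∘ₗ S.conjOne Bi h + ∑ i ∈ (ℛ k h).index, K (S.γ ((ℛ k h).right i)) ∘ₗ
      Bi.r (S.γInv ((ℛ k h).left i)) ∘ₗ (Bi.restrict S.aEHom).commutator)
    (Qbar.tensor_hom_ext fun a n ↦ ?_) t |>.trans (by simp [K])
  have hcomm : (Bi.restrict S.aEHom).commutator (qbar k A a ⊗ₜ n) =
      Bi.r (S.aE a) n - Bi.l (S.aE a) n := Bimod.commutator_tmul ..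
  have hK := sum_γ_aE_γInv Bi hγ K h a n
  simp only [LinearMap.comp_apply, LinearMap.add_apply, LinearMap.sum_apply, conjOne_tmul,
    map_sum, hcomm, map_sub, Finset.sum_sub_distrib, ← hK]
  rw [toCoinvOmega_tmul, coinvAct_toCoinv, conj_apply, map_sum]
  simp only [Bi.omega_r, Bi.omega_l, map_sub, toCoinv_omega_γ_mul_aE, Finset.sum_sub_distrib,
    Finset.sum_add_distrib, K, LinearMap.compr₂_apply, LinearMap.comp_apply, mk_apply,
    Bi.l_r_apply]
  abel

variable (S) in
/-- The embedding of `H_1(A, N)` in the coinvariants of `ΩN`, up to sign the connecting map of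
`0 → ΩN → E ⊗ N → N → 0`. -/
def coinvConnecting : (Bi.restrict S.aEHom).HH 1 →ₗ[k] S.Coinv Bi.omega :=
  -((S.coinvEquiv Bi.omega).toLinearMap ∘ₗ (Bi.isShortExact_omega_restrict S.aEHom).connecting 0)

lemma coinvConnecting_toHHOne (t : LinearMap.ker (Bi.restrict S.aEHom).commutator) :
    S.coinvConnecting Bi ((Bi.restrict S.aEHom).toHHOne t) = S.toCoinvOmega Bi t := by
  rw [coinvConnecting, LinearMap.neg_apply, LinearMap.comp_apply,
    Bimod.connecting_omega_restrict_toHHOne, map_neg, neg_neg]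
  exact coinvEquiv_toHHZero Bi.omega _

lemma coinvConnecting_injective : Function.Injective (S.coinvConnecting Bi) :=
  neg_injective.comp <| (S.coinvEquiv Bi.omega).injective.comp <|
    (Bi.isShortExact_omega_restrict S.aEHom).connecting_injective
      ((isSplitting_free_restrict Bi).subsingleton_HH 0)

lemma exact_coinvConnecting_coinvMap :
    Function.Exact (S.coinvConnecting Bi) (S.coinvMap Bi.isHom_omegaIncl) := by
  refine (S.coinvEquiv Bi.omega).surjective.forall.mpr fun y ↦ ?_
  rw [← coinvEquiv_map, LinearEquiv.map_eq_zero_iff]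
  refine ((Bi.isShortExact_omega_restrict
    S.aEHom).isShortExact_hochschildD.exact_connecting_map 0 y).trans ?_
  refine (Equiv.neg _).surjective.exists.trans (exists_congr fun x ↦ ?_)
  rw [← (S.coinvEquiv Bi.omega).injective.eq_iff, Equiv.neg_apply, map_neg, map_neg]
  rfl

variable {Bi} {finv : H →ₗ[k] H →ₗ[k] A} (hfinv : IsConvInverse S.f finv)
include hfinv

lemma eq_coinvAct {ρ : H →ₗ[k] S.Coinv Bi →ₗ[k] S.Coinv Bi}
    (hρ : ∀ (h : H) (N' : ℕ) (u : Fin N' → Fin 4 → H), SRep k 3 h N' u → ∀ n : N,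
      ρ h (S.toCoinv Bi n) = ∑ i, S.toCoinv Bi
        (Bi.l (S.hE (u i 3)) (Bi.r (ginv S finv (u i 0) (u i 1) (u i 2)) n))) :
    ρ = coinvAct Bi (isUnit_γ hfinv) := by
  refine LinearMap.ext fun h ↦ LinearMap.ext <| (commSub S Bi).mkQ_surjective.forall.mpr fun n ↦ ?_
  obtain ⟨N', u, hu, -⟩ := exists_sRep k 3 h
  let K : E →ₗ[k] H ⊗[k] k →ₗ[k] S.Coinv Bi :=
    (LinearMap.lcomp k N (S.hE ∘ₗ (TensorProduct.rid k H).toLinearMap) ∘ₗ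
      Bi.l.flip ∘ₗ Bi.r.flip n).compr₂ (S.toCoinv Bi)
  have hK (x : E) (g : H) : K x (g ⊗ₜ 1) = S.toCoinv Bi (Bi.l (S.hE g) (Bi.r x n)) := by simp [K]
  rw [hρ h N' u hu n, coinvAct_toCoinv, conj_apply, map_sum]
  refine .trans (Finset.sum_congr rfl fun i _ ↦ ?_) <|
    (sum_ginv (n := 0) hfinv hu K).trans (Finset.sum_congr rfl fun i _ ↦ hK _ _)
  exact (hK _ _).symm

lemma theta_oneChain {θ : H → ∀ r, HCh k A N r →ₗ[k] HCh k A N r}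
    (hθ : IsTheta S Bi finv θ) (h : H) (t : Qbar k A ⊗[k] N) :
    θ h 1 (Bimod.oneChain k A N t) = Bimod.oneChain k A N (S.conjOne Bi h t) := by
  refine LinearMap.congr_fun (f := θ h 1 ∘ₗ (Bimod.oneChain k A N).toLinearMap)
    (g := (Bimod.oneChain k A N).toLinearMap ∘ₗ S.conjOne Bi h)
    (Qbar.tensor_hom_ext fun a n ↦ ?_) t
  obtain ⟨N', u, hu, -⟩ := exists_sRep k 4 h
  let K : E →ₗ[k] H ⊗[k] (H ⊗[k] k) →ₗ[k] HCh k A N 1 :=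
    (TensorProduct.mapBilinear (.id k) _ _ _ _ (qbar k A ∘ₗ S.act.flip a) ∘ₗ
      LinearMap.lcomp k N (S.hE ∘ₗ (TensorProduct.rid k H).toLinearMap) ∘ₗ
        Bi.l.flip ∘ₗ Bi.r.flip n).compr₂ (Bimod.oneChain k A N).toLinearMap
  have hK (x : E) (g l : H) : K x (g ⊗ₜ (l ⊗ₜ 1)) =
      Bimod.oneChain k A N (qbar k A (S.act g a) ⊗ₜ Bi.l (S.hE l) (Bi.r x n)) := by simp [K]
  simp only [LinearMap.comp_apply, LinearEquiv.coe_coe, conjOne_tmul, map_sum]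
  rw [Bimod.oneChain_tmul]
  refine (hθ h 1 n (fun _ ↦ a) N' u hu).trans ?_
  refine .trans (Finset.sum_congr rfl fun i _ ↦ ?_) <|
    (sum_ginv (n := 1) hfinv hu K).trans (Finset.sum_congr rfl fun i _ ↦ ?_)
  · exact (Bimod.oneChain_tmul _ _).symm.trans (hK _ _ _).symm
  · refine (congrArg (K _) (itComul_one _)).trans ((map_sum (K _) _ _).trans ?_)
    exact Finset.sum_congr rfl fun j _ ↦ hK _ _ _

lemma coinvConnecting_of_isTheta {θ : H → ∀ r, HCh k A N r →ₗ[k] HCh k A N r}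
    (hθ : IsTheta S Bi finv θ)
    {ρ : H →ₗ[k] (Bi.restrict S.aEHom).HH 1 →ₗ[k] (Bi.restrict S.aEHom).HH 1}
    (hρ : ∀ h x hx hθx, ρ h (Hml.ofCycle _ 1 ⟨x, hx⟩) = Hml.ofCycle _ 1 ⟨θ h 1 x, hθx⟩)
    (h : H) (x : (Bi.restrict S.aEHom).HH 1) :
    S.coinvConnecting Bi (ρ h x) =
      coinvAct Bi.omega (isUnit_γ hfinv) h (S.coinvConnecting Bi x) := by
  obtain ⟨⟨t, ht⟩, rfl⟩ := (Bi.restrict S.aEHom).toHHOne_surjective x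
  have hcomm : (Bi.restrict S.aEHom).commutator t = 0 := ht
  have ht' : (Bi.restrict S.aEHom).commutator (S.conjOne Bi h t) = 0 := by
    rw [commutator_conjOne Bi (isUnit_γ hfinv), hcomm, map_zero]
  have hρt : ρ h ((Bi.restrict S.aEHom).toHHOne ⟨t, ht⟩) =
      (Bi.restrict S.aEHom).toHHOne ⟨S.conjOne Bi h t, ht'⟩ := by
    have hmem := (Bi.restrict S.aEHom).oneChain_mem_cycles_iff.mpr ht'
    rw [← theta_oneChain hfinv hθ] at hmem
    refine (hρ h _ _ hmem).trans (congrArg (Hml.ofCycle _ 1) (Subtype.ext ?_))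
    exact theta_oneChain hfinv hθ h t
  rw [hρt, coinvConnecting_toHHOne, coinvConnecting_toHHOne, coinvAct_toCoinvOmega, hcomm]
  simp only [map_zero, tmul_zero, Finset.sum_const_zero, add_zero]

end CrossedProduct

end FirstHomology

/-! ### The long exact sequence for a quasi-free base -/

section Splicing

variable {k : Type} [CommRing k]

lemma Hml.map_map {C C' C'' : ℕ → Type} [∀ n, AddCommGroup (C n)] [∀ n, Module k (C n)]
    [∀ n, AddCommGroup (C' n)] [∀ n, Module k (C' n)] [∀ n, AddCommGroup (C'' n)]
    [∀ n, Module k (C'' n)] {d : ∀ n, C (n + 1) →ₗ[k] C n} {d' : ∀ n, C' (n + 1) →ₗ[k] C' n}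
    {d'' : ∀ n, C'' (n + 1) →ₗ[k] C'' n} {φ : ∀ n, C n →ₗ[k] C' n} {ψ : ∀ n, C' n →ₗ[k] C'' n}
    {χ : ∀ n, C n →ₗ[k] C'' n} (hφ : IsChainMap d d' φ) (hψ : IsChainMap d' d'' ψ)
    (hχ : IsChainMap d d'' χ) {n : ℕ} (hcomp : ∀ x, ψ n (φ n x) = χ n x) (x : Hml k d n) :
    map hψ n (map hφ n x) = map hχ n x := by
  obtain ⟨x, rfl⟩ := ofCycle_surjective d n x
  rw [map_ofCycle, map_ofCycle, map_ofCycle]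
  exact congrArg _ (Subtype.ext (hcomp x))

section LinearAlgebra

lemma exists_exact_of_injective {X Y Z Q I : Type} [AddCommGroup X] [Module k X] [AddCommGroup Y]
    [Module k Y] [AddCommGroup Z] [Module k Z] [AddCommGroup Q] [Module k Q] [AddCommGroup I]
    [Module k I] {κ : Z →ₗ[k] Q} {j : Q →ₗ[k] I} (hκj : Function.Exact κ j) {u : X →ₗ[k] Q}
    (hu : Function.Injective u) {v : Y →ₗ[k] I} (hv : Function.Injective v)
    (huv : ∀ q, q ∈ LinearMap.range u ↔ j q ∈ LinearMap.range v) :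
    ∃ (b : Z →ₗ[k] X) (c : X →ₗ[k] Y),
      (∀ z, u (b z) = κ z) ∧ (∀ x, v (c x) = j (u x)) ∧ Function.Exact b c := by
  have hκ z : κ z ∈ LinearMap.range u := by
    rw [huv, hκj.apply_apply_eq_zero]
    exact zero_mem _
  have hj x : (j ∘ₗ u) x ∈ LinearMap.range v := (huv _).mp ⟨x, rfl⟩
  have hb := LinearMap.codRestrictOfInjective_comp_apply κ u hu hκ
  have hc := LinearMap.codRestrictOfInjective_comp_apply (j ∘ₗ u) v hv hj
  refine ⟨_, _, hb, hc, fun x ↦ ?_⟩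
  rw [← hv.eq_iff' (map_zero v), hc]
  exact (hκj (u x)).trans (exists_congr fun z ↦ by rw [← hb, hu.eq_iff])

variable {X Y Z Q I : ℕ → Type}
  [∀ n, AddCommGroup (X n)] [∀ n, Module k (X n)] [∀ n, AddCommGroup (Y n)] [∀ n, Module k (Y n)]
  [∀ n, AddCommGroup (Z n)] [∀ n, Module k (Z n)] [∀ n, AddCommGroup (Q n)] [∀ n, Module k (Q n)]
  [∀ n, AddCommGroup (I n)] [∀ n, Module k (I n)]

/-- A long exact sequence with terms `Z`, `Q`, `I` in which each `I n` is replaced by `Y (n + 1)`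
and each `Q n` by `X (n + 1)`, up to a discrepancy in degree `0`. -/
lemma exists_splice {δ : ∀ n, I (n + 1) →ₗ[k] Z n} {κ : ∀ n, Z n →ₗ[k] Q n}
    {j : ∀ n, Q n →ₗ[k] I n} {u : ∀ n, X (n + 1) →ₗ[k] Q n} {v : ∀ n, Y (n + 1) →ₗ[k] I n}
    (e : X 0 ≃ₗ[k] Y 0) (hδκ : ∀ n, Function.Exact (δ n) (κ n))
    (hκj : ∀ n, Function.Exact (κ n) (j n)) (hjδ : ∀ n, Function.Exact (j (n + 1)) (δ n))
    (hj : Function.Surjective (j 0)) (hu : ∀ n, Function.Injective (u n))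
    (husurj : ∀ n, Function.Surjective (u (n + 1))) (hv : ∀ n, Function.Injective (v n))
    (hvsurj : ∀ n, Function.Surjective (v (n + 1)))
    (huv : ∀ n q, q ∈ LinearMap.range (u n) ↔ j n q ∈ LinearMap.range (v n)) :
    ∃ (a : ∀ n, Y (n + 2) →ₗ[k] Z n) (b : ∀ n, Z n →ₗ[k] X (n + 1)) (c : ∀ n, X n →ₗ[k] Y n),
      (∀ n, LinearMap.range (a n) = LinearMap.ker (b n)) ∧
      (∀ n, LinearMap.range (b n) = LinearMap.ker (c (n + 1))) ∧
      (∀ n, LinearMap.range (c (n + 2)) = LinearMap.ker (a n)) ∧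
      Function.Surjective (c 0) ∧ Function.Injective (c 0) ∧ Function.Surjective (c 1) := by
  choose b c hb hc hbc using fun n ↦ exists_exact_of_injective (hκj n) (hu n) (hv n) (huv n)
  refine ⟨fun n ↦ δ n ∘ₗ v (n + 1), b, fun | 0 => e.toLinearMap | n + 1 => c n, fun n ↦ ?_,
    fun n ↦ (LinearMap.exact_iff.mp (hbc n)).symm, fun n ↦ ?_, e.surjective, e.injective,
    fun y ↦ ?_⟩
  · ext z
    rw [LinearMap.mem_ker, ← (hu n).eq_iff' (map_zero _), hb]
    exact (hvsurj n).exists.symm.trans (hδκ n z).symm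
  · ext y
    refine .trans ?_ (hjδ n (v (n + 1) y)).symm
    refine .trans (exists_congr fun x ↦ ?_) (husurj n).exists.symm
    rw [← hc, (hv (n + 1)).eq_iff]
  · obtain ⟨q, hq⟩ := hj (v 0 y)
    obtain ⟨x, rfl⟩ := (huv 0 q).mpr ⟨y, hq.symm⟩
    exact ⟨x, hv 0 (by rw [hc, hq])⟩

end LinearAlgebra

namespace Bimod

variable {B N₁ N₂ N₃ N₄ : Type} [Ring B] [Algebra k B]
  [AddCommGroup N₁] [Module k N₁] [AddCommGroup N₂] [Module k N₂]
  [AddCommGroup N₃] [Module k N₃] [AddCommGroup N₄] [Module k N₄]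
  {B₁ : Bimod k B N₁} {B₂ : Bimod k B N₂} {B₃ : Bimod k B N₃} {B₄ : Bimod k B N₄}
  {φ : N₁ →ₗ[k] N₂} {ψ : N₂ →ₗ[k] N₃} {χ : N₃ →ₗ[k] N₄}

section Range

lemma IsHom.l_mem_range (h : B₁.IsHom B₂ φ) (b : B) {x : N₂} (hx : x ∈ LinearMap.range φ) :
    B₂.l b x ∈ LinearMap.range φ := by
  obtain ⟨n, rfl⟩ := hx
  exact ⟨B₁.l b n, h.map_l b n⟩

lemma IsHom.r_mem_range (h : B₁.IsHom B₂ φ) (b : B) {x : N₂} (hx : x ∈ LinearMap.range φ) :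
    B₂.r b x ∈ LinearMap.range φ := by
  obtain ⟨n, rfl⟩ := hx
  exact ⟨B₁.r b n, h.map_r b n⟩

/-- The image of a homomorphism of bimodules. -/
def IsHom.range (h : B₁.IsHom B₂ φ) : Bimod k B (LinearMap.range φ) where
  l := LinearMap.mk₂ k (fun b x ↦ ⟨B₂.l b x, h.l_mem_range b x.2⟩)
    (fun _ _ _ ↦ by ext; simp) (fun _ _ _ ↦ by ext; simp) (fun _ _ _ ↦ by ext; simp)
    (fun _ _ _ ↦ by ext; simp)
  r := LinearMap.mk₂ k (fun b x ↦ ⟨B₂.r b x, h.r_mem_range b x.2⟩)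
    (fun _ _ _ ↦ by ext; simp) (fun _ _ _ ↦ by ext; simp) (fun _ _ _ ↦ by ext; simp)
    (fun _ _ _ ↦ by ext; simp)
  l_one := by ext x; exact B₂.l_one_apply x
  r_one := by ext x; exact B₂.r_one_apply x
  l_mul a b := by ext x; exact B₂.l_mul_apply a b x
  r_mul a b := by ext x; exact B₂.r_mul_apply a b x
  lr_comm a b := by ext x; exact B₂.l_r_apply a b x

lemma IsHom.isHom_rangeRestrict (h : B₁.IsHom B₂ φ) : B₁.IsHom h.range φ.rangeRestrict where
  map_l b n := Subtype.ext (h.map_l b n)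
  map_r b n := Subtype.ext (h.map_r b n)

lemma IsHom.isHom_subtype_range (h : B₁.IsHom B₂ φ) :
    h.range.IsHom B₂ (LinearMap.range φ).subtype where
  map_l _ _ := rfl
  map_r _ _ := rfl

variable [∀ n, Module.Flat k (Tpow k (Qbar k B) n)]

lemma isShortExact_of_injective (hφ : B₁.IsHom B₂ φ) (hψ : B₂.IsHom B₃ ψ)
    (hinj : Function.Injective φ) (hexact : Function.Exact φ ψ) (hsurj : Function.Surjective ψ) :
    IsShortExact B₁ B₂ B₃ φ ψ where
  isHom_i := hφ
  isHom_p := hψ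
  injective _ := Module.Flat.rTensor_preserves_injective_linearMap _ hinj
  exact := hexact
  surjective := hsurj

lemma IsHom.isShortExact_rangeRestrict (hφ : B₁.IsHom B₂ φ) (hψ : B₂.IsHom B₃ ψ)
    (hinj : Function.Injective φ) (hexact : Function.Exact φ ψ) :
    IsShortExact B₁ B₂ hψ.range φ ψ.rangeRestrict :=
  isShortExact_of_injective hφ hψ.isHom_rangeRestrict hinj
    (fun x ↦ Subtype.ext_iff.trans (hexact x)) ψ.surjective_rangeRestrict

lemma IsHom.isShortExact_subtype_range (hψ : B₂.IsHom B₃ ψ) (hχ : B₃.IsHom B₄ χ)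
    (hexact : Function.Exact ψ χ) (hsurj : Function.Surjective χ) :
    IsShortExact hψ.range B₃ B₄ (LinearMap.range ψ).subtype χ :=
  isShortExact_of_injective hψ.isHom_subtype_range hχ Subtype.val_injective
    (fun x ↦ (hexact x).trans (by simp)) hsurj

end Range

variable [∀ n, Module.Flat k (Tpow k (Qbar k B) n)] {X Y Z : ℕ → Type}
  [∀ n, AddCommGroup (X n)] [∀ n, Module k (X n)] [∀ n, AddCommGroup (Y n)] [∀ n, Module k (Y n)]
  [∀ n, AddCommGroup (Z n)] [∀ n, Module k (Z n)]

/-- Splices the long exact sequence of `0 → N₁ → N₂ → im ψ → 0` with the one of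
`0 → im ψ → N₃ → N₄ → 0`, which reduces to dimension shifts. -/
theorem exists_longExact (hφ : B₁.IsHom B₂ φ) (hψ : B₂.IsHom B₃ ψ) (hχ : B₃.IsHom B₄ χ)
    (hinj : Function.Injective φ) (hφψ : Function.Exact φ ψ) (hψχ : Function.Exact ψ χ)
    (hsurj : Function.Surjective χ) (hacyclic : ∀ n, Subsingleton (B₃.HH (n + 1)))
    (eY : ∀ n, Y n ≃ₗ[k] B₄.HH n) (eZ : ∀ n, Z n ≃ₗ[k] B₁.HH n) (e : X 0 ≃ₗ[k] Y 0)
    (hX : ∀ n, ∃ u : X (n + 1) →ₗ[k] B₂.HH n, Function.Injective u ∧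
      LinearMap.range u = LinearMap.ker (Hml.map hψ.isChainMap n)) :
    ∃ (a : ∀ n, Y (n + 2) →ₗ[k] Z n) (b : ∀ n, Z n →ₗ[k] X (n + 1)) (c : ∀ n, X n →ₗ[k] Y n),
      (∀ n, LinearMap.range (a n) = LinearMap.ker (b n)) ∧
      (∀ n, LinearMap.range (b n) = LinearMap.ker (c (n + 1))) ∧
      (∀ n, LinearMap.range (c (n + 2)) = LinearMap.ker (a n)) ∧
      Function.Surjective (c 0) ∧ Function.Injective (c 0) ∧ Function.Surjective (c 1) := by
  choose u hu hrange using hX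
  let s := hφ.isShortExact_rangeRestrict hψ hinj hφψ
  let t := hψ.isShortExact_subtype_range hχ hψχ hsurj
  have hs := s.isShortExact_hochschildD
  have hv n : LinearMap.range (t.connecting n ∘ₗ (eY (n + 1)).toLinearMap) =
      LinearMap.ker (Hml.map t.isHom_i.isChainMap n) := by
    rw [LinearMap.range_comp_of_range_eq_top _ (eY (n + 1)).range, t.range_connecting]
  refine exists_splice e (δ := fun n ↦ (eZ n).symm.toLinearMap ∘ₗ s.connecting n)
    (κ := fun n ↦ Hml.map s.isHom_i.isChainMap n ∘ₗ (eZ n).toLinearMap)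
    (j := fun n ↦ Hml.map s.isHom_p.isChainMap n) (u := u)
    (v := fun n ↦ t.connecting n ∘ₗ (eY (n + 1)).toLinearMap)
    (fun n ↦ (LinearEquiv.conj_exact_iff_exact _ _ (eZ n).symm).mpr (hs.exact_connecting_map n))
    (fun n ↦ LinearEquiv.precomp_exact_iff_exact.mpr (hs.exact_map_map n))
    (fun n ↦ LinearEquiv.postcomp_exact_iff_exact.mpr (hs.exact_map_connecting n))
    hs.map_zero_surjective hu (fun n ↦ ?_)
    (fun n ↦ (t.connecting_injective (hacyclic n)).comp (eY (n + 1)).injective) (fun n ↦ ?_)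
    (fun n q ↦ ?_)
  · exact LinearMap.range_eq_top.mp ((hrange _).trans (LinearMap.ker_eq_top.mpr
      (LinearMap.ext fun _ ↦ Subsingleton.elim (h := hacyclic n) _ _)))
  · exact LinearMap.range_eq_top.mp ((hv _).trans (LinearMap.ker_eq_top.mpr
      (LinearMap.ext fun _ ↦ Subsingleton.elim (h := hacyclic n) _ _)))
  · rw [hrange, hv, LinearMap.mem_ker, LinearMap.mem_ker,
      Hml.map_map s.isHom_p.isChainMap t.isHom_i.isChainMap hψ.isChainMap fun x ↦ ?_]
    exact (LinearMap.rTensor_comp_apply _ _ _ x).symm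

end Bimod

end Splicing

section QuasiFree

open Coalgebra

variable {k A H E : Type} [CommRing k] [Ring A] [Algebra k A] [Ring H] [HopfAlgebra k H]
  [Ring E] [Algebra k E] {N : Type} [AddCommGroup N] [Module k N]

instance flat_qbar [Module.Flat k H] : Module.Flat k (Qbar k H) := by
  refine Module.Flat.of_retract
    (Qbar.lift (LinearMap.id - Algebra.linearMap k H ∘ₗ counit (R := k) (A := H)) (by simp))
    (qbar k H) (LinearMap.ext <| (unitSub k H).mkQ_surjective.forall.mpr fun h ↦ ?_)
  change qbar k H (h - algebraMap k H (counit (R := k) h)) = qbar k H h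
  rw [map_sub, Algebra.algebraMap_eq_smul_one, map_smul, qbar_one, smul_zero, sub_zero]

instance flat_tpow (V : Type) [AddCommGroup V] [Module k V] [Module.Flat k V] :
    ∀ n, Module.Flat k (Tpow k V n)
  | 0 => inferInstanceAs (Module.Flat k k)
  | n + 1 =>
    have := flat_tpow V n
    inferInstanceAs (Module.Flat k (V ⊗[k] Tpow k V n))

namespace CrossedProduct

variable {S : CrossedProduct k A H E} (Bi : Bimod k E N)

theorem isCoinvExact_of_subsingleton [Module.Flat k H]
    (h : Subsingleton ((Bi.restrict S.aEHom).HH 1)) : S.IsCoinvExact Bi := fun _ ↦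
  Module.Flat.rTensor_preserves_injective_linearMap _ <|
    (injective_iff_map_eq_zero _).mpr fun x hx ↦ by
      obtain ⟨z, rfl⟩ := (exact_coinvConnecting_coinvMap Bi x).mp hx
      rw [Subsingleton.elim z 0, map_zero]

variable {M : Type} [AddCommGroup M] [Module k M] {Bi : Bimod k E M}
  {finv : H →ₗ[k] H →ₗ[k] A} (hfinv : IsConvInverse S.f finv)

theorem exists_longExact_of_quasiFree [Module.Flat k H]
    (hA : ∀ {N : Type} [AddCommGroup N] [Module k N] (BiN : Bimod k A N) (n : ℕ),
      Subsingleton (BiN.HH (n + 2)))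
    {θ : H → ∀ r, HCh k A M r →ₗ[k] HCh k A M r} (hθ : IsTheta S Bi finv θ)
    {ρ₁ : H →ₗ[k] (Bi.restrict S.aEHom).HH 1 →ₗ[k] (Bi.restrict S.aEHom).HH 1}
    (hρ₁ : ∀ h x hx hθx, ρ₁ h (Hml.ofCycle _ 1 ⟨x, hx⟩) = Hml.ofCycle _ 1 ⟨θ h 1 x, hθx⟩)
    {dbar₀ : ∀ s, BarCh k (H := H) (S.Coinv Bi) (s + 1) →ₗ[k] BarCh k (H := H) (S.Coinv Bi) s}
    (hdbar₀ : IsBarD k (coinvAct Bi (isUnit_γ hfinv)) dbar₀)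
    {dbar₁ : ∀ s, BarCh k (H := H) ((Bi.restrict S.aEHom).HH 1) (s + 1) →ₗ[k]
      BarCh k (H := H) ((Bi.restrict S.aEHom).HH 1) s} (hdbar₁ : IsBarD k ρ₁ dbar₁) :
    ∃ (a : ∀ n, Hml k dbar₀ (n + 2) →ₗ[k] Hml k dbar₁ n)
      (b : ∀ n, Hml k dbar₁ n →ₗ[k] Bi.HH (n + 1)) (c : ∀ n, Bi.HH n →ₗ[k] Hml k dbar₀ n),
      (∀ n, LinearMap.range (a n) = LinearMap.ker (b n)) ∧
      (∀ n, LinearMap.range (b n) = LinearMap.ker (c (n + 1))) ∧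
      (∀ n, LinearMap.range (c (n + 2)) = LinearMap.ker (a n)) ∧
      Function.Surjective (c 0) ∧ Function.Injective (c 0) ∧ Function.Surjective (c 1) := by
  have hγ := isUnit_γ hfinv
  have hact := coinvConnecting_of_isTheta hfinv hθ hρ₁
  have hρ : IsLeftModule ρ₁ :=
    (isLeftModule_coinvAct Bi.omega hγ).of_injective (coinvConnecting_injective Bi) hact
  have hconnecting : hρ.bimod.IsHom (coinvBimod Bi.omega hγ) (S.coinvConnecting Bi) :=
    ⟨hact, fun h x ↦ map_smul _ _ _⟩
  have hΩ {N : Type} [AddCommGroup N] [Module k N] (BiN : Bimod k E N) :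
      S.IsCoinvExact BiN.omega :=
    isCoinvExact_of_subsingleton _ (subsingleton_HH_omega_restrict _ (hA _ 0))
  exact Bimod.exists_longExact hconnecting (isHom_coinvMap hγ Bi.isHom_omegaIncl)
    (isHom_coinvMap hγ Bi.isHom_action) (coinvConnecting_injective Bi)
    (exact_coinvConnecting_coinvMap Bi)
    (exact_coinvMap _ _ Bi.exact_omegaIncl_action Bi.action_surjective)
    (coinvMap_surjective _ Bi.action_surjective) (isSplitting_coinvBimod_free Bi hγ).subsingleton_HH
    ((isLeftModule_coinvAct Bi hγ).barEquiv hdbar₀) (hρ.barEquiv hdbar₁)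
    ((hhZeroEquiv Bi hγ).trans ((isLeftModule_coinvAct Bi hγ).barEquiv hdbar₀ 0).symm)
    fun n ↦ exists_injective_range_eq_ker Bi hγ (nonempty_equiv_HH_coinvBimod hγ hΩ n (hΩ Bi))

end CrossedProduct

end QuasiFree

section Statement11

variable {k A H E M : Type} [CommRing k] [Ring A] [Algebra k A] [Ring H] [HopfAlgebra k H]
  [Ring E] [Algebra k E] [AddCommGroup M] [Module k M]


/-- **Hochschild homology of a crossed product: separable or quasi-free base.**
Let `E = A #_f H` be a crossed product with convolution invertible cocycle `f` and `M` an
`E`-bimodule.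

(a) If `A` is separable over `k`, then `H_n(E, M) ≅ H_n(H, M/[A,M])` for all `n`, where
`M/[A,M]` is a left `H`-module via `h · m̄ = (1 # h⁽²⁾) m (1 # h⁽¹⁾)⁻¹`.

(b) If `H` is flat over `k` and `A` is quasi-free (`H_n(A, N) = 0` for all `n ≥ 2` and
every `A`-bimodule `N`), then there is a long exact sequence
`⋯ → H_{n+1}(H, H_0(A,M)) → H_{n-1}(H, H_1(A,M)) → H_n(E, M) → H_n(H, H_0(A,M)) →
H_{n-2}(H, H_1(A,M)) → H_{n-1}(E, M) → ⋯`,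
where `H_r(A, M)` carries the left `H`-module structure induced by
`θ^h(m ⊗ 𝐚) = (1 # h⁽³⁾) m (1 # h⁽¹⁾)⁻¹ ⊗ 𝐚^{h⁽²⁾}`. -/
theorem separable_and_quasifree_homology
    (S : CrossedProduct k A H E) (Bi : Bimod k E M)
    (finv : H →ₗ[k] H →ₗ[k] A) (hfinv : IsConvInverse S.f finv)
    -- the normalized Hochschild complex of `E` with coefficients in `M`
    (bdE : ∀ n : ℕ, HCh k E M (n + 1) →ₗ[k] HCh k E M n)
    (hbdE : IsHochschildD k Bi.l Bi.r bdE)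
    -- the left `H`-module `H_0(A,M) = M/[A,M]`, `h · m̄ = (1 # h⁽²⁾) m (1 # h⁽¹⁾)⁻¹`
    (ρ₀ : H →ₗ[k] (M ⧸ commSub S Bi) →ₗ[k] (M ⧸ commSub S Bi))
    (hρ₀ : ∀ (h : H) (N : ℕ) (u : Fin N → Fin 4 → H), SRep k 3 h N u → ∀ m : M,
      ρ₀ h (Submodule.Quotient.mk m) =
        ∑ i, Submodule.Quotient.mk
          (Bi.l (S.hE (u i 3)) (Bi.r (ginv S finv (u i 0) (u i 1) (u i 2)) m)))
    -- the bar complex computing `H_*(H, M/[A,M])`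
    (dbar₀ : ∀ s : ℕ, BarCh k (H := H) (M ⧸ commSub S Bi) (s + 1) →ₗ[k]
      BarCh k (H := H) (M ⧸ commSub S Bi) s)
    (hdbar₀ : IsBarD k ρ₀ dbar₀) :
    -- (a) if `A` is separable then `H_n(E,M) ≅ H_n(H, M/[A,M])`
    (IsSeparableAlg k A →
      ∀ n : ℕ, Nonempty (Hml k bdE n ≃ₗ[k] Hml k dbar₀ n)) ∧
    -- (b) if `H` is flat and `A` is quasi-free, there is a long exact sequence
    (Module.Flat k H →
      (∀ (N : Type) (_ : AddCommGroup N) (_ : Module k N) (BiN : Bimod k A N)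
        (bdN : ∀ n : ℕ, HCh k A N (n + 1) →ₗ[k] HCh k A N n),
        IsHochschildD k BiN.l BiN.r bdN →
        ∀ (n : ℕ) (x : HCh k A N (n + 2)), bdN (n + 1) x = 0 →
          x ∈ LinearMap.range (bdN (n + 2))) →
      ∀ (bdA : ∀ n : ℕ, HCh k A M (n + 1) →ₗ[k] HCh k A M n),
        IsHochschildD k (Bi.l ∘ₗ S.aE) (Bi.r ∘ₗ S.aE) bdA →
      ∀ (θ : H → ∀ r : ℕ, HCh k A M r →ₗ[k] HCh k A M r), IsTheta S Bi finv θ →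
      ∀ (ρ₁ : H →ₗ[k] Hml k bdA 1 →ₗ[k] Hml k bdA 1),
        (∀ (h : H) (x : HCh k A M 1) (hx : x ∈ LinearMap.ker (bdA 0))
          (hθx : θ h 1 x ∈ LinearMap.ker (bdA 0)),
          ρ₁ h (Submodule.Quotient.mk ⟨x, hx⟩) =
            Submodule.Quotient.mk ⟨θ h 1 x, hθx⟩) →
      ∀ (dbar₁ : ∀ s : ℕ, BarCh k (H := H) (Hml k bdA 1) (s + 1) →ₗ[k]
          BarCh k (H := H) (Hml k bdA 1) s), IsBarD k ρ₁ dbar₁ →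
      ∃ (a : ∀ n : ℕ, Hml k dbar₀ (n + 2) →ₗ[k] Hml k dbar₁ n)
        (b : ∀ n : ℕ, Hml k dbar₁ n →ₗ[k] Hml k bdE (n + 1))
        (c : ∀ n : ℕ, Hml k bdE n →ₗ[k] Hml k dbar₀ n),
        (∀ n : ℕ, LinearMap.range (a n) = LinearMap.ker (b n)) ∧
        (∀ n : ℕ, LinearMap.range (b n) = LinearMap.ker (c (n + 1))) ∧
        (∀ n : ℕ, LinearMap.range (c (n + 2)) = LinearMap.ker (a n)) ∧
        Function.Surjective (c 0) ∧ Function.Injective (c 0) ∧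
        Function.Surjective (c 1)) := by
  have hγ := CrossedProduct.isUnit_γ hfinv
  obtain rfl := Bi.eq_hochschildD hbdE
  obtain rfl := CrossedProduct.eq_coinvAct hfinv hρ₀
  refine ⟨fun hA n ↦ ?_, fun _ hA bdA hbdA θ hθ ρ₁ hρ₁ dbar₁ hdbar₁ ↦ ?_⟩
  · have hexact {N : Type} [AddCommGroup N] [Module k N] (BiN : Bimod k E N) :
        S.IsCoinvExact BiN :=
      CrossedProduct.isCoinvExact_of_isSeparableAlg BiN hA
    obtain ⟨e⟩ := CrossedProduct.nonempty_equiv_HH_coinvBimod hγ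
      (fun BiN ↦ hexact BiN.omega) n (hexact Bi)
    exact ⟨e.trans ((CrossedProduct.isLeftModule_coinvAct Bi hγ).barEquiv hdbar₀ n).symm⟩
  · obtain rfl := (Bi.restrict S.aEHom).eq_hochschildD hbdA
    have hsub {N : Type} [AddCommGroup N] [Module k N] (BiN : Bimod k A N) (n : ℕ) :
        Subsingleton (BiN.HH (n + 2)) :=
      Hml.subsingleton_of_ker_le_range fun x hx ↦
        hA N _ _ BiN BiN.hochschildD BiN.isHochschildD n x hx
    exact CrossedProduct.exists_longExact_of_quasiFree hfinv hsub hθ hρ₁ hdbar₀ hdbar₁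

end Statement11

end HopfCrossed
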